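/- Let (ρ, u) be a very weak solution of the stationary barotropic Navier–Stokes system on ℝ³ with pressure p and potential G = 0, where p : [0,∞) → ℝ is continuous, p(0) = 0, p(s) ≥ 0 for all s ≥ 0, and p is continuously differentiable on (0,∞). Assume ρ ∈ L¹(ℝ³) ∩ L^∞(ℝ³) and u ∈ L^∞(ℝ³;ℝ³). Then there exists a constant vector u_∞ ∈ ℝ³ such that u = u_∞ almost everywhere; moreover, either u_∞ = 0 or ρ = 0 almost everywhere. -/

import Mathlib

noncomputable section

open MeasureTheory Metric Filter Topology Set

/-- Three-dimensional Euclidean space. -/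
abbrev E3 : Type := EuclideanSpace ℝ (Fin 3)

/-- Partial derivative of a scalar function in the `i`-th coordinate direction. -/
def pd (f : E3 → ℝ) (i : Fin 3) : E3 → ℝ :=
  fun x => fderiv ℝ f x (EuclideanSpace.single i 1)

/-- Classical gradient matrix of a vector field: `(tgrad φ x) i j = ∂_j φ_i (x)`. -/
def tgrad (φ : E3 → Fin 3 → ℝ) (x : E3) : Fin 3 → Fin 3 → ℝ :=
  fun i j => pd (fun y => φ y i) j x

/-- Smooth compactly supported scalar test function with support in `Ω`. -/
def IsTest (Ω : Set E3) (φ : E3 → ℝ) : Prop :=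
  ContDiff ℝ ((⊤ : ℕ∞) : WithTop ℕ∞) φ ∧ HasCompactSupport φ ∧ tsupport φ ⊆ Ω

/-- `C^n` compactly supported vector-valued test function with support in `Ω`. -/
def IsTestVec (n : WithTop ℕ∞) (Ω : Set E3) (φ : E3 → Fin 3 → ℝ) : Prop :=
  ContDiff ℝ n φ ∧ HasCompactSupport φ ∧ tsupport φ ⊆ Ω

/-- The Newtonian viscous stress tensor
`S(M) = μ (M + Mᵗ - (2/3) (tr M) I) + η (tr M) I`. -/
def Smat (μ η : ℝ) (M : Fin 3 → Fin 3 → ℝ) : Fin 3 → Fin 3 → ℝ :=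
  fun i j =>
    μ * (M i j + M j i - (2 / 3) * (∑ k, M k k) * (if i = j then (1 : ℝ) else 0))
      + η * (∑ k, M k k) * (if i = j then (1 : ℝ) else 0)

/-- `dG` is the weak gradient of the scalar function `G` on `Ω`. -/
def HasWeakGradOn (Ω : Set E3) (G : E3 → ℝ) (dG : E3 → Fin 3 → ℝ) : Prop :=
  ∀ φ : E3 → ℝ, IsTest Ω φ → ∀ i : Fin 3,
    ∫ x in Ω, G x * pd φ i x = - ∫ x in Ω, dG x i * φ x

/-- `du` is the weak gradient (Jacobian) of the vector field `u` on `Ω`. -/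
def HasWeakGradVecOn (Ω : Set E3) (u : E3 → Fin 3 → ℝ) (du : E3 → Fin 3 → Fin 3 → ℝ) : Prop :=
  ∀ φ : E3 → ℝ, IsTest Ω φ → ∀ i j : Fin 3,
    ∫ x in Ω, u x i * pd φ j x = - ∫ x in Ω, du x i j * φ x

/-- `u ∈ D₀^{1,2}(Ω; ℝ³)` with weak gradient `du`: `u` is locally integrable on `Ω`, its weak
gradient belongs to `L²(Ω)`, and `u` can be approximated by smooth compactly supported fields
`uₙ` with `∇uₙ → ∇u` in `L²(Ω)` and `uₙ → u` in `L⁶(Ω)`. -/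
def MemD012 (Ω : Set E3) (u : E3 → Fin 3 → ℝ) (du : E3 → Fin 3 → Fin 3 → ℝ) : Prop :=
  LocallyIntegrableOn u Ω volume ∧
  HasWeakGradVecOn Ω u du ∧
  MemLp du 2 (volume.restrict Ω) ∧
  ∃ un : ℕ → E3 → Fin 3 → ℝ,
    (∀ n, IsTestVec ((⊤ : ℕ∞) : WithTop ℕ∞) Ω (un n)) ∧
    Tendsto (fun n => eLpNorm (fun x => tgrad (un n) x - du x) 2 (volume.restrict Ω))
      atTop (𝓝 0) ∧
    Tendsto (fun n => eLpNorm (fun x => un n x - u x) 6 (volume.restrict Ω)) atTop (𝓝 0)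

/-- `G ∈ D₀^{1,q}(Ω)` with weak gradient `dG`. -/
def MemD01q (Ω : Set E3) (G : E3 → ℝ) (dG : E3 → Fin 3 → ℝ) (q : ℝ) : Prop :=
  HasWeakGradOn Ω G dG ∧
  MemLp dG (ENNReal.ofReal q) (volume.restrict Ω) ∧
  ∃ Gn : ℕ → E3 → ℝ,
    (∀ n, IsTest Ω (Gn n)) ∧
    Tendsto (fun n =>
        eLpNorm (fun x => (fun i => pd (Gn n) i x) - dG x) (ENNReal.ofReal q)
          (volume.restrict Ω)) atTop (𝓝 0) ∧
    ∀ K : Set E3, IsCompact K → K ⊆ Ω →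
      Tendsto (fun n => ∫ x in K, |Gn n x - G x|) atTop (𝓝 0)

/-- `G ∈ W^{1,∞}(Ω)` with weak gradient `dG`: both `G` and `∇G` are essentially bounded. -/
def MemW1inf (Ω : Set E3) (G : E3 → ℝ) (dG : E3 → Fin 3 → ℝ) : Prop :=
  HasWeakGradOn Ω G dG ∧
  MemLp G ⊤ (volume.restrict Ω) ∧ MemLp dG ⊤ (volume.restrict Ω)

/-- Weak solution `(ρ, u)` (with weak gradient `du` of `u` and weak gradient `dG` of `G`) of the
stationary barotropic Navier–Stokes system
`div(ρu) = 0`, `div(ρ u⊗u) + ∇p(ρ) − div S(∇u) = ρ∇G` on `Ω` with no-slip boundary condition. -/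
structure WeakSolution (Ω : Set E3) (μ η : ℝ) (p : ℝ → ℝ)
    (G : E3 → ℝ) (dG : E3 → Fin 3 → ℝ)
    (ρ : E3 → ℝ) (u : E3 → Fin 3 → ℝ) (du : E3 → Fin 3 → Fin 3 → ℝ) : Prop where
  aemeas_ρ : AEMeasurable ρ volume
  aemeas_u : AEMeasurable u volume
  weakGrad_G : HasWeakGradOn Ω G dG
  ρ_nonneg : ∀ᵐ x ∂(volume.restrict Ω), 0 ≤ ρ x
  ρu_locInt : LocallyIntegrableOn (fun x => fun i => ρ x * u x i) (closure Ω) volume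
  mass : ∀ φ : E3 → ℝ, ContDiff ℝ ((⊤ : ℕ∞) : WithTop ℕ∞) φ → HasCompactSupport φ →
    ∫ x in Ω, ρ x * (∑ i, u x i * pd φ i x) = 0
  ρ_locInt : LocallyIntegrableOn ρ Ω volume
  ρu2_locInt : LocallyIntegrableOn (fun x => ρ x * (∑ i, (u x i) ^ 2)) Ω volume
  pρ_locInt : LocallyIntegrableOn (fun x => p (ρ x)) Ω volume
  ρdG_locInt : LocallyIntegrableOn (fun x => fun i => ρ x * dG x i) Ω volume
  u_D012 : MemD012 Ω u du
  momentum : ∀ φ : E3 → Fin 3 → ℝ, IsTestVec 1 Ω φ →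
    ∫ x in Ω, ((∑ i, ∑ j, ρ x * u x i * u x j * tgrad φ x i j)
        + p (ρ x) * (∑ i, tgrad φ x i i))
      = (∫ x in Ω, ∑ i, ∑ j, Smat μ η (du x) i j * tgrad φ x i j)
        - ∫ x in Ω, ∑ i, ρ x * dG x i * φ x i

/-- Componentwise Laplacian of a vector field: `lap φ i x = Δφ_i(x)`. -/
def lap (φ : E3 → Fin 3 → ℝ) (i : Fin 3) : E3 → ℝ :=
  fun x => ∑ j, pd (pd (fun y => φ y i) j) j x

/-- `i`-th component of the gradient of the divergence: `∂_i (div φ)(x)`. -/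
def gradDivg (φ : E3 → Fin 3 → ℝ) (i : Fin 3) : E3 → ℝ :=
  pd (fun y => ∑ j, pd (fun z => φ z j) j y) i

/-- Euclidean norm of a vector in `ℝ³` (represented as `Fin 3 → ℝ`). -/
def vnorm (v : Fin 3 → ℝ) : ℝ := Real.sqrt (∑ i, (v i) ^ 2)

/-- Very weak solution `(ρ, u)` of the stationary barotropic Navier–Stokes system
`div(ρu) = 0`, `div(ρ u⊗u) + ∇p(ρ) − div S(∇u) = ρ∇G` on `ℝ³`, where the viscous term is
tested using `div S(∇φ) = μΔφ + (μ/3 + η)∇(div φ)` for `C²` test functions `φ`. -/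
structure VeryWeakSolution (μ η : ℝ) (p : ℝ → ℝ) (G : E3 → ℝ) (dG : E3 → Fin 3 → ℝ)
    (ρ : E3 → ℝ) (u : E3 → Fin 3 → ℝ) : Prop where
  aemeas_ρ : AEMeasurable ρ volume
  aemeas_u : AEMeasurable u volume
  weakGrad_G : HasWeakGradOn univ G dG
  ρ_nonneg : ∀ᵐ x, 0 ≤ ρ x
  ρu_locInt : LocallyIntegrable (fun x => fun i => ρ x * u x i) volume
  mass : ∀ φ : E3 → ℝ, ContDiff ℝ ((⊤ : ℕ∞) : WithTop ℕ∞) φ → HasCompactSupport φ →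
    ∫ x, ρ x * (∑ i, u x i * pd φ i x) = 0
  ρ_locInt : LocallyIntegrable ρ volume
  ρu2_locInt : LocallyIntegrable (fun x => ρ x * (∑ i, (u x i) ^ 2)) volume
  pρ_locInt : LocallyIntegrable (fun x => p (ρ x)) volume
  ρdG_locInt : LocallyIntegrable (fun x => fun i => ρ x * dG x i) volume
  u_locInt : LocallyIntegrable u volume
  momentum : ∀ φ : E3 → Fin 3 → ℝ, ContDiff ℝ 2 φ → HasCompactSupport φ →
    ∫ x, ((∑ i, ∑ j, ρ x * u x i * u x j * tgrad φ x i j)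
        + p (ρ x) * (∑ i, tgrad φ x i i))
      = - (∫ x, ∑ i, (μ * lap φ i x + (μ / 3 + η) * gradDivg φ i x) * u x i)
        - ∫ x, ∑ i, ρ x * dG x i * φ x i

/-!
Write `λ = μ / 3 + η`. A distribution of the form `[f] + ∑ᵢ ∂ᵢ[vᵢ]`, with `f` vanishing in mean and
`vᵢ` bounded, is zero as soon as it is harmonic: this is the mean value property. Taking the
divergence and the curl of the momentum equation, and comparing with the Riesz transforms of
`ρ u ⊗ u ∈ L²`, one finds that the effective viscous flux `F = (μ + λ) div u - p(ρ)` and `curl u`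
are square integrable. Hence `∇u` is locally square integrable and the continuity equation can be
renormalized: `∫ ρⁿ⁺² div u = 0` for all `n`, that is, `∫ ρⁿ⁺² (F + p(ρ)) = 0`. By the Weierstrass
theorem the powers may be replaced by approximations of `p(ρ)`, which gives `p(ρ) ∈ L²` and
`∫ p(ρ) div u = 0`. Therefore `∇u ∈ L²`, and the energy identity reduces to
`μ ‖∇u‖² + λ ‖div u‖² = 0`, because neither the pressure nor the convective term contributes to it.
So `u` is a constant `c`, and the density, which is integrable and satisfies `∂_c ρ = 0`, vanishes
unless `c = 0`.
-/

open scoped ContDiff Convolution Distributions ENNReal InnerProductSpace Laplacian LineDeriv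
open LineDeriv TopologicalSpace

section Distributions

variable {ι : Type*} [Fintype ι]

local notation "𝔼" => EuclideanSpace ℝ ι
local notation "𝐞" => EuclideanSpace.basisFun ι ℝ
local notation "𝒯" => TestFunction (⊤ : Opens (EuclideanSpace ℝ ι)) ℝ ⊤
local notation "𝒟" => Distribution (⊤ : Opens (EuclideanSpace ℝ ι)) ℝ ⊤
local notation "𝓛" => Lp ℝ 2 (volume : Measure (EuclideanSpace ℝ ι))

/-! ### Functions as distributions -/

lemma lineDerivOp_testFunction_apply (χ : 𝒯) (v x : 𝔼) : (∂_{v} χ) x = fderiv ℝ χ x v :=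
  TestFunction.fderivCLM_apply_of_le (𝕜 := ℝ) χ le_top ▸ rfl

lemma lineDerivOp_testFunction_comm (χ : 𝒯) (v w : 𝔼) : ∂_{v} (∂_{w} χ) = ∂_{w} (∂_{v} χ) := by
  have second_deriv : ∀ v w x : 𝔼, (∂_{v} (∂_{w} χ)) x = fderiv ℝ (fderiv ℝ χ) x v w := by
    intro v w x
    have hdiff : DifferentiableAt ℝ (fderiv ℝ χ) x :=
      (χ.contDiff.fderiv_right (m := 1) (by norm_cast)).differentiable (by simp) x
    rw [lineDerivOp_testFunction_apply, funext (lineDerivOp_testFunction_apply χ w),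
      fderiv_clm_apply hdiff (differentiableAt_const w)]
    simp
  ext x
  have hsymm : IsSymmSndFDerivAt ℝ χ x := by
    refine χ.contDiff.contDiffAt.isSymmSndFDerivAt ?_
    rw [minSmoothness_of_isRCLikeNormedField]
    norm_cast
  rw [second_deriv, second_deriv, hsymm.eq]

lemma lineDerivOp_distribution_comm (T : 𝒟) (v w : 𝔼) : ∂_{v} (∂_{w} T) = ∂_{w} (∂_{v} T) := by
  ext χ
  simp [lineDerivOp_testFunction_comm χ v w]

lemma lineDerivOp_distribution_sub (S T : 𝒟) (v : 𝔼) : ∂_{v} (S - T) = ∂_{v} S - ∂_{v} T := by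
  rw [eq_sub_iff_add_eq, ← lineDerivOp_add, sub_add_cancel]

/-- The distribution `χ ↦ ∫ f χ` defined by a locally integrable function; it is `0` when `f` is not
locally integrable. -/
def toDistribution (f : 𝔼 → ℝ) : 𝒟 :=
  TestFunction.integralAgainstBilinCLM (ContinuousLinearMap.mul ℝ ℝ) volume f

lemma integrable_mul_testFunction {f : 𝔼 → ℝ} (hf : LocallyIntegrable f) (χ : 𝒯) :
    Integrable fun x ↦ f x * χ x := by
  simpa [mul_comm] using χ.integrable_bilin (ContinuousLinearMap.mul ℝ ℝ) (hf.locallyIntegrableOn _)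

lemma integrable_testFunction (χ : 𝒯) : Integrable χ :=
  χ.continuous.integrable_of_hasCompactSupport χ.hasCompactSupport

lemma memLp_testFunction (χ : 𝒯) (p : ℝ≥0∞) : MemLp χ p :=
  χ.continuous.memLp_of_hasCompactSupport χ.hasCompactSupport

lemma toDistribution_apply {f : 𝔼 → ℝ} (hf : LocallyIntegrable f) (χ : 𝒯) :
    toDistribution f χ = ∫ x, f x * χ x := by
  calc toDistribution f χ = ∫ x, χ x * f x :=
        TestFunction.integralAgainstBilinCLM_eq_integral (hf.locallyIntegrableOn _)
    _ = ∫ x, f x * χ x := by simp only [mul_comm]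

lemma toDistribution_zero : toDistribution (0 : 𝔼 → ℝ) = 0 := by
  ext χ
  rw [toDistribution_apply (f := 0) locallyIntegrable_zero]
  simp

lemma toDistribution_add {f g : 𝔼 → ℝ} (hf : LocallyIntegrable f) (hg : LocallyIntegrable g) :
    toDistribution (f + g) = toDistribution f + toDistribution g := by
  ext χ
  simp [toDistribution_apply, hf, hg, hf.add hg, add_mul,
    integral_add (integrable_mul_testFunction hf χ) (integrable_mul_testFunction hg χ)]

lemma toDistribution_smul {f : 𝔼 → ℝ} (c : ℝ) (hf : LocallyIntegrable f) :
    toDistribution (c • f) = c • toDistribution f := by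
  ext χ
  simp [toDistribution_apply, hf, hf.smul c, mul_assoc, integral_const_mul]

lemma toDistribution_sub {f g : 𝔼 → ℝ} (hf : LocallyIntegrable f) (hg : LocallyIntegrable g) :
    toDistribution (f - g) = toDistribution f - toDistribution g := by
  rw [eq_sub_iff_add_eq, ← toDistribution_add (hf.sub hg) hg, sub_add_cancel]

lemma toDistribution_sum {κ : Type*} (t : Finset κ) {f : κ → 𝔼 → ℝ}
    (hf : ∀ k, LocallyIntegrable (f k)) :
    toDistribution (fun x ↦ ∑ k ∈ t, f k x) = ∑ k ∈ t, toDistribution (f k) := by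
  ext χ
  rw [toDistribution_apply (locallyIntegrable_finsetSum t fun k _ ↦ hf k), sum_apply]
  simp only [Finset.sum_mul, toDistribution_apply (hf _)]
  exact integral_finsetSum t fun k _ ↦ integrable_mul_testFunction (hf k) χ

lemma toDistribution_congr {f g : 𝔼 → ℝ} (hf : LocallyIntegrable f) (hfg : f =ᵐ[volume] g) :
    toDistribution f = toDistribution g := by
  ext χ
  rw [toDistribution_apply hf, toDistribution_apply (hf.congr hfg)]
  refine integral_congr_ae ?_
  filter_upwards [hfg] with x hx
  rw [hx]

lemma ae_eq_of_toDistribution_eq {f g : 𝔼 → ℝ} (hf : LocallyIntegrable f)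
    (hg : LocallyIntegrable g) (h : toDistribution f = toDistribution g) : f =ᵐ[volume] g := by
  refine ae_eq_of_integral_contDiff_smul_eq hf hg fun χ hχ hχc ↦ ?_
  have := DFunLike.congr_fun h (⟨χ, hχ, hχc, subset_univ _⟩ : 𝒯)
  rw [toDistribution_apply hf, toDistribution_apply hg] at this
  simpa [mul_comm] using this

/-! ### Mean value property -/

lemma laplacian_eq_sum_fderiv {w : 𝔼 → ℝ} (hw : ContDiff ℝ 2 w) (x : 𝔼) :
    Δ w x = ∑ i, fderiv ℝ (fun y ↦ fderiv ℝ w y (𝐞 i)) x (𝐞 i) := by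
  rw [InnerProductSpace.laplacian_eq_iteratedFDeriv_orthonormalBasis w 𝐞]
  refine Finset.sum_congr rfl fun i _ ↦ ?_
  have hdiff : DifferentiableAt ℝ (fderiv ℝ w) x :=
    (hw.fderiv_right (m := 1) (by norm_num)).differentiable one_ne_zero x
  rw [iteratedFDeriv_two_apply, fderiv_clm_apply hdiff (differentiableAt_const _)]
  simp

lemma continuous_fderiv_const_apply {f : 𝔼 → ℝ} (hf : ContDiff ℝ 1 f) (v : 𝔼) :
    Continuous fun x ↦ fderiv ℝ f x v :=
  (hf.continuous_fderiv one_ne_zero).clm_apply continuous_const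

lemma integral_mul_fderiv_eq_neg {f g : 𝔼 → ℝ} (hf : ContDiff ℝ 1 f) (hg : ContDiff ℝ 1 g)
    (hgc : HasCompactSupport g) (v : 𝔼) :
    ∫ x, f x * fderiv ℝ g x v = -∫ x, fderiv ℝ f x v * g x :=
  integral_mul_fderiv_eq_neg_fderiv_mul_of_integrable
    (((continuous_fderiv_const_apply hf v).mul hg.continuous).integrable_of_hasCompactSupport
      hgc.mul_left)
    ((hf.continuous.mul (continuous_fderiv_const_apply hg v)).integrable_of_hasCompactSupport
      (hgc.fderiv_apply ℝ v).mul_left)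
    ((hf.continuous.mul hg.continuous).integrable_of_hasCompactSupport hgc.mul_left)
    (fun x _ ↦ hf.differentiable one_ne_zero x) (fun x _ ↦ hg.differentiable one_ne_zero x)

lemma hasDerivAt_integral_comp_smul_mul {w φ : 𝔼 → ℝ} (hw : ContDiff ℝ 1 w) (hφ : Continuous φ)
    (hφc : HasCompactSupport φ) (R : ℝ) :
    HasDerivAt (fun R : ℝ ↦ ∫ y, w (R • y) * φ y) (∫ y, fderiv ℝ w (R • y) y * φ y) R := by
  have hw' : Continuous fun z : ℝ × 𝔼 ↦ fderiv ℝ w (z.1 • z.2) z.2 :=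
    (hw.continuous_fderiv one_ne_zero).comp (by fun_prop : Continuous fun z : ℝ × 𝔼 ↦ z.1 • z.2)
      |>.clm_apply continuous_snd
  obtain ⟨C, hC⟩ := ((isCompact_closedBall R 1).prod hφc).exists_bound_of_continuousOn
    hw'.continuousOn
  have integrable_of_continuous {f : 𝔼 → ℝ} (hf : Continuous f) : Integrable fun y ↦ f y * φ y :=
    (hf.mul hφ).integrable_of_hasCompactSupport hφc.mul_left
  have hw_dil (r : ℝ) : Continuous fun y : 𝔼 ↦ w (r • y) :=
    hw.continuous.comp (continuous_const_smul r)
  refine (hasDerivAt_integral_of_dominated_loc_of_deriv_le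
    (F' := fun r y ↦ fderiv ℝ w (r • y) y * φ y) (bound := fun y ↦ C * |φ y|)
    (ball_mem_nhds R one_pos)
    (.of_forall fun r ↦ ((hw_dil r).mul hφ).aestronglyMeasurable)
    (integrable_of_continuous (hw_dil R))
    ((hw'.comp (Continuous.prodMk_right R)).mul hφ).aestronglyMeasurable
    (.of_forall fun y r hr ↦ ?_)
    ((hφ.integrable_of_hasCompactSupport hφc).abs.const_mul C)
    (.of_forall fun y r _ ↦ ?_)).2
  · rw [norm_mul, Real.norm_eq_abs (φ y)]
    by_cases hy : y ∈ tsupport φ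
    · gcongr
      exact hC (r, y) ⟨ball_subset_closedBall hr, hy⟩
    · simp [image_eq_zero_of_notMem_tsupport hy]
  · have hsmul : HasDerivAt (fun r : ℝ ↦ r • y) y r := by
      simpa using (hasDerivAt_id r).smul_const y
    exact ((hw.differentiable one_ne_zero _).hasFDerivAt.comp_hasDerivAt r hsmul).mul_const _

lemma integral_fderiv_comp_smul_mul {w φ : 𝔼 → ℝ} (hw : ContDiff ℝ 1 w) (hφ : ContDiff ℝ 1 φ)
    (hφc : HasCompactSupport φ) (R : ℝ) (v : 𝔼) :
    R * ∫ y, fderiv ℝ w (R • y) v * φ y = -∫ y, w (R • y) * fderiv ℝ φ y v := by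
  have hdil : ContDiff ℝ 1 fun y : 𝔼 ↦ w (R • y) := hw.comp (contDiff_const_smul R)
  have hderiv (y : 𝔼) : fderiv ℝ (fun y : 𝔼 ↦ w (R • y)) y v = R * fderiv ℝ w (R • y) v := by
    rw [fderiv_comp_smul]
    simp
  rw [integral_mul_fderiv_eq_neg hdil hφ hφc v, neg_neg, ← integral_const_mul]
  simp only [hderiv, mul_assoc]

/- Differentiating in `R` produces `∫ ⟨∇w (R y), y⟩ φ y = ∫ ⟨∇w (R y), ∇Φ y⟩`, which vanishes after
integrating by parts once more. -/
lemma integral_comp_smul_mul_of_laplacian_eq_zero {w Φ φ : 𝔼 → ℝ} (hw : ContDiff ℝ 2 w)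
    (hΔ : Δ w = 0) (hΦ : ContDiff ℝ 1 Φ) (hΦc : HasCompactSupport Φ) (hφ : Continuous φ)
    (hφc : HasCompactSupport φ) (hΦφ : ∀ x v, fderiv ℝ Φ x v = φ x * ⟪x, v⟫_ℝ) (R : ℝ) :
    ∫ y, w (R • y) * φ y = w 0 * ∫ y, φ y := by
  have hw' (i : ι) : ContDiff ℝ 1 fun y ↦ fderiv ℝ w y (𝐞 i) :=
    (hw.fderiv_right (by norm_num)).clm_apply contDiff_const
  have radial (R : ℝ) (y : 𝔼) : fderiv ℝ w (R • y) y * φ y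
      = ∑ i, fderiv ℝ w (R • y) (𝐞 i) * fderiv ℝ Φ y (𝐞 i) := by
    conv_lhs => enter [1, 2]; rw [← (𝐞).sum_repr' y]
    simp only [map_sum, map_smul, hΦφ, Finset.sum_mul, smul_eq_mul, real_inner_comm y]
    exact Finset.sum_congr rfl fun i _ ↦ by ring
  have deriv_zero (R : ℝ) : ∫ y, fderiv ℝ w (R • y) y * φ y = 0 := by
    have hint (i : ι) : Integrable fun y ↦ fderiv ℝ w (R • y) (𝐞 i) * fderiv ℝ Φ y (𝐞 i) :=
      (((hw' i).continuous.comp (continuous_const_smul R)).mul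
        (continuous_fderiv_const_apply hΦ _)).integrable_of_hasCompactSupport
        (hΦc.fderiv_apply ℝ _).mul_left
    have hint' (i : ι) : Integrable fun y ↦
        fderiv ℝ (fun z ↦ fderiv ℝ w z (𝐞 i)) (R • y) (𝐞 i) * Φ y :=
      (((continuous_fderiv_const_apply (hw' i) _).comp (continuous_const_smul R)).mul
        hΦ.continuous).integrable_of_hasCompactSupport hΦc.mul_left
    calc ∫ y, fderiv ℝ w (R • y) y * φ y
        = ∑ i, ∫ y, fderiv ℝ w (R • y) (𝐞 i) * fderiv ℝ Φ y (𝐞 i) := by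
          simp only [radial, integral_finsetSum _ fun i _ ↦ hint i]
      _ = ∑ i, -(R * ∫ y, fderiv ℝ (fun z ↦ fderiv ℝ w z (𝐞 i)) (R • y) (𝐞 i) * Φ y) := by
          simp only [integral_fderiv_comp_smul_mul (hw' _) hΦ hΦc, neg_neg]
      _ = -(R * ∫ y, Δ w (R • y) * Φ y) := by
          simp only [laplacian_eq_sum_fderiv hw, Finset.sum_mul, Finset.sum_neg_distrib,
            integral_finsetSum _ fun i _ ↦ hint' i, Finset.mul_sum]
      _ = 0 := by simp [hΔ]
  have hderiv (R : ℝ) := hasDerivAt_integral_comp_smul_mul (hw.of_le one_le_two) hφ hφc R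
  calc ∫ y, w (R • y) * φ y = ∫ y, w ((0 : ℝ) • y) * φ y :=
        is_const_of_deriv_eq_zero (fun R ↦ (hderiv R).differentiableAt)
          (fun R ↦ (hderiv R).deriv.trans (deriv_zero R)) R 0
    _ = w 0 * ∫ y, φ y := by simp only [zero_smul, integral_const_mul]

lemma exists_mean_value_kernel [Nonempty ι] : ∃ Φ φ : 𝔼 → ℝ, ContDiff ℝ 1 Φ ∧ HasCompactSupport Φ ∧
    ContDiff ℝ 1 φ ∧ HasCompactSupport φ ∧ (∀ x v, fderiv ℝ Φ x v = φ x * ⟪x, v⟫_ℝ) ∧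
    ∫ x, φ x ≠ 0 := by
  let S := Real.smoothTransition
  have hS : ContDiff ℝ 2 S := Real.smoothTransition.contDiff (n := 2)
  have hS' : ContDiff ℝ 1 (deriv S) := hS.deriv' (n := 1)
  let Φ : 𝔼 → ℝ := fun x ↦ -(1 / 2) * S (2 - ‖x‖ ^ 2)
  let φ : 𝔼 → ℝ := fun x ↦ deriv S (2 - ‖x‖ ^ 2)
  have hrad : ContDiff ℝ 1 fun x : 𝔼 ↦ 2 - ‖x‖ ^ 2 := contDiff_const.sub (contDiff_norm_sq ℝ)
  have S_eq_zero {x : 𝔼} (hx : 2 < ‖x‖) : S =ᶠ[𝓝 (2 - ‖x‖ ^ 2)] fun _ ↦ 0 := by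
    filter_upwards [Iio_mem_nhds (by nlinarith : 2 - ‖x‖ ^ 2 < 0)] with t ht
    exact Real.smoothTransition.zero_of_nonpos (le_of_lt ht)
  have hΦc : HasCompactSupport Φ := HasCompactSupport.intro' (isCompact_closedBall 0 2)
    isClosed_closedBall fun x hx ↦ by simp [Φ, (S_eq_zero (by simpa using hx)).eq_of_nhds]
  have hφc : HasCompactSupport φ := HasCompactSupport.intro' (isCompact_closedBall 0 2)
    isClosed_closedBall fun x hx ↦ by simp [φ, (S_eq_zero (by simpa using hx)).deriv_eq]
  obtain ⟨c, hc, hcS⟩ : ∃ c ∈ Ioo (0 : ℝ) 1, deriv S c = 1 := by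
    obtain ⟨c, hc, hcS⟩ := exists_deriv_eq_slope S one_pos hS.continuous.continuousOn
      (hS.differentiable two_ne_zero).differentiableOn
    exact ⟨c, hc, by simp [hcS, S]⟩
  obtain ⟨y, hy⟩ := exists_norm_eq 𝔼 (Real.sqrt_nonneg (2 - c))
  refine ⟨Φ, φ, contDiff_const.mul ((hS.of_le one_le_two).comp hrad), hΦc, hS'.comp hrad, hφc,
    fun x v ↦ ?_, ?_⟩
  · have hderiv : HasFDerivAt Φ _ x := (((hS.differentiable two_ne_zero _).hasDerivAt
      |>.comp_hasFDerivAt x ((hasStrictFDerivAt_norm_sq x).hasFDerivAt.const_sub 2))).const_mul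
        (-(1 / 2))
    rw [hderiv.fderiv]
    simp only [one_div, smul_neg, neg_smul, neg_neg, smul_apply, coe_innerSL_apply, nsmul_eq_mul,
      Nat.cast_ofNat, smul_eq_mul, φ]
    ring
  · refine (Continuous.integral_pos_of_hasCompactSupport_nonneg_nonzero (x := y)
      (hS'.continuous.comp hrad.continuous) hφc
      (fun x ↦ Real.smoothTransition.monotone.deriv_nonneg) ?_).ne'
    have : 2 - ‖y‖ ^ 2 = c := by rw [hy, Real.sq_sqrt (by linarith [hc.2])]; ring
    simp [this, hcS]

lemma div_add_one_mul_le {ε A : ℝ} (hε : 0 ≤ ε) (hA : 0 ≤ A) : ε / (A + 1) * A ≤ ε := by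
  rw [div_mul_eq_mul_div]
  exact div_le_of_le_mul₀ (by positivity) hε (by nlinarith)

/-- `f` is locally integrable and, for every `ε > 0`, is dominated by `ε` plus an integrable
function; its averages over large balls then tend to `0`. -/
def VanishesInMean (f : 𝔼 → ℝ) : Prop :=
  LocallyIntegrable f ∧ ∀ ε > 0, ∃ g : 𝔼 → ℝ, Integrable g ∧ ∀ᵐ x, |f x| ≤ ε + g x

lemma vanishesInMean_zero : VanishesInMean (0 : 𝔼 → ℝ) :=
  ⟨locallyIntegrable_zero, fun ε hε ↦ ⟨0, integrable_zero _ _ _, by simp [hε.le]⟩⟩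

lemma VanishesInMean.add {f g : 𝔼 → ℝ} (hf : VanishesInMean f) (hg : VanishesInMean g) :
    VanishesInMean (f + g) := by
  refine ⟨hf.1.add hg.1, fun ε hε ↦ ?_⟩
  obtain ⟨F, hF, hfF⟩ := hf.2 (ε / 2) (half_pos hε)
  obtain ⟨G, hG, hgG⟩ := hg.2 (ε / 2) (half_pos hε)
  refine ⟨F + G, hF.add hG, ?_⟩
  filter_upwards [hfF, hgG] with x hx hy
  simp only [Pi.add_apply]
  linarith [abs_add_le (f x) (g x)]

lemma VanishesInMean.smul {f : 𝔼 → ℝ} (c : ℝ) (hf : VanishesInMean f) :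
    VanishesInMean (c • f) := by
  refine ⟨hf.1.smul c, fun ε hε ↦ ?_⟩
  obtain ⟨F, hF, hfF⟩ := hf.2 (ε / (|c| + 1)) (by positivity)
  refine ⟨|c| • F, hF.smul _, ?_⟩
  filter_upwards [hfF] with x hx
  calc |c * f x| = |c| * |f x| := abs_mul c (f x)
    _ ≤ |c| * (ε / (|c| + 1) + F x) := by gcongr
    _ = ε / (|c| + 1) * |c| + |c| * F x := by ring
    _ ≤ ε + |c| * F x := by
      gcongr
      exact div_add_one_mul_le hε.le (abs_nonneg c)

lemma vanishesInMean_of_memLp_two {f : 𝔼 → ℝ} (hf : MemLp f 2) : VanishesInMean f := by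
  refine ⟨hf.locallyIntegrable one_le_two, fun ε hε ↦ ⟨fun x ↦ f x ^ 2 / ε,
    hf.integrable_sq.div_const ε, .of_forall fun x ↦ ?_⟩⟩
  have : 0 ≤ (|f x| - ε) ^ 2 / ε + |f x| := by positivity
  calc |f x| = ε + f x ^ 2 / ε - ((|f x| - ε) ^ 2 / ε + |f x|) := by
        field_simp
        linear_combination sq_abs (f x)
    _ ≤ ε + f x ^ 2 / ε := by linarith

lemma VanishesInMean.convolution {f j : 𝔼 → ℝ} (hf : VanishesInMean f) (hj : Continuous j)
    (hjc : HasCompactSupport j) : VanishesInMean (f ⋆ j) := by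
  refine ⟨(hjc.continuous_convolution_right _ hf.1 hj).locallyIntegrable, fun ε hε ↦ ?_⟩
  have hj_int := hj.integrable_of_hasCompactSupport (μ := volume) hjc
  have hA : 0 ≤ ∫ x, |j x| := integral_nonneg fun _ ↦ abs_nonneg _
  obtain ⟨C, hC⟩ := hj.bounded_above_of_compact_support hjc
  obtain ⟨g, hg, hfg⟩ := hf.2 (ε / ((∫ x, |j x|) + 1)) (by positivity)
  set δ := ε / ((∫ x, |j x|) + 1)
  refine ⟨g ⋆ fun x ↦ |j x|, hg.integrable_convolution _ hj_int.abs, .of_forall fun x ↦ ?_⟩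
  have hshift : Integrable fun t ↦ |j (x - t)| := hj_int.abs.comp_sub_left x
  have hgj : Integrable fun t ↦ g t * |j (x - t)| :=
    hg.mul_bdd (c := C) hshift.aestronglyMeasurable (.of_forall fun t ↦ by simpa using hC (x - t))
  calc |(f ⋆ j) x| ≤ ∫ t, (δ * |j (x - t)| + g t * |j (x - t)|) := by
        rw [convolution_lsmul, ← Real.norm_eq_abs]
        refine norm_integral_le_of_norm_le ((hshift.const_mul δ).add hgj) ?_
        filter_upwards [hfg] with t ht
        rw [smul_eq_mul, norm_mul, ← add_mul]
        exact mul_le_mul_of_nonneg_right ht (abs_nonneg _)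
    _ = δ * (∫ t, |j t|) + (g ⋆ fun x ↦ |j x|) x := by
        rw [integral_add (hshift.const_mul δ) hgj, integral_const_mul, convolution_lsmul,
          integral_sub_left_eq_self (fun t ↦ |j t|)]
        simp only [smul_eq_mul]
    _ ≤ ε + (g ⋆ fun x ↦ |j x|) x := by
        gcongr
        exact div_add_one_mul_le hε.le hA

lemma tendsto_integral_comp_smul_mul_of_integrable [Nonempty ι] {g φ : 𝔼 → ℝ} (hg : Integrable g)
    (hφ : Continuous φ) (hφc : HasCompactSupport φ) :
    Tendsto (fun R : ℝ ↦ ∫ y, g (R • y) * φ y) atTop (𝓝 0) := by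
  obtain ⟨C, hC⟩ := hφ.bounded_above_of_compact_support hφc
  have hbound (R : ℝ) (hR : 0 < R) :
      ‖∫ y, g (R • y) * φ y‖ ≤ (R ^ Fintype.card ι)⁻¹ * ((∫ x, |g x|) * C) := by
    calc ‖∫ y, g (R • y) * φ y‖ ≤ ∫ y, |g (R • y)| * C :=
          norm_integral_le_of_norm_le ((hg.comp_smul hR.ne').abs.mul_const C)
            (.of_forall fun y ↦ by rw [norm_mul, Real.norm_eq_abs]; gcongr; exact hC y)
      _ = (R ^ Fintype.card ι)⁻¹ * ((∫ x, |g x|) * C) := by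
          rw [integral_mul_const, Measure.integral_comp_smul volume (fun x ↦ |g x|), smul_eq_mul,
            finrank_euclideanSpace, abs_of_pos (by positivity), mul_assoc]
  refine squeeze_zero_norm' (eventually_gt_atTop 0 |>.mono hbound) ?_
  have hpow : Tendsto (fun R : ℝ ↦ R ^ Fintype.card ι) atTop atTop :=
    tendsto_pow_atTop Fintype.card_ne_zero
  simpa using hpow.inv_tendsto_atTop.mul_const ((∫ x, |g x|) * C)

lemma VanishesInMean.tendsto_integral_comp_smul_mul [Nonempty ι] {f φ : 𝔼 → ℝ}
    (hf : VanishesInMean f) (hφ : Continuous φ) (hφc : HasCompactSupport φ) :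
    Tendsto (fun R : ℝ ↦ ∫ y, f (R • y) * φ y) atTop (𝓝 0) := by
  have hφ_int := hφ.integrable_of_hasCompactSupport (μ := volume) hφc
  have hbound {ε : ℝ} {g : 𝔼 → ℝ} (hg : Integrable g) (hfg : ∀ᵐ x, |f x| ≤ ε + g x) {R : ℝ}
      (hR : 0 < R) :
      ‖∫ y, f (R • y) * φ y‖ ≤ ε * (∫ y, |φ y|) + ∫ y, g (R • y) * |φ y| := by
    have hgφ : Integrable fun y ↦ g (R • y) * |φ y| := by
      obtain ⟨C, hC⟩ := hφ.bounded_above_of_compact_support hφc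
      exact (hg.comp_smul hR.ne').mul_bdd (c := C) hφ.abs.aestronglyMeasurable
        (.of_forall fun y ↦ by simpa using hC y)
    rw [← integral_const_mul, ← integral_add (hφ_int.abs.const_mul ε) hgφ]
    refine norm_integral_le_of_norm_le ((hφ_int.abs.const_mul ε).add hgφ) ?_
    filter_upwards [(Measure.quasiMeasurePreserving_smul volume hR.ne').ae hfg] with y hy
    rw [norm_mul, ← add_mul]
    exact mul_le_mul_of_nonneg_right hy (abs_nonneg _)
  have hA : 0 ≤ ∫ y, |φ y| := integral_nonneg fun _ ↦ abs_nonneg _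
  refine NormedAddGroup.tendsto_nhds_zero.2 fun ε hε ↦ ?_
  obtain ⟨g, hg, hfg⟩ := hf.2 (ε / 2 / ((∫ y, |φ y|) + 1)) (by positivity)
  filter_upwards [eventually_gt_atTop 0, (tendsto_integral_comp_smul_mul_of_integrable hg hφ.abs
    hφc.norm).eventually_lt_const (half_pos hε)] with R hR hgR
  linarith [hbound hg hfg hR, div_add_one_mul_le (half_pos hε).le hA]

lemma tendsto_integral_fderiv_comp_smul_mul {w φ : 𝔼 → ℝ} (hw : ContDiff ℝ 1 w) {C : ℝ}
    (hwC : ∀ x, |w x| ≤ C) (hφ : ContDiff ℝ 1 φ) (hφc : HasCompactSupport φ) (v : 𝔼) :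
    Tendsto (fun R : ℝ ↦ ∫ y, fderiv ℝ w (R • y) v * φ y) atTop (𝓝 0) := by
  have hφ'_int : Integrable fun y ↦ fderiv ℝ φ y v :=
    (continuous_fderiv_const_apply hφ v).integrable_of_hasCompactSupport (hφc.fderiv_apply ℝ v)
  have hbound (R : ℝ) (hR : 0 < R) :
      ‖∫ y, fderiv ℝ w (R • y) v * φ y‖ ≤ R⁻¹ * ∫ y, C * |fderiv ℝ φ y v| := by
    rw [show ∫ y, fderiv ℝ w (R • y) v * φ y = R⁻¹ * -∫ y, w (R • y) * fderiv ℝ φ y v by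
      rw [← integral_fderiv_comp_smul_mul hw hφ hφc R v, inv_mul_cancel_left₀ hR.ne'],
      norm_mul, norm_neg, norm_inv, Real.norm_of_nonneg hR.le]
    gcongr
    refine norm_integral_le_of_norm_le (hφ'_int.abs.const_mul C) (.of_forall fun y ↦ ?_)
    rw [norm_mul]
    exact mul_le_mul_of_nonneg_right (hwC _) (norm_nonneg _)
  refine squeeze_zero_norm' (eventually_gt_atTop 0 |>.mono hbound) ?_
  simpa using tendsto_inv_atTop_zero.mul_const (∫ y, C * |fderiv ℝ φ y v|)

/-! ### Liouville theorem for distributions -/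

/-- The test function `t ↦ χ (x - t)`, against which pairing is evaluating a convolution at `x`. -/
def reflectedTranslate (χ : 𝒯) (x : 𝔼) : 𝒯 :=
  ⟨fun t ↦ χ (x - t), χ.contDiff.comp (contDiff_const.sub contDiff_id),
    χ.hasCompactSupport.comp_homeomorph (Homeomorph.subLeft x), subset_univ _⟩

lemma toDistribution_reflectedTranslate {f : 𝔼 → ℝ} (hf : LocallyIntegrable f) (χ : 𝒯) (x : 𝔼) :
    toDistribution f (reflectedTranslate χ x) = (f ⋆ χ) x := by
  rw [toDistribution_apply hf, convolution_lsmul]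
  rfl

lemma reflectedTranslate_reflectedTranslate_zero (χ : 𝒯) :
    reflectedTranslate (reflectedTranslate χ 0) 0 = χ := by
  ext t
  change χ (0 - (0 - t)) = χ t
  simp

lemma lineDerivOp_reflectedTranslate (χ : 𝒯) (x v : 𝔼) :
    ∂_{v} (reflectedTranslate χ x) = -reflectedTranslate (∂_{v} χ) x := by
  ext t
  have hχ : HasFDerivAt χ (fderiv ℝ χ (x - t)) (x - t) :=
    (χ.contDiff.differentiable (by simp) _).hasFDerivAt
  have hcomp := hχ.comp t ((hasFDerivAt_id t).const_sub x)
  change (∂_{v} (reflectedTranslate χ x)) t = -(∂_{v} χ) (x - t)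
  rw [lineDerivOp_testFunction_apply, lineDerivOp_testFunction_apply]
  exact (DFunLike.congr_fun hcomp.fderiv v).trans (by simp)

lemma lineDerivOp_apply_reflectedTranslate (T : 𝒟) (χ : 𝒯) (x v : 𝔼) :
    (∂_{v} T) (reflectedTranslate χ x) = T (reflectedTranslate (∂_{v} χ) x) := by
  simp [lineDerivOp_reflectedTranslate]

lemma contDiff_convolution_testFunction {f : 𝔼 → ℝ} (hf : LocallyIntegrable f) (χ : 𝒯) :
    ContDiff ℝ ∞ (f ⋆ χ) :=
  χ.hasCompactSupport.contDiff_convolution_right _ hf (χ.contDiff.of_le (by simp))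

lemma fderiv_convolution_testFunction {f : 𝔼 → ℝ} (hf : LocallyIntegrable f) (χ : 𝒯) (x v : 𝔼) :
    fderiv ℝ (f ⋆ χ) x v = (f ⋆ (∂_{v} χ : 𝒯)) x := by
  have hχ : ContDiff ℝ 1 χ := χ.contDiff.of_le (by norm_cast)
  rw [(χ.hasCompactSupport.hasFDerivAt_convolution_right _ hf hχ x).fderiv,
    convolution_precompR_apply _ hf (χ.hasCompactSupport.fderiv ℝ)
      (hχ.continuous_fderiv one_ne_zero),
    funext fun y ↦ (lineDerivOp_testFunction_apply χ v y).symm]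

lemma abs_convolution_le {f : 𝔼 → ℝ} (hf : MemLp f ⊤) (χ : 𝒯) (x : 𝔼) :
    |(f ⋆ χ) x| ≤ lpNorm f ⊤ volume * ∫ t, |χ t| := by
  rw [convolution_lsmul, ← integral_sub_left_eq_self (fun t ↦ |χ t|) volume x,
    ← integral_const_mul, ← Real.norm_eq_abs]
  refine norm_integral_le_of_norm_le
    (((integrable_testFunction χ).comp_sub_left x).abs.const_mul _) ?_
  filter_upwards [ae_le_lpNorm_exponent_top hf] with t ht
  rw [smul_eq_mul, norm_mul]
  exact mul_le_mul_of_nonneg_right ht (norm_nonneg _)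

/-- The distributions `[f] + ∑ᵢ ∂ᵢ[vᵢ]` with `f` vanishing in mean and `vᵢ` essentially bounded.
This is the class of distributions in which harmonic ones vanish. -/
def tameDistributions : Submodule ℝ 𝒟 where
  carrier := {T | ∃ (f : 𝔼 → ℝ) (v : ι → 𝔼 → ℝ), VanishesInMean f ∧ (∀ i, MemLp (v i) ⊤) ∧
    T = toDistribution f + ∑ i, ∂_{𝐞 i} (toDistribution (v i))}
  zero_mem' := ⟨0, 0, vanishesInMean_zero, fun _ ↦ MemLp.zero', by
    simp [toDistribution_zero, lineDerivOp_zero]⟩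
  add_mem' := by
    rintro _ _ ⟨f, v, hf, hv, rfl⟩ ⟨g, w, hg, hw, rfl⟩
    refine ⟨f + g, v + w, hf.add hg, fun i ↦ (hv i).add (hw i), ?_⟩
    have hvw (i : ι) := toDistribution_add ((hv i).locallyIntegrable le_top)
      ((hw i).locallyIntegrable le_top)
    simp only [Pi.add_apply, toDistribution_add hf.1 hg.1, hvw, lineDerivOp_add,
      Finset.sum_add_distrib]
    abel
  smul_mem' := by
    rintro c _ ⟨f, v, hf, hv, rfl⟩
    refine ⟨c • f, c • v, hf.smul c, fun i ↦ (hv i).const_smul c, ?_⟩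
    have hcv (i : ι) := toDistribution_smul c ((hv i).locallyIntegrable le_top)
    simp only [Pi.smul_apply, toDistribution_smul c hf.1, hcv, lineDerivOp_smul, smul_add,
      Finset.smul_sum]

lemma toDistribution_mem_tameDistributions {f : 𝔼 → ℝ} (hf : VanishesInMean f) :
    toDistribution f ∈ tameDistributions :=
  ⟨f, 0, hf, fun _ ↦ MemLp.zero', by simp [toDistribution_zero, lineDerivOp_zero]⟩

open Classical in
lemma lineDerivOp_toDistribution_mem_tameDistributions {f : 𝔼 → ℝ} (hf : MemLp f ⊤) (i : ι) :
    ∂_{𝐞 i} (toDistribution f) ∈ tameDistributions := by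
  refine ⟨0, Pi.single i f, vanishesInMean_zero, fun j ↦ ?_, ?_⟩
  · rcases eq_or_ne j i with rfl | hj
    · simpa using hf
    · simp [hj]
  · rw [toDistribution_zero, zero_add, Finset.sum_eq_single i (fun j _ hj ↦ ?_) (by simp)]
    · simp
    · simp [hj, toDistribution_zero, lineDerivOp_zero]

lemma apply_reflectedTranslate_eq_convolution {f : 𝔼 → ℝ} {v : ι → 𝔼 → ℝ}
    (hf : LocallyIntegrable f) (hv : ∀ i, LocallyIntegrable (v i)) (χ : 𝒯) :
    (fun x ↦ (toDistribution f + ∑ i, ∂_{𝐞 i} (toDistribution (v i))) (reflectedTranslate χ x)) =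
      f ⋆ χ + ∑ i, v i ⋆ (∂_{𝐞 i} χ : 𝒯) := by
  funext x
  simp only [add_apply, sum_apply, Pi.add_apply, Finset.sum_apply,
    lineDerivOp_apply_reflectedTranslate, toDistribution_reflectedTranslate, hf, hv]

lemma contDiff_apply_reflectedTranslate {T : 𝒟} (hT : T ∈ tameDistributions) (χ : 𝒯) :
    ContDiff ℝ ∞ fun x ↦ T (reflectedTranslate χ x) := by
  obtain ⟨f, v, hf, hv, rfl⟩ := hT
  have hv' (i : ι) : LocallyIntegrable (v i) := (hv i).locallyIntegrable le_top
  rw [apply_reflectedTranslate_eq_convolution hf.1 hv', Finset.sum_fn]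
  exact (contDiff_convolution_testFunction hf.1 χ).add
    (ContDiff.sum fun i _ ↦ contDiff_convolution_testFunction (hv' i) _)

lemma fderiv_apply_reflectedTranslate {T : 𝒟} (hT : T ∈ tameDistributions) (χ : 𝒯) (x w : 𝔼) :
    fderiv ℝ (fun x ↦ T (reflectedTranslate χ x)) x w = T (reflectedTranslate (∂_{w} χ) x) := by
  obtain ⟨f, v, hf, hv, rfl⟩ := hT
  have hv' (i : ι) : LocallyIntegrable (v i) := (hv i).locallyIntegrable le_top
  have hdiff {g : 𝔼 → ℝ} (hg : LocallyIntegrable g) (ψ : 𝒯) : DifferentiableAt ℝ (g ⋆ ψ) x :=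
    (contDiff_convolution_testFunction hg ψ).differentiable (by simp) x
  have key := congrFun (apply_reflectedTranslate_eq_convolution hf.1 hv' (∂_{w} χ)) x
  rw [key, apply_reflectedTranslate_eq_convolution hf.1 hv', fderiv_add (hdiff hf.1 χ)
    (.sum fun i _ ↦ hdiff (hv' i) _), fderiv_sum fun i _ ↦ hdiff (hv' i) _]
  simp only [add_apply, sum_apply, Pi.add_apply, Finset.sum_apply, fderiv_convolution_testFunction,
    hf.1, hv', lineDerivOp_testFunction_comm χ w]

lemma laplacian_apply_reflectedTranslate {T : 𝒟} (hT : T ∈ tameDistributions) (χ : 𝒯) (x : 𝔼) :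
    Δ (fun x ↦ T (reflectedTranslate χ x)) x = laplacianCLM ℝ 𝔼 𝒟 T (reflectedTranslate χ x) := by
  rw [laplacian_eq_sum_fderiv ((contDiff_apply_reflectedTranslate hT χ).of_le (by norm_cast)),
    laplacianCLM_eq_sum 𝐞]
  simp only [fderiv_apply_reflectedTranslate hT, sum_apply, lineDerivOp_apply_reflectedTranslate]

lemma tendsto_integral_apply_reflectedTranslate_mul [Nonempty ι] {T : 𝒟}
    (hT : T ∈ tameDistributions) (χ : 𝒯) {φ : 𝔼 → ℝ} (hφ : ContDiff ℝ 1 φ)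
    (hφc : HasCompactSupport φ) :
    Tendsto (fun R : ℝ ↦ ∫ y, T (reflectedTranslate χ (R • y)) * φ y) atTop (𝓝 0) := by
  obtain ⟨f, v, hf, hv, rfl⟩ := hT
  have hv' (i : ι) : LocallyIntegrable (v i) := (hv i).locallyIntegrable le_top
  have integrable_dilation {g : 𝔼 → ℝ} (hg : LocallyIntegrable g) (ψ : 𝒯) (R : ℝ) :
      Integrable fun y ↦ (g ⋆ ψ) (R • y) * φ y :=
    (((contDiff_convolution_testFunction hg ψ).continuous.comp (continuous_const_smul R)).mul
      hφ.continuous).integrable_of_hasCompactSupport hφc.mul_left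
  have hf_lim := (hf.convolution χ.continuous χ.hasCompactSupport).tendsto_integral_comp_smul_mul
    hφ.continuous hφc
  have hv_lim (i : ι) : Tendsto (fun R : ℝ ↦ ∫ y, (v i ⋆ (∂_{𝐞 i} χ : 𝒯)) (R • y) * φ y)
      atTop (𝓝 0) := by
    simpa only [fderiv_convolution_testFunction (hv' i)] using tendsto_integral_fderiv_comp_smul_mul
      ((contDiff_convolution_testFunction (hv' i) χ).of_le (by norm_cast))
      (abs_convolution_le (hv i) χ) hφ hφc (𝐞 i)
  have h_lim := hf_lim.add (tendsto_finsetSum Finset.univ fun i _ ↦ hv_lim i)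
  rw [Finset.sum_const_zero, add_zero] at h_lim
  refine h_lim.congr fun R ↦ ?_
  rw [← integral_finsetSum _ fun i _ ↦ integrable_dilation (hv' i) _ R,
    ← integral_add (integrable_dilation hf.1 χ R)
      (integrable_finsetSum _ fun i _ ↦ integrable_dilation (hv' i) _ R)]
  refine integral_congr_ae (.of_forall fun y ↦ ?_)
  have key := congrFun (apply_reflectedTranslate_eq_convolution hf.1 hv' χ) (R • y)
  simp only [key, Pi.add_apply, Finset.sum_apply, add_mul, Finset.sum_mul]

theorem eq_zero_of_mem_tameDistributions_of_laplacian_eq_zero [Nonempty ι] {T : 𝒟}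
    (hT : T ∈ tameDistributions) (hΔ : laplacianCLM ℝ 𝔼 𝒟 T = 0) : T = 0 := by
  ext χ
  let w : 𝔼 → ℝ := fun x ↦ T (reflectedTranslate (reflectedTranslate χ 0) x)
  obtain ⟨Φ, φ, hΦ, hΦc, hφ, hφc, hΦφ, hφ_int⟩ := exists_mean_value_kernel (ι := ι)
  have hw_harmonic : Δ w = 0 := funext fun x ↦ by
    rw [laplacian_apply_reflectedTranslate hT, hΔ]
    rfl
  have hw_mean (R : ℝ) : ∫ y, w (R • y) * φ y = w 0 * ∫ y, φ y :=
    integral_comp_smul_mul_of_laplacian_eq_zero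
      ((contDiff_apply_reflectedTranslate hT _).of_le (by norm_cast)) hw_harmonic hΦ hΦc
      hφ.continuous hφc hΦφ R
  have hw_lim : Tendsto (fun R : ℝ ↦ ∫ y, w (R • y) * φ y) atTop (𝓝 0) :=
    tendsto_integral_apply_reflectedTranslate_mul hT _ hφ hφc
  simp only [hw_mean] at hw_lim
  have hw_zero : w 0 = 0 :=
    (mul_eq_zero_iff_right hφ_int).1 (tendsto_nhds_unique tendsto_const_nhds hw_lim)
  simpa [w, reflectedTranslate_reflectedTranslate_zero] using hw_zero

/-! ### Riesz transforms on square integrable functions -/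

lemma exists_inner_eq_of_abs_le {V H : Type*} [AddCommGroup V] [Module ℝ V] [NormedAddCommGroup H]
    [InnerProductSpace ℝ H] [CompleteSpace H] (L : V →ₗ[ℝ] H) (ℓ : V →ₗ[ℝ] ℝ) {C : ℝ} (hC : 0 ≤ C)
    (hℓ : ∀ x, |ℓ x| ≤ C * ‖L x‖) : ∃ h : H, ‖h‖ ≤ C ∧ ∀ x, ℓ x = ⟪h, L x⟫_ℝ := by
  have ker_le : L.ker ≤ ℓ.ker := fun x hx ↦ by
    simpa [LinearMap.mem_ker.1 hx] using hℓ x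
  let ℓ' : L.range →ₗ[ℝ] ℝ := L.ker.liftQ ℓ ker_le ∘ₗ L.quotKerEquivRange.symm.toLinearMap
  have hℓ' (x : V) : ℓ' ⟨L x, L.mem_range_self x⟩ = ℓ x := by
    have : L.quotKerEquivRange.symm ⟨L x, L.mem_range_self x⟩ = L.ker.mkQ x :=
      (LinearEquiv.symm_apply_eq _).2 rfl
    simp [ℓ', this]
  have hbound : ∀ y, ‖ℓ' y‖ ≤ C * ‖y‖ := by
    rintro ⟨_, x, rfl⟩
    simpa [hℓ'] using hℓ x
  obtain ⟨g, hg, hg_norm⟩ := exists_extension_norm_eq L.range (ℓ'.mkContinuous C hbound)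
  refine ⟨(InnerProductSpace.toDual ℝ H).symm g, ?_, fun x ↦ ?_⟩
  · rw [LinearIsometryEquiv.norm_map, hg_norm]
    exact ℓ'.mkContinuous_norm_le hC hbound
  · rw [InnerProductSpace.toDual_symm_apply, ← hℓ' x]
    exact (hg ⟨L x, L.mem_range_self x⟩).symm

lemma inner_toLp_toLp {α : Type*} [MeasurableSpace α] {μ : Measure α} {f g : α → ℝ}
    (hf : MemLp f 2 μ) (hg : MemLp g 2 μ) : ⟪hf.toLp f, hg.toLp g⟫_ℝ = ∫ x, f x * g x ∂μ := by
  rw [L2.inner_def]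
  refine integral_congr_ae ?_
  filter_upwards [hf.coeFn_toLp, hg.coeFn_toLp] with x hfx hgx
  simp [hfx, hgx, mul_comm]

/-- The distributions given by square integrable functions. -/
def l2Distributions : Submodule ℝ 𝒟 where
  carrier := {T | ∃ f : 𝔼 → ℝ, MemLp f 2 ∧ T = toDistribution f}
  zero_mem' := ⟨0, MemLp.zero', toDistribution_zero.symm⟩
  add_mem' := by
    rintro _ _ ⟨f, hf, rfl⟩ ⟨g, hg, rfl⟩
    exact ⟨f + g, hf.add hg, (toDistribution_add (hf.locallyIntegrable one_le_two)
      (hg.locallyIntegrable one_le_two)).symm⟩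
  smul_mem' := by
    rintro c _ ⟨f, hf, rfl⟩
    exact ⟨c • f, hf.const_smul c, (toDistribution_smul c (hf.locallyIntegrable one_le_two)).symm⟩

lemma toDistribution_mem_l2Distributions {f : 𝔼 → ℝ} (hf : MemLp f 2) :
    toDistribution f ∈ l2Distributions :=
  ⟨f, hf, rfl⟩

lemma l2Distributions_le_tameDistributions :
    l2Distributions ≤ (tameDistributions : Submodule ℝ 𝒟) := by
  rintro _ ⟨f, hf, rfl⟩
  exact toDistribution_mem_tameDistributions (vanishesInMean_of_memLp_two hf)

/-- The inclusion of the test functions into `L²`. -/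
def testToLp : 𝒯 →ₗ[ℝ] 𝓛 where
  toFun χ := (memLp_testFunction χ 2).toLp χ
  map_add' _ _ := rfl
  map_smul' _ _ := rfl

lemma inner_toLp_testToLp {f : 𝔼 → ℝ} (hf : MemLp f 2) (χ : 𝒯) :
    ⟪hf.toLp f, testToLp χ⟫_ℝ = toDistribution f χ := by
  rw [toDistribution_apply (hf.locallyIntegrable one_le_two)]
  exact inner_toLp_toLp hf (memLp_testFunction χ 2)

lemma inner_coe_testToLp (f : 𝓛) (χ : 𝒯) :
    ⟪f, testToLp χ⟫_ℝ = toDistribution f χ := by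
  rw [← inner_toLp_testToLp (Lp.memLp f), Lp.toLp_coeFn]

lemma inner_testToLp_lineDerivOp (χ ψ : 𝒯) (v : 𝔼) :
    ⟪testToLp χ, testToLp (∂_{v} ψ)⟫_ℝ = -⟪testToLp (∂_{v} χ), testToLp ψ⟫_ℝ := by
  have ibp := integral_mul_fderiv_eq_neg (χ.contDiff.of_le (by norm_cast))
    (ψ.contDiff.of_le (by norm_cast)) ψ.hasCompactSupport v
  simp only [← lineDerivOp_testFunction_apply] at ibp
  have inner_eq (φ ψ : 𝒯) : ⟪testToLp φ, testToLp ψ⟫_ℝ = ∫ x, φ x * ψ x :=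
    inner_toLp_toLp (memLp_testFunction φ 2) (memLp_testFunction ψ 2)
  rw [inner_eq, inner_eq, ibp]

lemma norm_sq_testToLp_laplacian (χ : 𝒯) :
    ‖testToLp (laplacianCLM ℝ 𝔼 𝒯 χ)‖ ^ 2 =
      ∑ i, ∑ j, ‖testToLp (∂_{𝐞 i} (∂_{𝐞 j} χ))‖ ^ 2 := by
  have swap_derivs (i j : ι) : ⟪testToLp (∂_{𝐞 i} (∂_{𝐞 i} χ)), testToLp (∂_{𝐞 j} (∂_{𝐞 j} χ))⟫_ℝ =
      ‖testToLp (∂_{𝐞 i} (∂_{𝐞 j} χ))‖ ^ 2 := by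
    rw [inner_testToLp_lineDerivOp, lineDerivOp_testFunction_comm _ (𝐞 j) (𝐞 i),
      ← inner_testToLp_lineDerivOp, lineDerivOp_testFunction_comm χ (𝐞 j) (𝐞 i),
      real_inner_self_eq_norm_sq]
  simp only [← real_inner_self_eq_norm_sq, laplacianCLM_eq_sum 𝐞, map_sum, sum_inner, inner_sum]
  rw [Finset.sum_comm]
  simp only [swap_derivs, real_inner_self_eq_norm_sq]

lemma norm_testToLp_lineDerivOp_lineDerivOp_le (χ : 𝒯) (i j : ι) :
    ‖testToLp (∂_{𝐞 i} (∂_{𝐞 j} χ))‖ ≤ ‖testToLp (laplacianCLM ℝ 𝔼 𝒯 χ)‖ := by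
  let a : ι → ι → ℝ := fun i j ↦ ‖testToLp (∂_{𝐞 i} (∂_{𝐞 j} χ))‖ ^ 2
  have ha (i j : ι) : 0 ≤ a i j := sq_nonneg _
  refine (sq_le_sq₀ (norm_nonneg _) (norm_nonneg _)).1 ?_
  calc a i j ≤ ∑ j, a i j := Finset.single_le_sum (fun j _ ↦ ha i j) (Finset.mem_univ j)
    _ ≤ ∑ i, ∑ j, a i j := Finset.single_le_sum (f := fun i ↦ ∑ j, a i j)
        (fun i _ ↦ Finset.sum_nonneg fun j _ ↦ ha i j) (Finset.mem_univ i)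
    _ = ‖testToLp (laplacianCLM ℝ 𝔼 𝒯 χ)‖ ^ 2 := (norm_sq_testToLp_laplacian χ).symm

lemma laplacianCLM_distribution_apply (T : 𝒟) (χ : 𝒯) :
    laplacianCLM ℝ 𝔼 𝒟 T χ = T (laplacianCLM ℝ 𝔼 𝒯 χ) := by
  simp [laplacianCLM_eq_sum 𝐞, sum_apply, lineDerivOp_neg]

/- The Riesz transforms are bounded on `L²`. -/
lemma lineDerivOp_lineDerivOp_mem_map_laplacianCLM {S : 𝒟} (hS : S ∈ l2Distributions) (i j : ι) :
    ∂_{𝐞 i} (∂_{𝐞 j} S) ∈ l2Distributions.map (laplacianCLM ℝ 𝔼 𝒟).toLinearMap := by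
  obtain ⟨f, hf, rfl⟩ := hS
  let ℓ : 𝒯 →ₗ[ℝ] ℝ := (∂_{𝐞 i} (∂_{𝐞 j} (toDistribution f)) : 𝒟).toLinearMap
  have hℓ (χ : 𝒯) : |ℓ χ| ≤ ‖hf.toLp f‖ * ‖testToLp (laplacianCLM ℝ 𝔼 𝒯 χ)‖ := by
    calc |ℓ χ| = |⟪hf.toLp f, testToLp (∂_{𝐞 j} (∂_{𝐞 i} χ))⟫_ℝ| := by
          rw [inner_toLp_testToLp]
          change |(∂_{𝐞 i} (∂_{𝐞 j} (toDistribution f)) : 𝒟) χ| = _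
          simp
      _ ≤ ‖hf.toLp f‖ * ‖testToLp (∂_{𝐞 j} (∂_{𝐞 i} χ))‖ := abs_real_inner_le_norm _ _
      _ ≤ ‖hf.toLp f‖ * ‖testToLp (laplacianCLM ℝ 𝔼 𝒯 χ)‖ := by
          gcongr
          exact norm_testToLp_lineDerivOp_lineDerivOp_le χ j i
  obtain ⟨h, -, hh⟩ := exists_inner_eq_of_abs_le
    (testToLp ∘ₗ (laplacianCLM ℝ 𝔼 𝒯).toLinearMap) ℓ (norm_nonneg _) hℓ
  refine ⟨toDistribution h, toDistribution_mem_l2Distributions (Lp.memLp h), ?_⟩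
  ext χ
  calc laplacianCLM ℝ 𝔼 𝒟 (toDistribution h) χ = ⟪h, testToLp (laplacianCLM ℝ 𝔼 𝒯 χ)⟫_ℝ := by
        rw [laplacianCLM_distribution_apply, inner_coe_testToLp]
    _ = ℓ χ := (hh χ).symm

lemma mem_l2Distributions_of_laplacianCLM_mem_map [Nonempty ι] {T : 𝒟} (hT : T ∈ tameDistributions)
    (hΔ : laplacianCLM ℝ 𝔼 𝒟 T ∈ l2Distributions.map (laplacianCLM ℝ 𝔼 𝒟).toLinearMap) :
    T ∈ l2Distributions := by
  obtain ⟨R, hR, hΔR⟩ := hΔ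
  have : T - R = 0 := eq_zero_of_mem_tameDistributions_of_laplacian_eq_zero
    (sub_mem hT (l2Distributions_le_tameDistributions hR)) (by
      rw [map_sub, sub_eq_zero]
      exact hΔR.symm)
  rwa [sub_eq_zero.1 this]

theorem lineDerivOp_mem_l2Distributions_of_div_curl [Nonempty ι] {v : ι → 𝔼 → ℝ}
    (hv : ∀ i, MemLp (v i) ⊤) (hdiv : ∑ i, ∂_{𝐞 i} (toDistribution (v i)) ∈ l2Distributions)
    (hcurl : ∀ i j, ∂_{𝐞 i} (toDistribution (v j)) - ∂_{𝐞 j} (toDistribution (v i)) ∈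
      l2Distributions) (i j : ι) :
    ∂_{𝐞 i} (toDistribution (v j)) ∈ l2Distributions := by
  refine mem_l2Distributions_of_laplacianCLM_mem_map
    (lineDerivOp_toDistribution_mem_tameDistributions (hv j) i) ?_
  have hΔ : laplacianCLM ℝ 𝔼 𝒟 (∂_{𝐞 i} (toDistribution (v j))) =
      ∑ k, ∂_{𝐞 i} (∂_{𝐞 k} (∂_{𝐞 k} (toDistribution (v j)) - ∂_{𝐞 j} (toDistribution (v k)))) +
        ∂_{𝐞 i} (∂_{𝐞 j} (∑ k, ∂_{𝐞 k} (toDistribution (v k)))) := by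
    simp only [laplacianCLM_eq_sum 𝐞, lineDerivOp_sum, ← Finset.sum_add_distrib]
    refine Finset.sum_congr rfl fun k _ ↦ ?_
    rw [lineDerivOp_distribution_comm (toDistribution (v j)) (𝐞 k) (𝐞 i),
      lineDerivOp_distribution_comm _ (𝐞 k) (𝐞 i),
      lineDerivOp_distribution_comm (toDistribution (v k)) (𝐞 j) (𝐞 k), ← lineDerivOp_add,
      ← lineDerivOp_add, sub_add_cancel]
  rw [hΔ]
  exact add_mem (sum_mem fun k _ ↦ lineDerivOp_lineDerivOp_mem_map_laplacianCLM (hcurl k j) i k)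
    (lineDerivOp_lineDerivOp_mem_map_laplacianCLM hdiv i j)

/-! ### Localization -/

/-- Multiplication of test functions by the test function `s`. -/
def mulTest (s : 𝒯) : 𝒯 →ₗ[ℝ] 𝒯 where
  toFun χ := ⟨fun x ↦ s x * χ x, s.contDiff.mul χ.contDiff, χ.hasCompactSupport.mul_left,
    subset_univ _⟩
  map_add' χ ψ := TestFunction.ext fun x ↦ mul_add (s x) (χ x) (ψ x)
  map_smul' c χ := TestFunction.ext fun x ↦ mul_left_comm (s x) c (χ x)

lemma mulTest_apply (s χ : 𝒯) (x : 𝔼) : mulTest s χ x = s x * χ x := rfl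

lemma lineDerivOp_mulTest (s χ : 𝒯) (v : 𝔼) :
    ∂_{v} (mulTest s χ) = mulTest (∂_{v} s) χ + mulTest s (∂_{v} χ) := by
  ext x
  have hs : DifferentiableAt ℝ s x := s.contDiff.differentiable (by simp) x
  have hχ : DifferentiableAt ℝ χ x := χ.contDiff.differentiable (by simp) x
  rw [lineDerivOp_testFunction_apply]
  change fderiv ℝ (fun x ↦ s x * χ x) x v = (∂_{v} s) x * χ x + s x * (∂_{v} χ) x
  rw [fderiv_fun_mul hs hχ, lineDerivOp_testFunction_apply, lineDerivOp_testFunction_apply]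
  simp only [add_apply, smul_apply, smul_eq_mul]
  ring

lemma locallyIntegrable_testFunction_mul {f : 𝔼 → ℝ} (hf : LocallyIntegrable f) (s : 𝒯) :
    LocallyIntegrable fun x ↦ s x * f x := by
  simpa only [mul_comm] using (integrable_mul_testFunction hf s).locallyIntegrable

lemma toDistribution_testFunction_mul {f : 𝔼 → ℝ} (hf : LocallyIntegrable f) (s χ : 𝒯) :
    toDistribution (fun x ↦ s x * f x) χ = toDistribution f (mulTest s χ) := by
  rw [toDistribution_apply (locallyIntegrable_testFunction_mul hf s), toDistribution_apply hf]
  exact integral_congr_ae (.of_forall fun x ↦ by simp only [mulTest_apply]; ring)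

lemma lineDerivOp_toDistribution_testFunction_mul {f : 𝔼 → ℝ} (hf : LocallyIntegrable f)
    (s χ : 𝒯) (v : 𝔼) :
    (∂_{v} (toDistribution fun x ↦ s x * f x)) χ =
      (∂_{v} (toDistribution f)) (mulTest s χ) + toDistribution (fun x ↦ (∂_{v} s) x * f x) χ := by
  simp only [Distribution.lineDerivOp_apply_apply, map_neg, toDistribution_testFunction_mul hf,
    lineDerivOp_mulTest, map_add]
  ring

lemma sum_lineDerivOp_toDistribution_testFunction_mul {κ : Type*} [Fintype κ] {v : κ → 𝔼}
    {f : κ → 𝔼 → ℝ} {g : 𝔼 → ℝ} (hf : ∀ k, LocallyIntegrable (f k)) (hg : LocallyIntegrable g)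
    (h : ∑ k, ∂_{v k} (toDistribution (f k)) = toDistribution g) (s : 𝒯) :
    ∑ k, ∂_{v k} (toDistribution fun x ↦ s x * f k x) =
      toDistribution fun x ↦ s x * g x + ∑ k, (∂_{v k} s) x * f k x := by
  have hsf (k : κ) := locallyIntegrable_testFunction_mul (hf k) (∂_{v k} s)
  have hsum : LocallyIntegrable fun x ↦ ∑ k, (∂_{v k} s) x * f k x :=
    locallyIntegrable_finsetSum _ fun k _ ↦ hsf k
  ext χ
  calc (∑ k, ∂_{v k} (toDistribution fun x ↦ s x * f k x)) χ
      = (∑ k, ∂_{v k} (toDistribution (f k))) (mulTest s χ) +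
          toDistribution (fun x ↦ ∑ k, (∂_{v k} s) x * f k x) χ := by
        simp only [sum_apply, toDistribution_sum _ hsf, ← Finset.sum_add_distrib,
          lineDerivOp_toDistribution_testFunction_mul (hf _)]
    _ = _ := by
        rw [h, ← toDistribution_testFunction_mul hg, ← add_apply,
          ← toDistribution_add (locallyIntegrable_testFunction_mul hg s) hsum]
        rfl

/-- Local square integrability, phrased as square integrability of every localization by a test
function. -/
def LocallyL2 (f : 𝔼 → ℝ) : Prop :=
  ∀ s : 𝒯, MemLp (fun x ↦ s x * f x) 2

lemma exists_testFunction_eq_one (R : ℝ) : ∃ s : 𝒯, ∀ x ∈ ball (0 : 𝔼) R, s x = 1 := by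
  let b : ContDiffBump (0 : 𝔼) := ⟨|R| + 1, |R| + 2, by positivity, by linarith⟩
  refine ⟨⟨b, b.contDiff, b.hasCompactSupport, subset_univ _⟩, fun x hx ↦ ?_⟩
  exact b.one_of_mem_closedBall (ball_subset_closedBall (ball_subset_ball (by
    change R ≤ |R| + 1
    linarith [le_abs_self R]) hx))

lemma locallyL2_of_memLp_two {f : 𝔼 → ℝ} (hf : MemLp f 2) : LocallyL2 f :=
  fun s ↦ hf.mul' (memLp_testFunction s ⊤)

lemma locallyL2_of_memLp_top {f : 𝔼 → ℝ} (hf : MemLp f ⊤) : LocallyL2 f :=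
  fun s ↦ hf.mul' (memLp_testFunction s 2)

lemma LocallyL2.add {f g : 𝔼 → ℝ} (hf : LocallyL2 f) (hg : LocallyL2 g) : LocallyL2 (f + g) :=
  fun s ↦ ((hf s).add (hg s)).ae_eq (.of_forall fun x ↦ (mul_add (s x) (f x) (g x)).symm)

lemma LocallyL2.bddMul {f a : 𝔼 → ℝ} (hf : LocallyL2 f) (ha : MemLp a ⊤) :
    LocallyL2 fun x ↦ a x * f x := by
  intro s
  simpa only [mul_left_comm] using (hf s).mul' ha

lemma LocallyL2.locallyIntegrable {f : 𝔼 → ℝ} (hf : LocallyL2 f) : LocallyIntegrable f := by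
  refine locallyIntegrable_iff.2 fun K hK ↦ ?_
  obtain ⟨R, hKR⟩ := hK.isBounded.subset_ball 0
  obtain ⟨s, hs⟩ := exists_testFunction_eq_one (ι := ι) R
  refine ((locallyIntegrable_iff.1 ((hf s).locallyIntegrable one_le_two)) K hK).congr_fun
    (fun x hx ↦ ?_) hK.measurableSet
  simp [hs x (hKR hx)]

/-! ### Translations of square integrable functions -/

/-- The translate `x ↦ f (h + x)` of a square integrable function. -/
def translateLp (h : 𝔼) (f : 𝓛) : 𝓛 :=
  DomAddAct.mk h +ᵥ f

lemma translateLp_zero (f : 𝓛) : translateLp 0 f = f := by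
  simp [translateLp]

lemma continuous_translateLp (f : 𝓛) : Continuous fun h : 𝔼 ↦ translateLp h f := by
  have : Fact ((2 : ℝ≥0∞) ≠ ⊤) := ⟨ENNReal.ofNat_ne_top⟩
  exact (DomAddAct.continuous_mk).vadd continuous_const

lemma inner_translateLp_toLp {f g : 𝔼 → ℝ} (hf : MemLp f 2) (hg : MemLp g 2) (h : 𝔼) :
    ⟪translateLp h (hf.toLp f), hg.toLp g⟫_ℝ = ∫ x, f (h + x) * g x :=
  inner_toLp_toLp (hf.comp_measurePreserving (measurePreserving_add_left volume h)) hg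

lemma inner_translateLp_left (f g : 𝓛) (h : 𝔼) :
    ⟪translateLp h f, g⟫_ℝ = ⟪f, translateLp (-h) g⟫_ℝ := by
  rw [← Lp.toLp_coeFn f (Lp.memLp f), ← Lp.toLp_coeFn g (Lp.memLp g), inner_translateLp_toLp,
    real_inner_comm, inner_translateLp_toLp,
    ← integral_add_left_eq_self (fun x ↦ g (-h + x) * f x) h]
  simp [mul_comm]

lemma inner_translateLp_testToLp (f : 𝓛) (χ : 𝒯) (h : 𝔼) :
    ⟪translateLp h f, testToLp χ⟫_ℝ =
      toDistribution f (reflectedTranslate (reflectedTranslate χ 0) h) := by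
  have hf := Lp.memLp f
  calc ⟪translateLp h f, testToLp χ⟫_ℝ = ∫ x, f (h + x) * χ x := by
        rw [← inner_translateLp_toLp hf (memLp_testFunction χ 2), Lp.toLp_coeFn]
        rfl
    _ = ∫ x, f x * χ (x - h) := by
        rw [← integral_add_left_eq_self (fun x ↦ f x * χ (x - h)) h]
        simp
    _ = toDistribution f (reflectedTranslate (reflectedTranslate χ 0) h) := by
        rw [toDistribution_apply (hf.locallyIntegrable one_le_two)]
        refine integral_congr_ae (.of_forall fun x ↦ ?_)
        change f x * χ (x - h) = f x * χ (0 - (h - x))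
        simp

lemma norm_le_of_abs_inner_testToLp_le (f : 𝓛) {C : ℝ} (hC : 0 ≤ C)
    (hf : ∀ χ : 𝒯, |⟪f, testToLp χ⟫_ℝ| ≤ C * ‖testToLp χ‖) : ‖f‖ ≤ C := by
  obtain ⟨g, hg, hfg⟩ := exists_inner_eq_of_abs_le testToLp
    ((innerSL ℝ f).toLinearMap ∘ₗ testToLp) hC hf
  suffices f = g by rwa [this]
  refine Lp.ext (ae_eq_of_toDistribution_eq ((Lp.memLp f).locallyIntegrable one_le_two)
    ((Lp.memLp g).locallyIntegrable one_le_two) ?_)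
  ext χ
  rw [← inner_coe_testToLp, ← inner_coe_testToLp]
  exact hfg χ

lemma contDiff_inner_translateLp_testToLp (f : 𝓛) (χ : 𝒯) :
    ContDiff ℝ 1 fun h : 𝔼 ↦ ⟪translateLp h f, testToLp χ⟫_ℝ := by
  have hf := (Lp.memLp f).locallyIntegrable one_le_two
  simp only [inner_translateLp_testToLp, toDistribution_reflectedTranslate hf]
  exact (contDiff_convolution_testFunction hf _).of_le (by norm_cast)

lemma fderiv_inner_translateLp_testToLp (f : 𝓛) (χ : 𝒯) (h v : 𝔼) :
    fderiv ℝ (fun h : 𝔼 ↦ ⟪translateLp h f, testToLp χ⟫_ℝ) h v =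
      (∂_{v} (toDistribution f)) (reflectedTranslate (reflectedTranslate χ 0) h) := by
  have hf := (Lp.memLp f).locallyIntegrable one_le_two
  simp only [inner_translateLp_testToLp, toDistribution_reflectedTranslate hf]
  change fderiv ℝ (f ⋆ _) h v = _
  rw [fderiv_convolution_testFunction hf, lineDerivOp_apply_reflectedTranslate,
    toDistribution_reflectedTranslate hf]

lemma sum_fderiv_inner_translateLp_testToLp {κ : Type*} [Fintype κ] {v : κ → 𝔼} {f : κ → 𝓛} {F : 𝓛}
    (hF : ∑ k, ∂_{v k} (toDistribution (f k)) = toDistribution F) (χ : 𝒯) (h : 𝔼) :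
    ∑ k, fderiv ℝ (fun h : 𝔼 ↦ ⟪translateLp h (f k), testToLp χ⟫_ℝ) h (v k) =
      ⟪translateLp h F, testToLp χ⟫_ℝ := by
  rw [inner_translateLp_testToLp, ← hF, sum_apply]
  simp only [fderiv_inner_translateLp_testToLp]

/-- The linear map `w ↦ ∑ₖ wₖ Gₖ`, the differential of `h ↦ f (h + ·)` when `G = ∇f`. -/
def gradientMap (G : ι → 𝓛) : 𝔼 →L[ℝ] 𝓛 :=
  ∑ k, (EuclideanSpace.proj k : 𝔼 →L[ℝ] ℝ).smulRight (G k)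

lemma gradientMap_apply (G : ι → 𝓛) (w : 𝔼) : gradientMap G w = ∑ k, w k • G k := by
  simp [gradientMap, sum_apply]

lemma fderiv_inner_translateLp_eq_inner_gradientMap {f : 𝓛} {G : ι → 𝓛}
    (hG : ∀ k, ∂_{𝐞 k} (toDistribution f) = toDistribution (G k)) (χ : 𝒯) (x w : 𝔼) :
    fderiv ℝ (fun h : 𝔼 ↦ ⟪translateLp h f, testToLp χ⟫_ℝ) x w =
      ⟪gradientMap (fun k ↦ translateLp x (G k)) w, testToLp χ⟫_ℝ := by
  conv_lhs => rw [← (𝐞).sum_repr w]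
  simp only [map_sum, map_smul, fderiv_inner_translateLp_testToLp, hG, gradientMap_apply, sum_inner,
    real_inner_smul_left, EuclideanSpace.basisFun_repr, smul_eq_mul, ← inner_translateLp_testToLp]

lemma norm_gradientMap_le (G : ι → 𝓛) (w : 𝔼) : ‖gradientMap G w‖ ≤ (∑ k, ‖G k‖) * ‖w‖ := by
  rw [gradientMap_apply, mul_comm, Finset.mul_sum]
  refine norm_sum_le_of_le _ fun k _ ↦ ?_
  rw [norm_smul]
  gcongr
  exact PiLp.norm_apply_le w k

lemma norm_translateLp_sub_sub_gradientMap_le {f : 𝓛} {G : ι → 𝓛}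
    (hG : ∀ k, ∂_{𝐞 k} (toDistribution f) = toDistribution (G k)) {C δ : ℝ} (hC : 0 ≤ C)
    (hδ : ∀ x ∈ ball (0 : 𝔼) δ, ∑ k, ‖translateLp x (G k) - G k‖ ≤ C) {h : 𝔼}
    (hh : h ∈ ball (0 : 𝔼) δ) : ‖translateLp h f - f - gradientMap G h‖ ≤ C * ‖h‖ := by
  refine norm_le_of_abs_inner_testToLp_le _ (by positivity) fun χ ↦ ?_
  let c : 𝔼 → ℝ := fun x ↦ ⟪translateLp x f, testToLp χ⟫_ℝ
  let ℓ : 𝔼 →L[ℝ] ℝ := (innerSL ℝ (testToLp χ)).comp (gradientMap G)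
  have hc (x : 𝔼) : HasFDerivAt (fun x ↦ c x - ℓ x) (fderiv ℝ c x - ℓ) x :=
    (((contDiff_inner_translateLp_testToLp f χ).differentiable one_ne_zero x).hasFDerivAt).sub
      ℓ.hasFDerivAt
  have hbound : ∀ x ∈ ball (0 : 𝔼) δ, ‖fderiv ℝ c x - ℓ‖ ≤ C * ‖testToLp χ‖ := by
    refine fun x hx ↦ ContinuousLinearMap.opNorm_le_bound _ (by positivity) fun w ↦ ?_
    calc ‖(fderiv ℝ c x - ℓ) w‖
        = |⟪gradientMap (fun k ↦ translateLp x (G k) - G k) w, testToLp χ⟫_ℝ| := by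
          rw [sub_apply, fderiv_inner_translateLp_eq_inner_gradientMap hG,
            ContinuousLinearMap.comp_apply, innerSL_apply_apply,
            real_inner_comm (gradientMap G w), ← inner_sub_left, Real.norm_eq_abs]
          simp only [gradientMap_apply, smul_sub, Finset.sum_sub_distrib]
      _ ≤ ‖gradientMap (fun k ↦ translateLp x (G k) - G k) w‖ * ‖testToLp χ‖ :=
          abs_real_inner_le_norm _ _
      _ ≤ C * ‖w‖ * ‖testToLp χ‖ := by
          gcongr
          exact (norm_gradientMap_le _ w).trans (by gcongr; exact hδ x hx)
      _ = C * ‖testToLp χ‖ * ‖w‖ := mul_right_comm _ _ _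
  have hmvt := (convex_ball (0 : 𝔼) δ).norm_image_sub_le_of_norm_hasFDerivWithin_le
    (fun x _ ↦ (hc x).hasFDerivWithinAt) hbound (mem_ball_self (pos_of_mem_ball hh)) hh
  calc |⟪translateLp h f - f - gradientMap G h, testToLp χ⟫_ℝ| = ‖c h - ℓ h - (c 0 - ℓ 0)‖ := by
        simp [c, ℓ, translateLp_zero, inner_sub_left, real_inner_comm, sub_right_comm]
    _ ≤ C * ‖testToLp χ‖ * ‖h - 0‖ := hmvt
    _ = C * ‖h‖ * ‖testToLp χ‖ := by rw [sub_zero, mul_right_comm]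

lemma hasFDerivAt_translateLp_zero {f : 𝓛} {G : ι → 𝓛}
    (hG : ∀ k, ∂_{𝐞 k} (toDistribution f) = toDistribution (G k)) :
    HasFDerivAt (fun h : 𝔼 ↦ translateLp h f) (gradientMap G) 0 := by
  have hr : Tendsto (fun x : 𝔼 ↦ ∑ k, ‖translateLp x (G k) - G k‖) (𝓝 0) (𝓝 0) := by
    have : Continuous fun x : 𝔼 ↦ ∑ k, ‖translateLp x (G k) - G k‖ :=
      continuous_finsetSum _ fun k _ ↦ ((continuous_translateLp (G k)).sub continuous_const).norm
    simpa [translateLp_zero] using this.tendsto 0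
  refine .of_isLittleO (Asymptotics.isLittleO_iff.2 fun ε hε ↦ ?_)
  obtain ⟨δ, hδ, hball⟩ := Metric.eventually_nhds_iff_ball.1 (hr.eventually (ge_mem_nhds hε))
  filter_upwards [ball_mem_nhds 0 hδ] with h hh
  simpa [translateLp_zero] using norm_translateLp_sub_sub_gradientMap_le hG hε.le hball hh

lemma locallyIntegrable_inner_translateLp (φ f : 𝓛) :
    LocallyIntegrable fun h : 𝔼 ↦ ⟪φ, translateLp h f⟫_ℝ :=
  (continuous_const.inner (continuous_translateLp f)).locallyIntegrable

lemma integrable_testFunction_smul_translateLp (j : 𝒯) (f : 𝓛) :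
    Integrable fun h : 𝔼 ↦ j h • translateLp h f :=
  (j.continuous.smul (continuous_translateLp f)).integrable_of_hasCompactSupport
    j.hasCompactSupport.smul_right

lemma toDistribution_inner_translateLp (φ f : 𝓛) (j : 𝒯) :
    toDistribution (fun h : 𝔼 ↦ ⟪φ, translateLp h f⟫_ℝ) j = ⟪φ, ∫ h, j h • translateLp h f⟫_ℝ := by
  rw [toDistribution_apply (locallyIntegrable_inner_translateLp φ f),
    ← integral_inner (integrable_testFunction_smul_translateLp j f)]
  simp only [real_inner_smul_right, mul_comm]

lemma lineDerivOp_toDistribution_of_contDiff {f : 𝔼 → ℝ} (hf : ContDiff ℝ 1 f) (v : 𝔼) :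
    ∂_{v} (toDistribution f) = toDistribution fun x ↦ fderiv ℝ f x v := by
  ext χ
  rw [Distribution.lineDerivOp_apply_apply, map_neg,
    toDistribution_apply hf.continuous.locallyIntegrable,
    toDistribution_apply (continuous_fderiv_const_apply hf v).locallyIntegrable, neg_eq_iff_eq_neg]
  simp only [lineDerivOp_testFunction_apply]
  exact integral_mul_fderiv_eq_neg hf (χ.contDiff.of_le (by norm_cast)) χ.hasCompactSupport v

lemma sum_lineDerivOp_toDistribution_inner_translateLp {κ : Type*} [Fintype κ] {v : κ → 𝔼}
    {f : κ → 𝓛} {F : 𝓛} (hF : ∑ k, ∂_{v k} (toDistribution (f k)) = toDistribution F) (φ : 𝓛) :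
    ∑ k, ∂_{v k} (toDistribution fun h : 𝔼 ↦ ⟪φ, translateLp h (f k)⟫_ℝ) =
      toDistribution fun h : 𝔼 ↦ ⟪φ, translateLp h F⟫_ℝ := by
  have on_testFunctions (χ : 𝒯) :
      ∑ k, ∂_{v k} (toDistribution fun h : 𝔼 ↦ ⟪testToLp χ, translateLp h (f k)⟫_ℝ) =
        toDistribution fun h : 𝔼 ↦ ⟪testToLp χ, translateLp h F⟫_ℝ := by
    have hC (k : κ) := contDiff_inner_translateLp_testToLp (f k) χ
    simp only [real_inner_comm _ (testToLp χ), lineDerivOp_toDistribution_of_contDiff (hC _)]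
    rw [← toDistribution_sum _ fun k ↦
      (continuous_fderiv_const_apply (hC k) (v k)).locallyIntegrable]
    simp only [sum_fderiv_inner_translateLp_testToLp hF]
  ext j
  let X : 𝓛 := -∑ k, (∫ h, (∂_{v k} j) h • translateLp h (f k)) - ∫ h, j h • translateLp h F
  have inner_X (φ : 𝓛) : ⟪φ, X⟫_ℝ =
      (∑ k, ∂_{v k} (toDistribution fun h : 𝔼 ↦ ⟪φ, translateLp h (f k)⟫_ℝ)) j -
        toDistribution (fun h : 𝔼 ↦ ⟪φ, translateLp h F⟫_ℝ) j := by
    simp only [X, inner_sub_right, inner_neg_right, inner_sum, sum_apply, map_neg,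
      Distribution.lineDerivOp_apply_apply, toDistribution_inner_translateLp,
      Finset.sum_neg_distrib]
  have hX : X = 0 := by
    refine norm_le_zero_iff.1 (norm_le_of_abs_inner_testToLp_le X le_rfl fun χ ↦ ?_)
    rw [real_inner_comm, inner_X, on_testFunctions]
    simp
  rw [← sub_eq_zero, ← inner_X, hX, inner_zero_right]

lemma toDistribution_comp_neg {f : 𝔼 → ℝ} (hf : Continuous f) (χ : 𝒯) :
    toDistribution (fun x ↦ f (-x)) χ = toDistribution f (reflectedTranslate χ 0) := by
  have hf_neg : Continuous fun x ↦ f (-x) := hf.comp continuous_neg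
  rw [toDistribution_apply hf_neg.locallyIntegrable,
    toDistribution_apply hf.locallyIntegrable, ← integral_neg_eq_self]
  refine integral_congr_ae (.of_forall fun x ↦ ?_)
  change f (- -x) * χ (-x) = f x * χ (0 - x)
  simp

lemma lineDerivOp_toDistribution_comp_neg {f : 𝔼 → ℝ} (hf : Continuous f) (v : 𝔼) (χ : 𝒯) :
    (∂_{v} (toDistribution fun x ↦ f (-x))) χ =
      -(∂_{v} (toDistribution f)) (reflectedTranslate χ 0) := by
  rw [Distribution.lineDerivOp_apply_apply, map_neg, toDistribution_comp_neg hf,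
    Distribution.lineDerivOp_apply_apply, lineDerivOp_reflectedTranslate, neg_neg]

lemma sum_lineDerivOp_toDistribution_inner_translateLp_left {κ : Type*} [Fintype κ] {v : κ → 𝔼}
    {f : κ → 𝓛} {F : 𝓛} (hF : ∑ k, ∂_{v k} (toDistribution (f k)) = toDistribution F) (φ : 𝓛) :
    ∑ k, ∂_{v k} (toDistribution fun h : 𝔼 ↦ ⟪f k, translateLp h φ⟫_ℝ) =
      -toDistribution fun h : 𝔼 ↦ ⟪F, translateLp h φ⟫_ℝ := by
  have hcont (g : 𝓛) : Continuous fun h : 𝔼 ↦ ⟪φ, translateLp h g⟫_ℝ :=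
    continuous_const.inner (continuous_translateLp g)
  have reflect (g : 𝓛) :
      (fun h : 𝔼 ↦ ⟪g, translateLp h φ⟫_ℝ) = fun h ↦ ⟪φ, translateLp (-h) g⟫_ℝ := by
    funext h
    rw [real_inner_comm, inner_translateLp_left]
  ext χ
  simp only [reflect, sum_apply, neg_apply, toDistribution_comp_neg (hcont F),
    lineDerivOp_toDistribution_comp_neg (hcont _), Finset.sum_neg_distrib,
    ← sum_lineDerivOp_toDistribution_inner_translateLp hF]

lemma eventually_norm_comp_smul_sub_mul_le {N : 𝔼 → ℝ} {L : 𝔼 →L[ℝ] ℝ}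
    (hL : HasFDerivAt N L 0) (χ : 𝒯) :
    ∃ C, ∀ᶠ t : ℝ in 𝓝 0, ∀ y, ‖(N (t • y) - N 0) * χ y‖ ≤ ‖t‖ * (C * ‖y‖ * ‖χ y‖) := by
  obtain ⟨C, hC⟩ := hL.isBigO_sub.bound
  obtain ⟨δ, hδ, hball⟩ := Metric.eventually_nhds_iff_ball.1 hC
  obtain ⟨R, hR, hχR⟩ := χ.hasCompactSupport.isBounded.subset_ball_lt 0 0
  refine ⟨C, ?_⟩
  filter_upwards [ball_mem_nhds (0 : ℝ) (div_pos hδ hR)] with t ht y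
  by_cases hy : y ∈ tsupport χ
  · have hyR : ‖y‖ < R := mem_ball_zero_iff.1 (hχR hy)
    have hty : t • y ∈ ball (0 : 𝔼) δ := by
      rw [mem_ball_zero_iff, norm_smul]
      calc ‖t‖ * ‖y‖ ≤ ‖t‖ * R := by gcongr
        _ < δ := (lt_div_iff₀ hR).1 (mem_ball_zero_iff.1 ht)
    calc ‖(N (t • y) - N 0) * χ y‖ = ‖N (t • y) - N 0‖ * ‖χ y‖ := norm_mul _ _
      _ ≤ C * ‖t • y - 0‖ * ‖χ y‖ := by gcongr; exact hball _ hty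
      _ = ‖t‖ * (C * ‖y‖ * ‖χ y‖) := by rw [sub_zero, norm_smul]; ring
  · simp [image_eq_zero_of_notMem_tsupport hy]

lemma hasDerivAt_integral_comp_smul_mul_zero {N : 𝔼 → ℝ} {L : 𝔼 →L[ℝ] ℝ} (hN : Continuous N)
    (hL : HasFDerivAt N L 0) (χ : 𝒯) :
    HasDerivAt (fun t : ℝ ↦ ∫ y, N (t • y) * χ y) (∫ y, L y * χ y) 0 := by
  have hdil (t : ℝ) : Continuous fun y : 𝔼 ↦ N (t • y) := hN.comp (continuous_const_smul t)
  have hslope (t : ℝ) : t⁻¹ • ((∫ y, N ((0 + t) • y) * χ y) - ∫ y, N ((0 : ℝ) • y) * χ y) =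
      ∫ y, t⁻¹ * ((N (t • y) - N 0) * χ y) := by
    simp only [zero_add, zero_smul]
    rw [← integral_sub (integrable_mul_testFunction (hdil t).locallyIntegrable χ)
      (integrable_mul_testFunction continuous_const.locallyIntegrable χ), smul_eq_mul,
      ← integral_const_mul]
    simp only [sub_mul]
  obtain ⟨C, hC⟩ := eventually_norm_comp_smul_sub_mul_le hL χ
  refine hasDerivAt_iff_tendsto_slope_zero.2 ?_
  simp only [hslope]
  refine tendsto_integral_filter_of_dominated_convergence (fun y ↦ C * ‖y‖ * ‖χ y‖)
    (.of_forall fun t ↦ (continuous_const.mul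
      (((hdil t).sub continuous_const).mul χ.continuous)).aestronglyMeasurable)
    ?_ (((continuous_const.mul continuous_norm).mul
      χ.continuous.norm).integrable_of_hasCompactSupport χ.hasCompactSupport.norm.mul_left) ?_
  · filter_upwards [hC.filter_mono nhdsWithin_le_nhds, self_mem_nhdsWithin] with t ht ht0
    refine .of_forall fun y ↦ ?_
    rw [norm_mul, norm_inv]
    exact (inv_mul_le_iff₀ (norm_pos_iff.2 ht0)).2 (ht y)
  · refine .of_forall fun y ↦ ?_
    have hsmul : HasDerivAt (fun t : ℝ ↦ t • y) y 0 := by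
      simpa using (hasDerivAt_id (0 : ℝ)).smul_const y
    have hNy := (HasFDerivAt.comp_hasDerivAt_of_eq 0 hL hsmul (zero_smul ℝ y).symm).mul_const (χ y)
    simpa [sub_mul] using hasDerivAt_iff_tendsto_slope_zero.1 hNy

lemma lineDerivOp_comp_smul {j j' : 𝒯} {t : ℝ} (hj : ∀ x, j' x = j (t • x)) (v x : 𝔼) :
    (∂_{v} j') x = t * (∂_{v} j) (t • x) := by
  simp only [lineDerivOp_testFunction_apply, funext hj, fderiv_comp_smul]
  simp

lemma integral_lineDerivOp_testFunction (j : 𝒯) (v : 𝔼) : ∫ y, (∂_{v} j) y = 0 := by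
  simpa [lineDerivOp_testFunction_apply] using integral_mul_fderiv_eq_neg
    (contDiff_const (c := (1 : ℝ))) (j.contDiff.of_le (by norm_cast)) j.hasCompactSupport v

lemma integral_comp_smul_mul_lineDerivOp {N : ι → 𝔼 → ℝ} {M : 𝔼 → ℝ} (hN : ∀ i, Continuous (N i))
    (hM : Continuous M) (h : ∑ i, ∂_{𝐞 i} (toDistribution (N i)) = toDistribution M) (j : 𝒯)
    (t : ℝ) : -∑ i, ∫ y, N i (t • y) * (∂_{𝐞 i} j) y = t * ∫ y, M (t • y) * j y := by
  rcases eq_or_ne t 0 with rfl | ht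
  · simp [integral_const_mul, integral_lineDerivOp_testFunction]
  have change_variables (f g : 𝔼 → ℝ) :
      ∫ x, f x * g (t⁻¹ • x) = |t ^ Module.finrank ℝ 𝔼| * ∫ y, f (t • y) * g y := by
    rw [← smul_eq_mul |t ^ _|, ← Measure.integral_comp_inv_smul]
    simp [smul_inv_smul₀ ht]
  let jt : 𝒯 := ⟨fun x ↦ j (t⁻¹ • x), j.contDiff.comp (contDiff_const_smul _),
    j.hasCompactSupport.comp_homeomorph (Homeomorph.smulOfNeZero t⁻¹ (inv_ne_zero ht)),
    subset_univ _⟩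
  have hderiv (i : ι) : (∂_{𝐞 i} (toDistribution (N i))) jt =
      |t ^ Module.finrank ℝ 𝔼| * (t⁻¹ * -∫ y, N i (t • y) * (∂_{𝐞 i} j) y) := by
    rw [Distribution.lineDerivOp_apply_apply, map_neg,
      toDistribution_apply (hN i).locallyIntegrable]
    simp only [lineDerivOp_comp_smul (j' := jt) (j := j) (t := t⁻¹) fun _ ↦ rfl,
      mul_left_comm _ t⁻¹, integral_const_mul, change_variables]
    ring
  have htested : |t ^ Module.finrank ℝ 𝔼| * (t⁻¹ * -∑ i, ∫ y, N i (t • y) * (∂_{𝐞 i} j) y) =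
      |t ^ Module.finrank ℝ 𝔼| * ∫ y, M (t • y) * j y := by
    rw [← change_variables, ← Finset.sum_neg_distrib, Finset.mul_sum, Finset.mul_sum]
    simp only [← hderiv, ← sum_apply, h]
    exact toDistribution_apply hM.locallyIntegrable jt
  rw [← mul_left_cancel₀ (abs_pos.2 (pow_ne_zero _ ht)).ne' htested, mul_inv_cancel_left₀ ht]

lemma hasDerivAt_mul_integral_comp_smul_mul_zero {M : 𝔼 → ℝ} (hM : Continuous M) (j : 𝒯) :
    HasDerivAt (fun t : ℝ ↦ t * ∫ y, M (t • y) * j y) (M 0 * ∫ y, j y) 0 := by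
  have hcont : Continuous fun t : ℝ ↦ ∫ y, M (t • y) * j y := by
    have hsupp (t : ℝ) : ∫ y, M (t • y) * j y = ∫ y in tsupport j, M (t • y) * j y :=
      (setIntegral_eq_integral_of_forall_compl_eq_zero fun y hy ↦ by
        simp [image_eq_zero_of_notMem_tsupport hy]).symm
    simp only [hsupp]
    exact continuous_parametric_integral_of_continuous ((hM.comp continuous_smul).mul
      (j.continuous.comp continuous_snd)) j.hasCompactSupport
  have hlim : Tendsto (fun t : ℝ ↦ ∫ y, M (t • y) * j y) (𝓝[≠] 0) (𝓝 (M 0 * ∫ y, j y)) := by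
    simpa [integral_const_mul] using (hcont.tendsto 0).mono_left nhdsWithin_le_nhds
  refine hasDerivAt_iff_tendsto_slope_zero.2 (hlim.congr' ?_)
  filter_upwards [self_mem_nhdsWithin] with t ht
  simp [inv_mul_cancel_left₀ ht]

lemma exists_testFunction_integral_ne_zero : ∃ j : 𝒯, ∫ y, j y ≠ 0 := by
  let b : ContDiffBump (0 : 𝔼) := ⟨1, 2, one_pos, one_lt_two⟩
  exact ⟨⟨b, b.contDiff, b.hasCompactSupport, subset_univ _⟩, b.integral_pos.ne'⟩

lemma apply_zero_eq_sum_of_hasFDerivAt {N : ι → 𝔼 → ℝ} {M : 𝔼 → ℝ} {L : ι → 𝔼 →L[ℝ] ℝ}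
    (hN : ∀ i, Continuous (N i)) (hM : Continuous M)
    (h : ∑ i, ∂_{𝐞 i} (toDistribution (N i)) = toDistribution M)
    (hL : ∀ i, HasFDerivAt (N i) (L i) 0) : M 0 = ∑ i, L i (𝐞 i) := by
  obtain ⟨j, hj⟩ := exists_testFunction_integral_ne_zero (ι := ι)
  have hderiv_left : HasDerivAt (fun t : ℝ ↦ -∑ i, ∫ y, N i (t • y) * (∂_{𝐞 i} j) y)
      (-∑ i, ∫ y, L i y * (∂_{𝐞 i} j) y) 0 :=
    (HasDerivAt.fun_sum fun i _ ↦
      hasDerivAt_integral_comp_smul_mul_zero (hN i) (hL i) (∂_{𝐞 i} j)).neg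
  have hderiv_right : HasDerivAt (fun t : ℝ ↦ t * ∫ y, M (t • y) * j y) (M 0 * ∫ y, j y) 0 :=
    hasDerivAt_mul_integral_comp_smul_mul_zero hM j
  simp only [integral_comp_smul_mul_lineDerivOp hN hM h] at hderiv_left
  refine mul_right_cancel₀ hj ?_
  rw [hderiv_right.unique hderiv_left, Finset.sum_mul, ← Finset.sum_neg_distrib]
  refine Finset.sum_congr rfl fun i _ ↦ ?_
  simp only [lineDerivOp_testFunction_apply]
  rw [integral_mul_fderiv_eq_neg (L i).contDiff (j.contDiff.of_le (by norm_cast))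
    j.hasCompactSupport (𝐞 i)]
  simp [integral_const_mul]

/-! ### Product rule for transported quantities -/

lemma toDistribution_toLp {f : 𝔼 → ℝ} (hf : MemLp f 2) :
    toDistribution (hf.toLp f) = toDistribution f :=
  (toDistribution_congr (hf.locallyIntegrable one_le_two) hf.coeFn_toLp.symm).symm

/-- Multiplication of square integrable functions by an essentially bounded function. -/
def mulLp (b : Lp ℝ ⊤ (volume : Measure 𝔼)) : 𝓛 →L[ℝ] 𝓛 :=
  (ContinuousLinearMap.mul ℝ ℝ).holderL volume ⊤ 2 2 b

lemma mulLp_toLp {b f : 𝔼 → ℝ} (hb : MemLp b ⊤) (hf : MemLp f 2) :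
    mulLp (hb.toLp b) (hf.toLp f) = (hf.mul' hb).toLp fun x ↦ b x * f x := by
  refine Lp.ext ?_
  filter_upwards [(ContinuousLinearMap.mul ℝ ℝ).coeFn_holder (r := 2) (hb.toLp b) (hf.toLp f),
    hb.coeFn_toLp, hf.coeFn_toLp, (hf.mul' hb : MemLp _ 2 _).coeFn_toLp] with x hmul hbx hfx hbfx
  rw [hbfx]
  exact hmul.trans (by rw [hbx, hfx]; rfl)

lemma hasFDerivAt_inner_of_eq_zero {E H : Type*} [NormedAddCommGroup E] [NormedSpace ℝ E]
    [NormedAddCommGroup H] [InnerProductSpace ℝ H] {P Q : E → H} {Q' : E →L[ℝ] H} {x : E}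
    (hP : ContinuousAt P x) (hQ : HasFDerivAt Q Q' x) (hQx : Q x = 0) :
    HasFDerivAt (fun y ↦ ⟪P y, Q y⟫_ℝ) ((innerSL ℝ (P x)).comp Q') x := by
  have main : HasFDerivAt (fun y ↦ ⟪P x, Q y⟫_ℝ) ((innerSL ℝ (P x)).comp Q') x :=
    (innerSL ℝ (P x)).hasFDerivAt.comp x hQ
  have hremainder : HasFDerivAt (fun y ↦ ⟪P y - P x, Q y⟫_ℝ) (0 : E →L[ℝ] ℝ) x := by
    refine .of_isLittleO ?_
    have hQ_bigO : Q =O[𝓝 x] fun y ↦ y - x := by simpa [hQx] using hQ.isBigO_sub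
    have hP_littleO : (fun y ↦ P y - P x) =o[𝓝 x] fun _ ↦ (1 : ℝ) :=
      (Asymptotics.isLittleO_one_iff ℝ).2 (by simpa using hP.sub_const (P x))
    have hprod := hP_littleO.norm_left.mul_isBigO hQ_bigO.norm_norm
    simp only [one_mul] at hprod
    refine .of_norm_right ((Asymptotics.isBigO_of_le _ fun y ↦ ?_).trans_isLittleO hprod)
    simpa [hQx] using abs_real_inner_le_norm (P y - P x) (Q y)
  simpa [inner_sub_left] using main.fun_add hremainder

lemma hasFDerivAt_inner_translateLp_sub {a b v : 𝔼 → ℝ} {G : ι → 𝓛} (ha : MemLp a 2)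
    (hb : MemLp b 2) (hb' : MemLp b ⊤) (hv : MemLp v 2) (hav : MemLp (fun x ↦ a x * v x) 2)
    (hbv : MemLp (fun x ↦ b x * v x) 2)
    (hG : ∀ k, ∂_{𝐞 k} (toDistribution v) = toDistribution (G k)) :
    HasFDerivAt (fun h : 𝔼 ↦ ⟪hb.toLp b, translateLp h (hav.toLp fun x ↦ a x * v x)⟫_ℝ -
        ⟪hbv.toLp fun x ↦ b x * v x, translateLp h (ha.toLp a)⟫_ℝ)
      ((innerSL ℝ ((ha.mul' hb').toLp fun x ↦ b x * a x)).comp (gradientMap G)) 0 := by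
  have translate_toLp {f : 𝔼 → ℝ} (hf : MemLp f 2) (h : 𝔼) : translateLp h (hf.toLp f) =
    (hf.comp_measurePreserving (measurePreserving_add_left volume h)).toLp fun x ↦ f (h + x) := rfl
  have eq_inner (h : 𝔼) : ⟪hb.toLp b, translateLp h (hav.toLp fun x ↦ a x * v x)⟫_ℝ -
      ⟪hbv.toLp fun x ↦ b x * v x, translateLp h (ha.toLp a)⟫_ℝ =
      ⟪mulLp (hb'.toLp b) (translateLp h (ha.toLp a)),
        translateLp h (hv.toLp v) - hv.toLp v⟫_ℝ := by
    rw [inner_sub_right]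
    simp only [translate_toLp, mulLp_toLp, inner_toLp_toLp]
    congr! 3 <;> ring
  have hG_toLp (k : ι) : ∂_{𝐞 k} (toDistribution (hv.toLp v)) = toDistribution (G k) := by
    rw [toDistribution_toLp, hG]
  simp only [eq_inner]
  have hderiv := hasFDerivAt_inner_of_eq_zero
    (((mulLp (hb'.toLp b)).continuous.comp (continuous_translateLp (ha.toLp a))).continuousAt)
    ((hasFDerivAt_translateLp_zero hG_toLp).sub_const (hv.toLp v)) (by simp [translateLp_zero])
  simpa [translateLp_zero, mulLp_toLp] using hderiv

lemma sum_lineDerivOp_toDistribution_inner_translateLp_sub {κ : Type*} [Fintype κ] {v : κ → 𝔼}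
    {f f' : κ → 𝓛} {F F' : 𝓛} (hF : ∑ k, ∂_{v k} (toDistribution (f k)) = toDistribution F)
    (hF' : ∑ k, ∂_{v k} (toDistribution (f' k)) = toDistribution F') (φ ψ : 𝓛) :
    ∑ k, ∂_{v k} (toDistribution fun h : 𝔼 ↦
        ⟪φ, translateLp h (f k)⟫_ℝ - ⟪f' k, translateLp h ψ⟫_ℝ) =
      toDistribution fun h : 𝔼 ↦ ⟪φ, translateLp h F⟫_ℝ + ⟪F', translateLp h ψ⟫_ℝ := by
  have hloc (φ f : 𝓛) := locallyIntegrable_inner_translateLp φ f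
  calc _ = ∑ k, ∂_{v k} (toDistribution fun h : 𝔼 ↦ ⟪φ, translateLp h (f k)⟫_ℝ) -
        ∑ k, ∂_{v k} (toDistribution fun h : 𝔼 ↦ ⟪f' k, translateLp h ψ⟫_ℝ) := by
        rw [← Finset.sum_sub_distrib]
        refine Finset.sum_congr rfl fun k _ ↦ ?_
        rw [← lineDerivOp_distribution_sub, ← toDistribution_sub (hloc _ _) (hloc _ _)]
        rfl
    _ = _ := by
        rw [sum_lineDerivOp_toDistribution_inner_translateLp hF,
          sum_lineDerivOp_toDistribution_inner_translateLp_left hF', sub_neg_eq_add,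
          ← toDistribution_add (hloc _ _) (hloc _ _)]
        rfl

lemma gradientMap_basisFun (G : ι → 𝓛) (i : ι) : gradientMap G (𝐞 i) = G i := by
  classical
  simp [gradientMap_apply, PiLp.single_apply]

/- Differentiate the product in the form `∑ᵢ ∂ᵢNᵢ` with
`Nᵢ h = ∫ b x * a (h + x) * (vᵢ (h + x) - vᵢ x)`, which is differentiable at `h = 0` because the
increment of `vᵢ` is, although `a` and `b` are not differentiable. -/
lemma integral_mul_add_integral_mul_of_sum_lineDerivOp {a b A B : 𝔼 → ℝ} {v : ι → 𝔼 → ℝ}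
    {g : ι → ι → 𝔼 → ℝ} (ha : MemLp a 2) (ha' : MemLp a ⊤) (hb : MemLp b 2) (hb' : MemLp b ⊤)
    (hv : ∀ i, MemLp (v i) 2) (hA : MemLp A 2) (hB : MemLp B 2) (hg : ∀ i k, MemLp (g i k) 2)
    (hvg : ∀ i k, ∂_{𝐞 k} (toDistribution (v i)) = toDistribution (g i k))
    (hav : ∑ i, ∂_{𝐞 i} (toDistribution fun x ↦ a x * v i x) = toDistribution A)
    (hbv : ∑ i, ∂_{𝐞 i} (toDistribution fun x ↦ b x * v i x) = toDistribution B) :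
    (∫ x, b x * A x) + ∫ x, B x * a x = ∑ i, ∫ x, b x * a x * g i i x := by
  have hav_mem (i : ι) : MemLp (fun x ↦ a x * v i x) 2 := (hv i).mul' ha'
  have hbv_mem (i : ι) : MemLp (fun x ↦ b x * v i x) 2 := (hv i).mul' hb'
  have hcont (φ f : 𝓛) : Continuous fun h : 𝔼 ↦ ⟪φ, translateLp h f⟫_ℝ :=
    continuous_const.inner (continuous_translateLp f)
  have key := apply_zero_eq_sum_of_hasFDerivAt
    (fun i ↦ (hcont (hb.toLp b) ((hav_mem i).toLp _)).sub
      (hcont ((hbv_mem i).toLp _) (ha.toLp a)))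
    ((hcont (hb.toLp b) (hA.toLp A)).add (hcont (hB.toLp B) (ha.toLp a)))
    (sum_lineDerivOp_toDistribution_inner_translateLp_sub
      (by simpa only [toDistribution_toLp] using hav)
      (by simpa only [toDistribution_toLp] using hbv) _ _)
    (fun i ↦ hasFDerivAt_inner_translateLp_sub ha hb hb' (hv i) (hav_mem i) (hbv_mem i)
      (G := fun k ↦ (hg i k).toLp (g i k)) fun k ↦ by rw [toDistribution_toLp, hvg])
  simpa only [Pi.add_apply, translateLp_zero, inner_toLp_toLp, gradientMap_basisFun,
    innerSL_apply_apply, ContinuousLinearMap.comp_apply] using key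

lemma exists_testFunction_mul_eq_self (χ : 𝒯) : ∃ s : 𝒯, (∀ x, χ x * s x = χ x) ∧
    (∀ v x : 𝔼, (∂_{v} χ) x * s x = (∂_{v} χ) x) ∧ ∀ v x : 𝔼, χ x * (∂_{v} s) x = 0 := by
  obtain ⟨R, hχR⟩ := χ.hasCompactSupport.isBounded.subset_ball 0
  obtain ⟨s, hs⟩ := exists_testFunction_eq_one (ι := ι) R
  have mul_eq {f : 𝔼 → ℝ} (hf : tsupport f ⊆ tsupport χ) (x : 𝔼) : f x * s x = f x := by
    by_cases hx : x ∈ tsupport f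
    · rw [hs x (hχR (hf hx)), mul_one]
    · rw [image_eq_zero_of_notMem_tsupport hx, zero_mul]
  have hderiv (v x : 𝔼) : (∂_{v} χ) x * s x = (∂_{v} χ) x := by
    simpa only [lineDerivOp_testFunction_apply] using
      mul_eq (tsupport_fderiv_apply_subset ℝ v) x
  refine ⟨s, mul_eq subset_rfl, hderiv, fun v x ↦ ?_⟩
  have hχs : mulTest χ s = χ := TestFunction.ext (mul_eq subset_rfl)
  have hleibniz := DFunLike.congr_fun (lineDerivOp_mulTest χ s v) x
  rw [hχs] at hleibniz
  change (∂_{v} χ) x = (∂_{v} χ) x * s x + χ x * (∂_{v} s) x at hleibniz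
  linarith [hderiv v x]

lemma sum_lineDerivOp_toDistribution_localize {a A : 𝔼 → ℝ} {v : ι → 𝔼 → ℝ}
    (hav : ∀ i, LocallyIntegrable fun x ↦ a x * v i x) (hA : LocallyIntegrable A)
    (h : ∑ i, ∂_{𝐞 i} (toDistribution fun x ↦ a x * v i x) = toDistribution A) {χ s : 𝒯}
    (hs : ∀ x, χ x * s x = χ x) :
    ∑ i, ∂_{𝐞 i} (toDistribution fun x ↦ χ x * a x * (s x * v i x)) =
      toDistribution fun x ↦ χ x * A x + ∑ i, (∂_{𝐞 i} χ) x * (a x * v i x) := by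
  rw [← sum_lineDerivOp_toDistribution_testFunction_mul hav hA h]
  refine Finset.sum_congr rfl fun i _ ↦ ?_
  congr! 3 with x
  linear_combination (a x * v i x) * hs x

lemma integral_mul_localize_left {a b A : 𝔼 → ℝ} (v : ι → 𝔼 → ℝ)
    (hbA : LocallyIntegrable fun x ↦ b x * A x) {χ s : 𝒯} (hχs : ∀ x, χ x * s x = χ x)
    (hχds : ∀ v x : 𝔼, χ x * (∂_{v} s) x = 0) :
    ∫ x, χ x * b x * (s x * A x + ∑ i, (∂_{𝐞 i} s) x * (a x * v i x)) =
      toDistribution (fun x ↦ b x * A x) χ := by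
  rw [toDistribution_apply hbA]
  refine integral_congr_ae (.of_forall fun x ↦ ?_)
  have hsum : χ x * ∑ i, (∂_{𝐞 i} s) x * (a x * v i x) = 0 := by
    simp only [Finset.mul_sum, ← mul_assoc, hχds, zero_mul, Finset.sum_const_zero]
  linear_combination b x * hsum + b x * A x * hχs x

lemma integral_localize_mul_right {a b B : 𝔼 → ℝ} {v : ι → 𝔼 → ℝ}
    (haB : LocallyIntegrable fun x ↦ a x * B x)
    (habv : ∀ i, LocallyIntegrable fun x ↦ a x * b x * v i x) {χ s : 𝒯}
    (hχs : ∀ x, χ x * s x = χ x) (hdχs : ∀ v x : 𝔼, (∂_{v} χ) x * s x = (∂_{v} χ) x) :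
    ∫ x, (χ x * B x + ∑ i, (∂_{𝐞 i} χ) x * (b x * v i x)) * (s x * a x) =
      toDistribution (fun x ↦ a x * B x) χ -
        (∑ i, ∂_{𝐞 i} (toDistribution fun x ↦ a x * b x * v i x)) χ := by
  have hint (i : ι) := integrable_mul_testFunction (habv i) (∂_{𝐞 i} χ)
  calc ∫ x, (χ x * B x + ∑ i, (∂_{𝐞 i} χ) x * (b x * v i x)) * (s x * a x)
      = ∫ x, (a x * B x * χ x + ∑ i, a x * b x * v i x * (∂_{𝐞 i} χ) x) := by
        refine integral_congr_ae (.of_forall fun x ↦ ?_)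
        simp only [add_mul, Finset.sum_mul]
        congr 1
        · linear_combination a x * B x * hχs x
        · exact Finset.sum_congr rfl fun i _ ↦ by
            linear_combination a x * b x * v i x * hdχs (𝐞 i) x
    _ = toDistribution (fun x ↦ a x * B x) χ -
          (∑ i, ∂_{𝐞 i} (toDistribution fun x ↦ a x * b x * v i x)) χ := by
        rw [integral_add (integrable_mul_testFunction haB χ)
            (integrable_finsetSum _ fun i _ ↦ hint i), integral_finsetSum _ fun i _ ↦ hint i,
          ← toDistribution_apply haB, sum_apply, sub_eq_add_neg, ← Finset.sum_neg_distrib]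
        congr! 2 with i
        rw [Distribution.lineDerivOp_apply_apply, map_neg, neg_neg, toDistribution_apply (habv i)]

lemma sum_integral_mul_localize {c D : 𝔼 → ℝ} {v g : ι → 𝔼 → ℝ} (hc : MemLp c ⊤)
    (hv : ∀ i, MemLp (v i) ⊤) (hg : ∀ i, MemLp (g i) 2) (hD : LocallyL2 D) {χ r : 𝒯}
    (hvD : ∑ i, ∂_{𝐞 i} (toDistribution (v i)) = toDistribution D)
    (hvg : ∀ i, ∂_{𝐞 i} (toDistribution fun x ↦ r x * v i x) = toDistribution (g i))
    (hχr : ∀ x, χ x * r x = χ x) (hχdr : ∀ v x : 𝔼, χ x * (∂_{v} r) x = 0) :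
    ∑ i, ∫ x, c x * χ x * g i x = toDistribution (fun x ↦ c x * D x) χ := by
  have hv_loc (i : ι) : LocallyIntegrable (v i) := (hv i).locallyIntegrable le_top
  have hg_loc (i : ι) : LocallyIntegrable (g i) := (hg i).locallyIntegrable one_le_two
  have trace : ∀ᵐ x, ∑ i, g i x = r x * D x + ∑ i, (∂_{𝐞 i} r) x * v i x := by
    refine ae_eq_of_toDistribution_eq (locallyIntegrable_finsetSum _ fun i _ ↦ hg_loc i)
      ((locallyIntegrable_testFunction_mul hD.locallyIntegrable r).add
        (locallyIntegrable_finsetSum _ fun i _ ↦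
          locallyIntegrable_testFunction_mul (hv_loc i) _)) ?_
    rw [toDistribution_sum _ hg_loc]
    simp only [← hvg]
    exact sum_lineDerivOp_toDistribution_testFunction_mul hv_loc hD.locallyIntegrable hvD r
  have hint (i : ι) : Integrable fun x ↦ c x * χ x * g i x := by
    have hcχ : MemLp (fun x ↦ c x * χ x) 2 := (memLp_testFunction χ 2).mul' hc
    exact hcχ.integrable_mul (hg i)
  rw [← integral_finsetSum _ fun i _ ↦ hint i,
    toDistribution_apply (hD.bddMul hc).locallyIntegrable]
  refine integral_congr_ae ?_
  filter_upwards [trace] with x hx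
  have hsum : χ x * ∑ i, (∂_{𝐞 i} r) x * v i x = 0 := by
    simp only [Finset.mul_sum, ← mul_assoc, hχdr, zero_mul, Finset.sum_const_zero]
  rw [← Finset.mul_sum, hx]
  linear_combination c x * hsum + c x * D x * hχr x

lemma toDistribution_add_sub {f g h : 𝔼 → ℝ} (hf : LocallyIntegrable f) (hg : LocallyIntegrable g)
    (hh : LocallyIntegrable h) : toDistribution (fun x ↦ f x + g x - h x) =
      toDistribution f + toDistribution g - toDistribution h := by
  rw [← toDistribution_add hf hg, ← toDistribution_sub (hf.add hg) hh]
  rfl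

/- Near the support of the test function `χ` at which the identity is evaluated, `a`, `b` and `v`
may be replaced by the localizations `s a`, `χ b` and `r v`. -/
lemma sum_lineDerivOp_toDistribution_mul_mul {a b A B D : 𝔼 → ℝ} {v : ι → 𝔼 → ℝ}
    (ha : MemLp a ⊤) (hb : MemLp b ⊤) (hv : ∀ i, MemLp (v i) ⊤) (hA : LocallyL2 A)
    (hB : LocallyL2 B) (hD : LocallyL2 D)
    (hgrad : ∀ (s : 𝒯) i k, ∂_{𝐞 k} (toDistribution fun x ↦ s x * v i x) ∈ l2Distributions)
    (hvD : ∑ i, ∂_{𝐞 i} (toDistribution (v i)) = toDistribution D)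
    (hav : ∑ i, ∂_{𝐞 i} (toDistribution fun x ↦ a x * v i x) = toDistribution A)
    (hbv : ∑ i, ∂_{𝐞 i} (toDistribution fun x ↦ b x * v i x) = toDistribution B) :
    ∑ i, ∂_{𝐞 i} (toDistribution fun x ↦ a x * b x * v i x) =
      toDistribution fun x ↦ a x * B x + b x * A x - a x * b x * D x := by
  have hav_mem (i : ι) : MemLp (fun x ↦ a x * v i x) ⊤ := (hv i).mul' ha
  have hbv_mem (i : ι) : MemLp (fun x ↦ b x * v i x) ⊤ := (hv i).mul' hb
  have loc {f : 𝔼 → ℝ} (hf : MemLp f ⊤) : LocallyIntegrable f := hf.locallyIntegrable le_top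
  ext χ
  obtain ⟨s, hχs, hdχs, hχds⟩ := exists_testFunction_mul_eq_self χ
  obtain ⟨r, hsr, -, hsdr⟩ := exists_testFunction_mul_eq_self s
  have hχr (x : 𝔼) : χ x * r x = χ x := by rw [← hχs, mul_assoc, hsr]
  choose g hg hvg using fun i k ↦ hgrad r i k
  have key := integral_mul_add_integral_mul_of_sum_lineDerivOp
    (locallyL2_of_memLp_top ha s) (ha.mul' (memLp_testFunction s ⊤))
    (locallyL2_of_memLp_top hb χ) (hb.mul' (memLp_testFunction χ ⊤))
    (fun i ↦ locallyL2_of_memLp_top (hv i) r)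
    ((hA s).add (memLp_finsetSum _ fun i _ ↦ locallyL2_of_memLp_top (hav_mem i) (∂_{𝐞 i} s)))
    ((hB χ).add (memLp_finsetSum _ fun i _ ↦ locallyL2_of_memLp_top (hbv_mem i) (∂_{𝐞 i} χ)))
    hg hvg
    (sum_lineDerivOp_toDistribution_localize (fun i ↦ loc (hav_mem i)) hA.locallyIntegrable hav
      hsr)
    (sum_lineDerivOp_toDistribution_localize (fun i ↦ loc (hbv_mem i)) hB.locallyIntegrable hbv
      hχr)
  have hχdr (v x : 𝔼) : χ x * (∂_{v} r) x = 0 := by rw [← hχs, mul_assoc, hsdr, mul_zero]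
  have hbA := (hA.bddMul hb).locallyIntegrable
  have haB := (hB.bddMul ha).locallyIntegrable
  have habD := (hD.bddMul (hb.mul' ha : MemLp (fun x ↦ a x * b x) ⊤)).locallyIntegrable
  have rearrange : ∑ i, ∫ x, χ x * b x * (s x * a x) * g i i x =
      ∑ i, ∫ x, a x * b x * χ x * g i i x := by
    congr! 3 with i _ x
    linear_combination a x * b x * g i i x * hχs x
  simp only [Pi.add_apply] at key
  rw [integral_mul_localize_left v hbA hχs hχds, integral_localize_mul_right haB
    (fun i ↦ loc ((hv i).mul' (hb.mul' ha : MemLp (fun x ↦ a x * b x) ⊤))) hχs hdχs, rearrange,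
    sum_integral_mul_localize (hb.mul' ha) hv (fun i ↦ hg i i) hD hvD (fun i ↦ hvg i i) hχr hχdr]
    at key
  rw [toDistribution_add_sub haB hbA habD, sub_apply, add_apply]
  linarith

/-! ### Orthogonality of solenoidal and irrotational fields -/

/-- The inclusion of `L²` into the distributions. -/
def lpToDistribution : 𝓛 →ₗ[ℝ] 𝒟 where
  toFun f := toDistribution f
  map_add' f g := by
    have hf := (Lp.memLp f).locallyIntegrable one_le_two
    have hg := (Lp.memLp g).locallyIntegrable one_le_two
    rw [← toDistribution_add hf hg]
    exact (toDistribution_congr (hf.add hg) (Lp.coeFn_add f g).symm).symm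
  map_smul' c f := by
    have hf := (Lp.memLp f).locallyIntegrable one_le_two
    rw [RingHom.id_apply, ← toDistribution_smul c hf]
    exact (toDistribution_congr (hf.smul c) (Lp.coeFn_smul c f).symm).symm

lemma lpToDistribution_toLp {f : 𝔼 → ℝ} (hf : MemLp f 2) :
    lpToDistribution (hf.toLp f) = toDistribution f :=
  toDistribution_toLp hf

lemma lpToDistribution_injective : Function.Injective (lpToDistribution (ι := ι)) :=
  fun f g hfg ↦ Lp.ext (ae_eq_of_toDistribution_eq ((Lp.memLp f).locallyIntegrable one_le_two)
    ((Lp.memLp g).locallyIntegrable one_le_two) hfg)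

lemma lpToDistribution_mem_l2Distributions (f : 𝓛) : lpToDistribution f ∈ l2Distributions :=
  toDistribution_mem_l2Distributions (Lp.memLp f)

lemma inner_testToLp (f : 𝓛) (χ : 𝒯) : ⟪f, testToLp χ⟫_ℝ = lpToDistribution f χ :=
  inner_coe_testToLp f χ

/-- The gradient of a test function, as a square integrable vector field. -/
def testGradient : 𝒯 →ₗ[ℝ] PiLp 2 fun _ : ι ↦ 𝓛 where
  toFun χ := WithLp.toLp 2 fun i ↦ testToLp (∂_{𝐞 i} χ)
  map_add' χ ψ := by ext1 i; simp [lineDerivOp_add]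
  map_smul' c χ := by ext1 i; simp [lineDerivOp_smul]

lemma inner_testGradient (f : PiLp 2 fun _ : ι ↦ 𝓛) (χ : 𝒯) :
    ⟪f, testGradient χ⟫_ℝ = -(∑ i, ∂_{𝐞 i} (lpToDistribution (f i))) χ := by
  simp only [sum_apply, Distribution.lineDerivOp_apply_apply, map_neg, Finset.sum_neg_distrib,
    neg_neg, ← inner_testToLp]
  exact PiLp.inner_apply f (testGradient χ)

lemma mem_orthogonal_range_testGradient {f : PiLp 2 fun _ : ι ↦ 𝓛} :
    f ∈ (LinearMap.range (testGradient (ι := ι)))ᗮ ↔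
      ∑ i, ∂_{𝐞 i} (lpToDistribution (f i)) = 0 := by
  rw [Submodule.mem_orthogonal']
  constructor
  · intro hf
    ext χ
    simpa [inner_testGradient] using hf _ ⟨χ, rfl⟩
  · rintro hdiv _ ⟨χ, rfl⟩
    simp [inner_testGradient, hdiv]

/-- The irrotational square integrable vector fields. -/
def irrotationalFields : Submodule ℝ (PiLp 2 fun _ : ι ↦ 𝓛) where
  carrier := {f | ∀ i j, ∀ χ : 𝒯, ⟪f j, testToLp (∂_{𝐞 i} χ)⟫_ℝ = ⟪f i, testToLp (∂_{𝐞 j} χ)⟫_ℝ}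
  zero_mem' := by simp
  add_mem' {f g} hf hg i j χ := by simp [inner_add_left, hf i j χ, hg i j χ]
  smul_mem' c f hf i j χ := by simp [inner_smul_left, hf i j χ]

lemma mem_irrotationalFields {f : PiLp 2 fun _ : ι ↦ 𝓛} :
    f ∈ irrotationalFields ↔
      ∀ i j, ∂_{𝐞 i} (lpToDistribution (f j)) = ∂_{𝐞 j} (lpToDistribution (f i)) := by
  refine forall₂_congr fun i j ↦ ⟨fun h ↦ ?_, fun h χ ↦ ?_⟩
  · ext χ
    simpa [inner_testToLp] using h χ
  · simpa [inner_testToLp] using DFunLike.congr_fun h χ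

lemma topologicalClosure_range_testGradient_le :
    (LinearMap.range (testGradient (ι := ι))).topologicalClosure ≤ irrotationalFields := by
  refine Submodule.topologicalClosure_minimal _ ?_ ?_
  · rintro _ ⟨ψ, rfl⟩ i j χ
    change ⟪testToLp (∂_{𝐞 j} ψ), _⟫_ℝ = ⟪testToLp (∂_{𝐞 i} ψ), _⟫_ℝ
    rw [inner_testToLp_lineDerivOp, inner_testToLp_lineDerivOp, lineDerivOp_testFunction_comm]
  · simp only [irrotationalFields, Submodule.coe_set_mk, AddSubmonoid.coe_set_mk,
      AddSubsemigroup.coe_set_mk, ofPred_forall]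
    refine isClosed_iInter fun i ↦ isClosed_iInter fun j ↦ isClosed_iInter fun χ ↦ ?_
    exact isClosed_eq (by fun_prop) (by fun_prop)

lemma eq_zero_of_div_eq_zero_of_mem_irrotationalFields [Nonempty ι] {f : PiLp 2 fun _ : ι ↦ 𝓛}
    (hdiv : ∑ i, ∂_{𝐞 i} (lpToDistribution (f i)) = 0) (hcurl : f ∈ irrotationalFields) :
    f = 0 := by
  rw [mem_irrotationalFields] at hcurl
  ext1 j
  have hΔ : laplacianCLM ℝ 𝔼 𝒟 (lpToDistribution (f j)) = 0 := by
    calc laplacianCLM ℝ 𝔼 𝒟 (lpToDistribution (f j))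
        = ∂_{𝐞 j} (∑ i, ∂_{𝐞 i} (lpToDistribution (f i))) := by
          simp only [laplacianCLM_eq_sum 𝐞, lineDerivOp_sum, hcurl _ j]
          exact Finset.sum_congr rfl fun i _ ↦ lineDerivOp_distribution_comm _ _ _
      _ = 0 := by rw [hdiv, lineDerivOp_zero]
  refine lpToDistribution_injective ?_
  rw [PiLp.zero_apply, map_zero]
  exact eq_zero_of_mem_tameDistributions_of_laplacian_eq_zero (l2Distributions_le_tameDistributions
    (lpToDistribution_mem_l2Distributions (f j))) hΔ

/- By the Liouville theorem, an irrotational field orthogonal to the gradients of test functions is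
zero, so every irrotational field is a limit of such gradients. -/
theorem sum_inner_eq_zero_of_div_of_curl [Nonempty ι] {A g : ι → 𝓛}
    (hdiv : ∑ i, ∂_{𝐞 i} (lpToDistribution (A i)) = 0)
    (hcurl : ∀ i j, ∂_{𝐞 i} (lpToDistribution (g j)) = ∂_{𝐞 j} (lpToDistribution (g i))) :
    ∑ i, ⟪A i, g i⟫_ℝ = 0 := by
  let a : PiLp 2 fun _ : ι ↦ 𝓛 := WithLp.toLp 2 A
  let b : PiLp 2 fun _ : ι ↦ 𝓛 := WithLp.toLp 2 g
  let K := (LinearMap.range (testGradient (ι := ι))).topologicalClosure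
  have ha : a ∈ Kᗮ := by
    rw [Submodule.orthogonal_closure, mem_orthogonal_range_testGradient]
    exact hdiv
  have hb : b ∈ irrotationalFields := mem_irrotationalFields.2 hcurl
  obtain ⟨k, hk, h, hh, hbkh⟩ := K.exists_add_mem_mem_orthogonal b
  have h_zero : h = 0 := by
    refine eq_zero_of_div_eq_zero_of_mem_irrotationalFields ?_ ?_
    · rwa [Submodule.orthogonal_closure, mem_orthogonal_range_testGradient] at hh
    · rw [← add_sub_cancel_left k h, ← hbkh]
      exact sub_mem hb (topologicalClosure_range_testGradient_le hk)
  calc ∑ i, ⟪A i, g i⟫_ℝ = ⟪a, b⟫_ℝ := (PiLp.inner_apply a b).symm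
    _ = 0 := by
        rw [hbkh, h_zero, add_zero]
        exact K.inner_left_of_mem_orthogonal hk ha

/-! ### Vanishing derivatives and divergences -/

lemma fderiv_convolution_testFunction_eq_zero {f : 𝔼 → ℝ} (hf : LocallyIntegrable f) {v : 𝔼}
    (hv : ∂_{v} (toDistribution f) = 0) (χ : 𝒯) (x : 𝔼) : fderiv ℝ (f ⋆ χ) x v = 0 := by
  rw [fderiv_convolution_testFunction hf, ← toDistribution_reflectedTranslate hf,
    ← lineDerivOp_apply_reflectedTranslate, hv, zero_apply]

theorem exists_ae_eq_const_of_lineDerivOp_eq_zero {f : 𝔼 → ℝ} (hf : LocallyIntegrable f)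
    (h : ∀ i, ∂_{𝐞 i} (toDistribution f) = 0) : ∃ c, ∀ᵐ x, f x = c := by
  let φ (n : ℕ) : ContDiffBump (0 : 𝔼) :=
    ⟨1 / (n + 1), 2 / (n + 1), by positivity, by gcongr; norm_num⟩
  have hφ : Tendsto (fun n ↦ (φ n).rOut) atTop (𝓝 0) := by
    simpa [φ, div_eq_mul_inv] using tendsto_one_div_add_atTop_nhds_zero_nat.const_mul (2 : ℝ)
  have hφ' (n : ℕ) : (φ n).rOut ≤ 2 * (φ n).rIn := by
    change 2 / ((n : ℝ) + 1) ≤ 2 * (1 / (n + 1))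
    rw [mul_one_div]
  have mollified_const (n : ℕ) (x : 𝔼) :
      ((φ n).normed volume ⋆ f) x = ((φ n).normed volume ⋆ f) 0 := by
    let χ : 𝒯 := ⟨(φ n).normed volume, (φ n).contDiff_normed, (φ n).hasCompactSupport_normed,
      subset_univ _⟩
    have hfderiv (y : 𝔼) : fderiv ℝ (f ⋆ χ) y = 0 := ContinuousLinearMap.coe_injective <|
      (𝐞).toBasis.ext fun i ↦ by
        simpa using fderiv_convolution_testFunction_eq_zero hf (h i) χ y
    have hcomm (y : 𝔼) : ((φ n).normed volume ⋆ f) y = (f ⋆ χ) y := by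
      rw [convolution_lsmul_swap, convolution_lsmul]
      simp only [smul_eq_mul, mul_comm]
      rfl
    rw [hcomm, hcomm]
    exact is_const_of_fderiv_eq_zero
      ((contDiff_convolution_testFunction hf χ).differentiable (by simp)) hfderiv x 0
  have hlim := ContDiffBump.ae_convolution_tendsto_right_of_locallyIntegrable hφ
    (.of_forall hφ') hf
  obtain ⟨x₀, hx₀⟩ := hlim.exists
  refine ⟨f x₀, ?_⟩
  filter_upwards [hlim] with x hx
  simp only [mollified_const _ x] at hx
  simp only [mollified_const _ x₀] at hx₀
  exact tendsto_nhds_unique hx hx₀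

lemma tendsto_convolution_testFunction_atTop {f : 𝔼 → ℝ} (hf : Integrable f) (χ : 𝒯) {c : 𝔼}
    (hc : c ≠ 0) : Tendsto (fun t : ℝ ↦ (f ⋆ χ) (t • c)) atTop (𝓝 0) := by
  obtain ⟨C, hC⟩ := χ.continuous.bounded_above_of_compact_support χ.hasCompactSupport
  have hlim (y : 𝔼) : Tendsto (fun t : ℝ ↦ f y * χ (t • c - y)) atTop (𝓝 0) := by
    have hcocompact : Tendsto (fun t : ℝ ↦ t • c - y) atTop (cocompact 𝔼) := by
      rw [← cobounded_eq_cocompact, ← tendsto_norm_atTop_iff_cobounded]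
      refine tendsto_atTop_mono (fun t ↦ ?_) (tendsto_atTop_add_const_right _ (-‖y‖)
        (tendsto_id.atTop_mul_const (norm_pos_iff.2 hc)))
      calc t * ‖c‖ + -‖y‖ ≤ ‖t • c‖ - ‖y‖ := by
            rw [norm_smul, ← sub_eq_add_neg]
            gcongr
            exact le_abs_self t
        _ ≤ ‖t • c - y‖ := norm_sub_norm_le _ _
    simpa using (χ.hasCompactSupport.is_zero_at_infty.comp hcocompact).const_mul (f y)
  simp only [convolution_lsmul]
  rw [← integral_zero 𝔼 ℝ]
  refine tendsto_integral_filter_of_dominated_convergence (fun y ↦ C * ‖f y‖)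
    (.of_forall fun t ↦ ?_) (.of_forall fun t ↦ .of_forall fun y ↦ ?_) (hf.norm.const_mul C)
    (.of_forall hlim)
  · exact hf.1.smul (χ.continuous.comp (continuous_const.sub continuous_id)).aestronglyMeasurable
  · rw [norm_smul, mul_comm]
    gcongr
    exact hC _

theorem ae_eq_zero_of_lineDerivOp_eq_zero {f : 𝔼 → ℝ} (hf : Integrable f) {c : 𝔼} (hc : c ≠ 0)
    (h : ∂_{c} (toDistribution f) = 0) : f =ᵐ[volume] 0 := by
  have const_along (χ : 𝒯) (t : ℝ) : (f ⋆ χ) (t • c) = (f ⋆ χ) 0 := by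
    have hderiv (t : ℝ) : HasDerivAt (fun t : ℝ ↦ (f ⋆ χ) (t • c)) 0 t := by
      have hconv : HasFDerivAt (f ⋆ χ) (fderiv ℝ (f ⋆ χ) (t • c)) (t • c) :=
        ((contDiff_convolution_testFunction hf.locallyIntegrable χ).differentiable (by simp)
          _).hasFDerivAt
      have hline : HasDerivAt (fun t : ℝ ↦ t • c) c t := by
        simpa using (hasDerivAt_id t).smul_const c
      have hcomp := hconv.comp_hasDerivAt t hline
      rwa [fderiv_convolution_testFunction_eq_zero hf.locallyIntegrable h χ] at hcomp
    simpa using is_const_of_deriv_eq_zero (fun t ↦ (hderiv t).differentiableAt)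
      (fun t ↦ (hderiv t).deriv) t 0
  refine ae_eq_of_toDistribution_eq hf.locallyIntegrable locallyIntegrable_zero ?_
  rw [toDistribution_zero]
  ext χ
  rw [← reflectedTranslate_reflectedTranslate_zero χ,
    toDistribution_reflectedTranslate hf.locallyIntegrable, zero_apply]
  have hlim := tendsto_convolution_testFunction_atTop hf (reflectedTranslate χ 0) hc
  simp only [const_along] at hlim
  exact tendsto_nhds_unique tendsto_const_nhds hlim

lemma tendsto_integral_mul_comp_smul {f : 𝔼 → ℝ} (hf : Integrable f) (χ : 𝒯) :
    Tendsto (fun t : ℝ ↦ ∫ x, f x * χ (t • x)) (𝓝 0) (𝓝 (χ 0 * ∫ x, f x)) := by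
  obtain ⟨C, hC⟩ := χ.continuous.bounded_above_of_compact_support χ.hasCompactSupport
  rw [mul_comm, ← integral_mul_const]
  refine tendsto_integral_filter_of_dominated_convergence (fun x ↦ C * ‖f x‖)
    (.of_forall fun t ↦ ?_) (.of_forall fun t ↦ .of_forall fun x ↦ ?_) (hf.norm.const_mul C)
    (.of_forall fun x ↦ ?_)
  · exact hf.1.mul (χ.continuous.comp (continuous_const_smul t)).aestronglyMeasurable
  · rw [norm_mul, mul_comm]
    gcongr
    exact hC _
  · have : Tendsto (fun t : ℝ ↦ t • x) (𝓝 0) (𝓝 0) := by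
      simpa using (by fun_prop : Continuous fun t : ℝ ↦ t • x).tendsto 0
    exact ((χ.continuous.tendsto 0).comp this).const_mul (f x)

theorem integral_eq_zero_of_sum_lineDerivOp {w : ι → 𝔼 → ℝ} {g : 𝔼 → ℝ}
    (hw : ∀ i, Integrable (w i)) (hg : Integrable g)
    (h : ∑ i, ∂_{𝐞 i} (toDistribution (w i)) = toDistribution g) : ∫ x, g x = 0 := by
  obtain ⟨χ, hχ⟩ := exists_testFunction_eq_one (ι := ι) 1
  have htested (t : ℝ) (ht : t ≠ 0) :
      ∫ x, g x * χ (t • x) = t * -∑ i, ∫ x, w i x * (∂_{𝐞 i} χ) (t • x) := by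
    let χt : 𝒯 := ⟨fun x ↦ χ (t • x), χ.contDiff.comp (contDiff_const_smul t),
      χ.hasCompactSupport.comp_smul ht, subset_univ _⟩
    calc ∫ x, g x * χ (t • x) = (∑ i, ∂_{𝐞 i} (toDistribution (w i))) χt := by
          rw [h, toDistribution_apply hg.locallyIntegrable]
          rfl
      _ = _ := by
          simp only [sum_apply, ← Finset.sum_neg_distrib, Finset.mul_sum]
          refine Finset.sum_congr rfl fun i _ ↦ ?_
          rw [Distribution.lineDerivOp_apply_apply, map_neg,
            toDistribution_apply (hw i).locallyIntegrable, mul_neg, ← integral_const_mul]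
          simp only [lineDerivOp_comp_smul (j' := χt) (j := χ) (t := t) fun _ ↦ rfl,
            mul_left_comm t]
  have hflux : Tendsto (fun t : ℝ ↦ t * -∑ i, ∫ x, w i x * (∂_{𝐞 i} χ) (t • x)) (𝓝[≠] 0) (𝓝 0) := by
    simpa using ((tendsto_id (x := 𝓝 (0 : ℝ))).mul (tendsto_finsetSum Finset.univ fun i _ ↦
      tendsto_integral_mul_comp_smul (hw i) (∂_{𝐞 i} χ)).neg).mono_left nhdsWithin_le_nhds
  have hmass : Tendsto (fun t : ℝ ↦ ∫ x, g x * χ (t • x)) (𝓝[≠] 0) (𝓝 (∫ x, g x)) := by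
    simpa [hχ 0 (mem_ball_self one_pos)] using
      (tendsto_integral_mul_comp_smul hg χ).mono_left nhdsWithin_le_nhds
  refine tendsto_nhds_unique hmass (hflux.congr' ?_)
  filter_upwards [self_mem_nhdsWithin] with t ht using (htested t ht).symm

/-! ### Vanishing moments -/

section L2

variable {α : Type*} [MeasurableSpace α] {ν : Measure α}

lemma memLp_two_of_integrable_of_memLp_top {f : α → ℝ} (hf : Integrable f ν)
    (hf_top : MemLp f ⊤ ν) : MemLp f 2 ν := by
  rw [memLp_two_iff_integrable_sq hf.1]
  have hmul : Integrable (fun x ↦ f x * f x) ν :=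
    (memLp_one_iff_integrable.2 hf).integrable_mul hf_top
  simpa only [sq] using hmul

lemma integrable_bddMul {f g : α → ℝ}
    (hf : MemLp f ⊤ ν) (hg : Integrable g ν) : Integrable (fun x ↦ f x * g x) ν :=
  hf.integrable_mul (memLp_one_iff_integrable.2 hg)

lemma memLp_top_pow {r : α → ℝ} (hr : MemLp r ⊤ ν) (n : ℕ) :
    MemLp (fun x ↦ r x ^ n) ⊤ ν := by
  induction n with
  | zero => simpa using memLp_top_const (1 : ℝ)
  | succ n ih => simpa only [pow_succ] using hr.mul' ih

lemma memLp_top_comp_of_continuousOn_Icc {r : α → ℝ}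
    {a b : ℝ} (hab : a ≤ b) (hr_meas : AEStronglyMeasurable r ν) (hr : ∀ᵐ x ∂ν, r x ∈ Icc a b)
    {f : ℝ → ℝ} (hf : ContinuousOn f (Icc a b)) : MemLp (fun x ↦ f (r x)) ⊤ ν := by
  obtain ⟨C, hC⟩ := isCompact_Icc.exists_bound_of_continuousOn hf
  refine memLp_top_of_bound ?_ C (hr.mono fun x hx ↦ hC _ hx)
  have hext : Continuous (IccExtend hab ((Icc a b).domRestrict f)) := hf.domRestrict.Icc_extend'
  refine (hext.comp_aestronglyMeasurable hr_meas).congr ?_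
  filter_upwards [hr] with x hx
  simp [IccExtend_of_mem hab _ hx]

lemma integral_eval_mul_eq_zero_of_forall_pow {r g : α → ℝ} (hr : MemLp r ⊤ ν)
    (hg : Integrable g ν) (h : ∀ n : ℕ, ∫ x, r x ^ n * g x ∂ν = 0) (P : Polynomial ℝ) :
    ∫ x, P.eval (r x) * g x ∂ν = 0 := by
  simp only [Polynomial.eval_eq_sum_range, Finset.sum_mul, mul_assoc]
  rw [integral_finsetSum _ fun n _ ↦ (integrable_bddMul (memLp_top_pow hr n) hg).const_mul _]
  simp only [integral_const_mul, h, mul_zero, Finset.sum_const_zero]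

lemma integral_comp_mul_eq_zero_of_forall_pow {r g : α → ℝ} {a b : ℝ} (hab : a ≤ b)
    (hr_meas : AEStronglyMeasurable r ν) (hr : ∀ᵐ x ∂ν, r x ∈ Icc a b) (hg : Integrable g ν)
    (h : ∀ n : ℕ, ∫ x, r x ^ n * g x ∂ν = 0)
    {f : ℝ → ℝ} (hf : ContinuousOn f (Icc a b)) : ∫ x, f (r x) * g x ∂ν = 0 := by
  have hcomp {f : ℝ → ℝ} (hf : ContinuousOn f (Icc a b)) : MemLp (fun x ↦ f (r x)) ⊤ ν :=
    memLp_top_comp_of_continuousOn_Icc hab hr_meas hr hf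
  have hsmall (ε : ℝ) (hε : 0 < ε) : |∫ x, f (r x) * g x ∂ν| ≤ ε * ∫ x, |g x| ∂ν := by
    obtain ⟨P, hP⟩ := exists_polynomial_near_of_continuousOn a b f hf ε hε
    rw [← sub_zero (∫ x, f (r x) * g x ∂ν),
      ← integral_eval_mul_eq_zero_of_forall_pow (hcomp (f := fun s ↦ s) continuousOn_id) hg h P,
      ← integral_sub (integrable_bddMul (hcomp hf) hg)
        (integrable_bddMul (hcomp P.continuousOn) hg), ← integral_const_mul, ← Real.norm_eq_abs]
    refine norm_integral_le_of_norm_le (hg.abs.const_mul ε) ?_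
    filter_upwards [hr] with x hx
    rw [← sub_mul, norm_mul, norm_sub_rev]
    exact mul_le_mul_of_nonneg_right (hP _ hx).le (abs_nonneg _)
  have hlim : Tendsto (fun ε ↦ ε * ∫ x, |g x| ∂ν) (𝓝[>] 0) (𝓝 0) := by
    simpa using ((tendsto_id (x := 𝓝 (0 : ℝ))).mul_const (∫ x, |g x| ∂ν)).mono_left
      nhdsWithin_le_nhds
  exact abs_nonpos_iff.1 (ge_of_tendsto hlim (eventually_mem_nhdsWithin.mono hsmall))

lemma norm_toLp_le_of_integral_mul_add_eq_zero {ψ q F : α → ℝ} (hψ : MemLp ψ 2 ν)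
    (hF : MemLp F 2 ν) (hψq : Integrable (fun x ↦ ψ x * q x) ν)
    (hle : ∀ᵐ x ∂ν, ψ x * ψ x ≤ ψ x * q x) (h : ∫ x, ψ x * (F x + q x) ∂ν = 0) :
    ‖hψ.toLp ψ‖ ≤ ‖hF.toLp F‖ := by
  have hbalance : ⟪hψ.toLp ψ, hF.toLp F⟫_ℝ + ∫ x, ψ x * q x ∂ν = 0 := by
    simp only [mul_add] at h
    have hψF : Integrable (fun x ↦ ψ x * F x) ν := hψ.integrable_mul hF
    rwa [inner_toLp_toLp, ← integral_add hψF hψq]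
  have hsq : ‖hψ.toLp ψ‖ ^ 2 ≤ ∫ x, ψ x * q x ∂ν := by
    rw [← real_inner_self_eq_norm_sq, inner_toLp_toLp]
    exact integral_mono_ae (hψ.integrable_mul hψ) hψq hle
  have hcauchy := neg_le_of_abs_le (abs_real_inner_le_norm (hψ.toLp ψ) (hF.toLp F))
  by_contra! hlt
  nlinarith [norm_nonneg (hF.toLp F)]

/- Testing with `θ n * q`, which is square integrable unlike `q` a priori, bounds its `L²` norm by
that of `F`. -/
theorem memLp_two_and_integral_mul_add_eq_zero {q F : α → ℝ} {θ : ℕ → α → ℝ}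
    (hq : MemLp q ⊤ ν) (hF : MemLp F 2 ν)
    (hθ : ∀ n, Integrable (θ n) ν) (hθ_mem : ∀ n x, θ n x ∈ Icc (0 : ℝ) 1)
    (hlim : ∀ᵐ x ∂ν, Tendsto (fun n ↦ θ n x * q x) atTop (𝓝 (q x)))
    (h : ∀ n, ∫ x, θ n x * q x * (F x + q x) ∂ν = 0) :
    MemLp q 2 ν ∧ ∫ x, q x * (F x + q x) ∂ν = 0 := by
  have hψ (n : ℕ) : MemLp (fun x ↦ θ n x * q x) 2 ν := by
    have hθ_top : MemLp (θ n) ⊤ ν := memLp_top_of_bound (hθ n).1 1 (.of_forall fun x ↦ by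
      simpa [abs_of_nonneg (hθ_mem n x).1] using (hθ_mem n x).2)
    exact hq.mul' (memLp_two_of_integrable_of_memLp_top (hθ n) hθ_top)
  have hψq (n : ℕ) : Integrable (fun x ↦ θ n x * q x * q x) ν := by
    simpa only [mul_comm, mul_left_comm] using integrable_bddMul hq (integrable_bddMul hq (hθ n))
  have hle (n : ℕ) (x : α) : θ n x * q x * (θ n x * q x) ≤ θ n x * q x * q x := by
    have hθ_gap := mul_nonneg (hθ_mem n x).1 (sub_nonneg.2 (hθ_mem n x).2)
    nlinarith [mul_nonneg hθ_gap (sq_nonneg (q x))]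
  have hbound (n : ℕ) : eLpNorm (fun x ↦ θ n x * q x) 2 ν ≤ eLpNorm F 2 ν := by
    rw [← ENNReal.toReal_le_toReal (hψ n).2.ne hF.2.ne, ← Lp.norm_toLp _ (hψ n),
      ← Lp.norm_toLp _ hF]
    exact norm_toLp_le_of_integral_mul_add_eq_zero (hψ n) hF (hψq n) (.of_forall (hle n)) (h n)
  have hq_two : MemLp q 2 ν := ⟨hq.1, (Lp.eLpNorm_lim_le_liminf_eLpNorm (fun n ↦ (hψ n).1) q
    hlim).trans_lt ((liminf_le_of_le (by isBoundedDefault) fun c hc ↦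
      let ⟨n, hn⟩ := hc.exists; hn.trans (hbound n)).trans_lt hF.2)⟩
  refine ⟨hq_two, ?_⟩
  have hsum : MemLp (fun x ↦ F x + q x) 2 ν := hF.add hq_two
  have hintegral : Tendsto (fun n ↦ ∫ x, θ n x * q x * (F x + q x) ∂ν) atTop
      (𝓝 (∫ x, q x * (F x + q x) ∂ν)) := by
    refine tendsto_integral_of_dominated_convergence (fun x ↦ ‖q x * (F x + q x)‖)
      (fun n ↦ (hψ n).1.mul hsum.1) (hq_two.integrable_mul hsum).norm
      (fun n ↦ .of_forall fun x ↦ ?_) (hlim.mono fun x hx ↦ hx.mul_const _)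
    rw [mul_assoc, norm_mul, Real.norm_of_nonneg (hθ_mem n x).1]
    exact mul_le_of_le_one_left (norm_nonneg _) (hθ_mem n x).2
  simp only [h] at hintegral
  exact tendsto_nhds_unique hintegral tendsto_const_nhds

lemma integrable_pow_two_mul {r f : α → ℝ} (hr_int : Integrable r ν) (hr : MemLp r ⊤ ν)
    (hf : MemLp f 2 ν) : Integrable (fun x ↦ r x ^ 2 * f x) ν := by
  have hr_sq : MemLp (fun x ↦ r x ^ 2) 2 ν := by
    simpa only [sq] using (memLp_two_of_integrable_of_memLp_top hr_int hr).mul' hr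
  exact hr_sq.integrable_mul hf

lemma tendsto_div_add_inv_mul {s y : ℝ} (hs : 0 ≤ s) (hy : s = 0 → y = 0) :
    Tendsto (fun n : ℕ ↦ s / (s + (n + 1 : ℝ)⁻¹) * y) atTop (𝓝 y) := by
  rcases hs.eq_or_lt with rfl | hs
  · simp [hy rfl]
  · have hlim : Tendsto (fun n : ℕ ↦ s + (n + 1 : ℝ)⁻¹) atTop (𝓝 s) := by
      simpa using tendsto_const_nhds.add (tendsto_one_div_add_atTop_nhds_zero_nat (𝕜 := ℝ))
    have hmul := ((tendsto_const_nhds (x := s)).div hlim hs.ne').mul_const y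
    rwa [div_self hs.ne', one_mul] at hmul

/- The weights `r ^ 2 / (r ^ 2 + 1 / (n + 1))` are integrable, and `P r` times them is `r ^ 2` times
a continuous function of `r`, to which the vanishing moments extend by the Weierstrass theorem. -/
theorem memLp_two_comp_of_forall_integral_pow_mul_eq_zero {r F : α → ℝ} {M : ℝ} {P : ℝ → ℝ}
    (hM : 0 ≤ M) (hr_int : Integrable r ν) (hr : ∀ᵐ x ∂ν, r x ∈ Icc 0 M)
    (hP : ContinuousOn P (Icc 0 M)) (hP_zero : P 0 = 0) (hF : MemLp F 2 ν)
    (h : ∀ n : ℕ, ∫ x, r x ^ (n + 2) * (F x + P (r x)) ∂ν = 0) :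
    MemLp (fun x ↦ P (r x)) 2 ν ∧ ∫ x, P (r x) * (F x + P (r x)) ∂ν = 0 := by
  have comp_top {f : ℝ → ℝ} (hf : ContinuousOn f (Icc 0 M)) : MemLp (fun x ↦ f (r x)) ⊤ ν :=
    memLp_top_comp_of_continuousOn_Icc hM hr_int.1 hr hf
  have hr_top : MemLp r ⊤ ν := comp_top (f := fun s ↦ s) continuousOn_id
  have hr_sq : Integrable (fun x ↦ r x ^ 2) ν := by
    simpa only [sq] using integrable_bddMul hr_top hr_int
  have hweight (n : ℕ) (s : ℝ) : 0 < s ^ 2 + (n + 1 : ℝ)⁻¹ := by positivity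
  have hg : Integrable (fun x ↦ r x ^ 2 * (F x + P (r x))) ν := by
    simp only [mul_add, mul_comm _ (P _)]
    exact (integrable_pow_two_mul hr_int hr_top hF).add (integrable_bddMul (comp_top hP) hr_sq)
  refine memLp_two_and_integral_mul_add_eq_zero
    (θ := fun n x ↦ r x ^ 2 / (r x ^ 2 + (n + 1 : ℝ)⁻¹)) (comp_top hP) hF (fun n ↦ ?_)
    (fun n x ↦ ⟨by positivity, div_le_one_of_le₀ (le_add_of_nonneg_right (by positivity))
      (hweight n _).le⟩)
    (.of_forall fun x ↦ tendsto_div_add_inv_mul (sq_nonneg _) fun hx ↦ ?_) fun n ↦ ?_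
  · have hinv : ContinuousOn (fun s : ℝ ↦ (s ^ 2 + (n + 1 : ℝ)⁻¹)⁻¹) (Icc 0 M) :=
      ContinuousOn.inv₀ (by fun_prop) fun s _ ↦ (hweight n s).ne'
    simpa only [div_eq_inv_mul] using integrable_bddMul (comp_top hinv) hr_sq
  · rw [pow_eq_zero_iff two_ne_zero] at hx
    rw [hx, hP_zero]
  · have hquot : ContinuousOn (fun s ↦ P s / (s ^ 2 + (n + 1 : ℝ)⁻¹)) (Icc 0 M) :=
      hP.div (by fun_prop) fun s _ ↦ (hweight n s).ne'
    have hzero := integral_comp_mul_eq_zero_of_forall_pow hM hr_int.1 hr hg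
      (fun m ↦ by simpa only [pow_add, mul_assoc] using h m) hquot
    rw [← hzero]
    congr 1 with x
    ring

end L2

lemma toDistribution_mul_const {f : 𝔼 → ℝ} (hf : LocallyIntegrable f) (c : ℝ) :
    toDistribution (fun x ↦ f x * c) = c • toDistribution f := by
  rw [← toDistribution_smul c hf]
  congr 1 with x
  exact mul_comm _ _

lemma sum_lineDerivOp_toDistribution_mul_const {f : 𝔼 → ℝ} (hf : LocallyIntegrable f) (w : 𝔼) :
    ∑ k, ∂_{𝐞 k} (toDistribution fun x ↦ f x * w k) = ∂_{w} (toDistribution f) := by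
  conv_rhs => rw [← (𝐞).sum_repr w]
  simp only [toDistribution_mul_const hf, lineDerivOp_smul, lineDerivOp_left_sum,
    lineDerivOp_left_smul, EuclideanSpace.basisFun_repr]

lemma lineDerivOp_toDistribution_const (c : ℝ) (v : 𝔼) :
    ∂_{v} (toDistribution fun _ : 𝔼 ↦ c) = 0 := by
  rw [lineDerivOp_toDistribution_of_contDiff contDiff_const]
  simp only [fderiv_fun_const, Pi.zero_apply, zero_apply]
  exact toDistribution_zero

lemma lineDerivOp_toDistribution_mul {a b A B : 𝔼 → ℝ} {w : 𝔼} (ha : MemLp a ⊤) (hb : MemLp b ⊤)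
    (hA : LocallyL2 A) (hB : LocallyL2 B) (haA : ∂_{w} (toDistribution a) = toDistribution A)
    (hbB : ∂_{w} (toDistribution b) = toDistribution B) :
    ∂_{w} (toDistribution fun x ↦ a x * b x) = toDistribution fun x ↦ a x * B x + b x * A x := by
  have loc {f : 𝔼 → ℝ} (hf : MemLp f ⊤) : LocallyIntegrable f := hf.locallyIntegrable le_top
  have hgrad (s : 𝒯) (i k : ι) :
      ∂_{𝐞 k} (toDistribution fun x ↦ s x * w i) ∈ l2Distributions := by
    rw [toDistribution_mul_const (integrable_testFunction s).locallyIntegrable, lineDerivOp_smul,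
      lineDerivOp_toDistribution_of_contDiff (s.contDiff.of_le (by norm_cast))]
    simp only [← lineDerivOp_testFunction_apply]
    exact Submodule.smul_mem _ _ (toDistribution_mem_l2Distributions (memLp_testFunction _ 2))
  have hdiv : ∑ i, ∂_{𝐞 i} (toDistribution fun _ : 𝔼 ↦ w i) = toDistribution 0 := by
    simp only [lineDerivOp_toDistribution_const, Finset.sum_const_zero, toDistribution_zero]
  rw [← sum_lineDerivOp_toDistribution_mul_const (loc (hb.mul' ha))]
  simpa using sum_lineDerivOp_toDistribution_mul_mul ha hb (fun i ↦ memLp_top_const (w i)) hA hB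
    (locallyL2_of_memLp_two .zero) hgrad hdiv
    ((sum_lineDerivOp_toDistribution_mul_const (loc ha) w).trans haA)
    ((sum_lineDerivOp_toDistribution_mul_const (loc hb) w).trans hbB)

/-! ### The Lamé system -/

/-- The system `μ ΔU + λ ∇ div U = div R + ∇Q` for a vector field `U`, a matrix field `R` and a
scalar field `Q` which are all distributions. -/
def LameSystem (μ lam : ℝ) (U : ι → 𝒟) (R : ι → ι → 𝒟) (Q : 𝒟) : Prop :=
  ∀ i, ∑ j, ∂_{𝐞 j} (R i j) + ∂_{𝐞 i} Q =
    μ • laplacianCLM ℝ 𝔼 𝒟 (U i) + lam • ∂_{𝐞 i} (∑ j, ∂_{𝐞 j} (U j))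

lemma laplacianCLM_lineDerivOp (T : 𝒟) (v : 𝔼) :
    laplacianCLM ℝ 𝔼 𝒟 (∂_{v} T) = ∂_{v} (laplacianCLM ℝ 𝔼 𝒟 T) := by
  simp only [laplacianCLM_eq_sum 𝐞, lineDerivOp_sum, lineDerivOp_distribution_comm _ v]

lemma LameSystem.laplacianCLM_div_sub {μ lam : ℝ} {U : ι → 𝒟} {R : ι → ι → 𝒟} {Q : 𝒟}
    (h : LameSystem μ lam U R Q) :
    laplacianCLM ℝ 𝔼 𝒟 ((μ + lam) • (∑ j, ∂_{𝐞 j} (U j)) - Q) =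
      ∑ i, ∑ j, ∂_{𝐞 i} (∂_{𝐞 j} (R i j)) := by
  have hdiv : ∑ i, ∑ j, ∂_{𝐞 i} (∂_{𝐞 j} (R i j)) + laplacianCLM ℝ 𝔼 𝒟 Q =
      (μ + lam) • laplacianCLM ℝ 𝔼 𝒟 (∑ j, ∂_{𝐞 j} (U j)) := by
    calc ∑ i, ∑ j, ∂_{𝐞 i} (∂_{𝐞 j} (R i j)) + laplacianCLM ℝ 𝔼 𝒟 Q
        = ∑ i, ∂_{𝐞 i} (∑ j, ∂_{𝐞 j} (R i j) + ∂_{𝐞 i} Q) := by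
          simp only [laplacianCLM_eq_sum 𝐞, lineDerivOp_add, lineDerivOp_sum,
            Finset.sum_add_distrib]
      _ = ∑ i, (μ • ∂_{𝐞 i} (laplacianCLM ℝ 𝔼 𝒟 (U i)) +
            lam • ∂_{𝐞 i} (∂_{𝐞 i} (∑ j, ∂_{𝐞 j} (U j)))) := by
          simp only [h _, lineDerivOp_add, lineDerivOp_smul]
      _ = (μ + lam) • laplacianCLM ℝ 𝔼 𝒟 (∑ j, ∂_{𝐞 j} (U j)) := by
          rw [Finset.sum_add_distrib, ← Finset.smul_sum, ← Finset.smul_sum, add_smul,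
            ← laplacianCLM_eq_sum 𝐞, map_sum]
          simp only [laplacianCLM_lineDerivOp]
  rw [map_sub, map_smul, ← hdiv, add_sub_cancel_right]

lemma LameSystem.smul_laplacianCLM_curl {μ lam : ℝ} {U : ι → 𝒟} {R : ι → ι → 𝒟} {Q : 𝒟}
    (h : LameSystem μ lam U R Q) (i j : ι) :
    μ • laplacianCLM ℝ 𝔼 𝒟 (∂_{𝐞 i} (U j) - ∂_{𝐞 j} (U i)) =
      ∑ k, ∂_{𝐞 i} (∂_{𝐞 k} (R j k)) - ∑ k, ∂_{𝐞 j} (∂_{𝐞 k} (R i k)) := by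
  have hcurl (i j : ι) : μ • laplacianCLM ℝ 𝔼 𝒟 (∂_{𝐞 i} (U j)) =
      ∑ k, ∂_{𝐞 i} (∂_{𝐞 k} (R j k)) + ∂_{𝐞 i} (∂_{𝐞 j} Q) -
        lam • ∂_{𝐞 i} (∂_{𝐞 j} (∑ k, ∂_{𝐞 k} (U k))) := by
    rw [laplacianCLM_lineDerivOp, ← lineDerivOp_smul, eq_sub_iff_add_eq, ← lineDerivOp_smul,
      ← lineDerivOp_add, ← h j, lineDerivOp_add, lineDerivOp_sum]
  rw [map_sub, smul_sub, hcurl, hcurl, lineDerivOp_distribution_comm Q,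
    lineDerivOp_distribution_comm (∑ k, ∂_{𝐞 k} (U k))]
  abel

lemma LameSystem.smul_div_sub_mem_l2Distributions [Nonempty ι] {μ lam : ℝ} {U : ι → 𝒟}
    {R : ι → ι → 𝒟} {Q : 𝒟} (h : LameSystem μ lam U R Q)
    (hU : ∀ i j, ∂_{𝐞 j} (U i) ∈ tameDistributions) (hQ : Q ∈ tameDistributions)
    (hR : ∀ i j, R i j ∈ l2Distributions) :
    (μ + lam) • (∑ j, ∂_{𝐞 j} (U j)) - Q ∈ l2Distributions := by
  refine mem_l2Distributions_of_laplacianCLM_mem_map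
    (sub_mem (Submodule.smul_mem _ _ (sum_mem fun j _ ↦ hU j j)) hQ) ?_
  rw [h.laplacianCLM_div_sub]
  exact sum_mem fun i _ ↦ sum_mem fun j _ ↦
    lineDerivOp_lineDerivOp_mem_map_laplacianCLM (hR i j) i j

lemma LameSystem.curl_mem_l2Distributions [Nonempty ι] {μ lam : ℝ} {U : ι → 𝒟}
    {R : ι → ι → 𝒟} {Q : 𝒟} (h : LameSystem μ lam U R Q) (hμ : μ ≠ 0)
    (hU : ∀ i j, ∂_{𝐞 j} (U i) ∈ tameDistributions) (hR : ∀ i j, R i j ∈ l2Distributions)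
    (i j : ι) : ∂_{𝐞 i} (U j) - ∂_{𝐞 j} (U i) ∈ l2Distributions := by
  refine mem_l2Distributions_of_laplacianCLM_mem_map (sub_mem (hU j i) (hU i j)) ?_
  rw [← Submodule.smul_mem_iff _ hμ, h.smul_laplacianCLM_curl]
  exact sub_mem
    (sum_mem fun k _ ↦ lineDerivOp_lineDerivOp_mem_map_laplacianCLM (hR j k) i k)
    (sum_mem fun k _ ↦ lineDerivOp_lineDerivOp_mem_map_laplacianCLM (hR i k) j k)

lemma lineDerivOp_sub_toDistribution_testFunction_mul {f g c : 𝔼 → ℝ} (hf : LocallyIntegrable f)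
    (hg : LocallyIntegrable g) (hc : LocallyIntegrable c) {v w : 𝔼}
    (h : ∂_{v} (toDistribution f) - ∂_{w} (toDistribution g) = toDistribution c) (s : 𝒯) :
    ∂_{v} (toDistribution fun x ↦ s x * f x) - ∂_{w} (toDistribution fun x ↦ s x * g x) =
      toDistribution fun x ↦ s x * c x + (∂_{v} s) x * f x - (∂_{w} s) x * g x := by
  rw [toDistribution_add_sub (locallyIntegrable_testFunction_mul hc s)
    (locallyIntegrable_testFunction_mul hf _) (locallyIntegrable_testFunction_mul hg _)]
  ext χ
  simp only [sub_apply, add_apply, lineDerivOp_toDistribution_testFunction_mul hf,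
    lineDerivOp_toDistribution_testFunction_mul hg, toDistribution_testFunction_mul hc, ← h]
  ring

lemma lineDerivOp_testFunction_mul_mem_l2Distributions_of_div_curl [Nonempty ι] {v : ι → 𝔼 → ℝ}
    {D : 𝔼 → ℝ} (hv : ∀ i, MemLp (v i) ⊤) (hD : LocallyL2 D)
    (hdiv : ∑ i, ∂_{𝐞 i} (toDistribution (v i)) = toDistribution D)
    (hcurl : ∀ i j, ∂_{𝐞 i} (toDistribution (v j)) - ∂_{𝐞 j} (toDistribution (v i)) ∈
      l2Distributions) (s : 𝒯) (i k : ι) :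
    ∂_{𝐞 k} (toDistribution fun x ↦ s x * v i x) ∈ l2Distributions := by
  have hv_loc (i : ι) : LocallyIntegrable (v i) := (hv i).locallyIntegrable le_top
  refine lineDerivOp_mem_l2Distributions_of_div_curl
    (fun i ↦ (hv i).mul' (memLp_testFunction s ⊤)) ?_ (fun i j ↦ ?_) k i
  · rw [sum_lineDerivOp_toDistribution_testFunction_mul hv_loc hD.locallyIntegrable hdiv]
    exact toDistribution_mem_l2Distributions
      ((hD s).add (memLp_finsetSum _ fun i _ ↦ locallyL2_of_memLp_top (hv i) (∂_{𝐞 i} s)))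
  · obtain ⟨c, hc, hcurl_eq⟩ := hcurl i j
    rw [lineDerivOp_sub_toDistribution_testFunction_mul (hv_loc j) (hv_loc i)
      (hc.locallyIntegrable one_le_two) hcurl_eq]
    exact toDistribution_mem_l2Distributions (((locallyL2_of_memLp_two hc s).add
      (locallyL2_of_memLp_top (hv j) (∂_{𝐞 i} s))).sub (locallyL2_of_memLp_top (hv i) (∂_{𝐞 j} s)))

lemma sum_lineDerivOp_toDistribution_pow_mul {ρ D : 𝔼 → ℝ} {v : ι → 𝔼 → ℝ} (hρ : MemLp ρ ⊤)
    (hv : ∀ i, MemLp (v i) ⊤) (hD : LocallyL2 D)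
    (hgrad : ∀ (s : 𝒯) i k, ∂_{𝐞 k} (toDistribution fun x ↦ s x * v i x) ∈ l2Distributions)
    (hvD : ∑ i, ∂_{𝐞 i} (toDistribution (v i)) = toDistribution D)
    (hmass : ∑ i, ∂_{𝐞 i} (toDistribution fun x ↦ ρ x * v i x) = 0) (n : ℕ) :
    ∑ i, ∂_{𝐞 i} (toDistribution fun x ↦ ρ x ^ (n + 1) * v i x) =
      toDistribution fun x ↦ -n * ρ x ^ (n + 1) * D x := by
  induction n with
  | zero =>
    simp only [zero_add, pow_one, hmass, Nat.cast_zero, neg_zero, zero_mul]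
    exact toDistribution_zero.symm
  | succ n ih =>
    have hA : LocallyL2 fun x ↦ -n * ρ x ^ (n + 1) * D x :=
      hD.bddMul ((memLp_top_pow hρ (n + 1)).const_mul _)
    have hstep := sum_lineDerivOp_toDistribution_mul_mul (memLp_top_pow hρ (n + 1)) hρ hv hA
      (locallyL2_of_memLp_two .zero) hD hgrad hvD ih (hmass.trans toDistribution_zero.symm)
    simp only [← pow_succ] at hstep
    rw [hstep]
    congr 1 with x
    simp only [Pi.zero_apply]
    push_cast
    ring

lemma integral_pow_mul_div_eq_zero {ρ D : 𝔼 → ℝ} {v : ι → 𝔼 → ℝ} (hρ_int : Integrable ρ)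
    (hρ : MemLp ρ ⊤) (hv : ∀ i, MemLp (v i) ⊤) (hD : LocallyL2 D)
    (hρD : Integrable fun x ↦ ρ x * D x)
    (hgrad : ∀ (s : 𝒯) i k, ∂_{𝐞 k} (toDistribution fun x ↦ s x * v i x) ∈ l2Distributions)
    (hvD : ∑ i, ∂_{𝐞 i} (toDistribution (v i)) = toDistribution D)
    (hmass : ∑ i, ∂_{𝐞 i} (toDistribution fun x ↦ ρ x * v i x) = 0) (n : ℕ) :
    ∫ x, ρ x ^ (n + 2) * D x = 0 := by
  have hw (i : ι) : Integrable fun x ↦ ρ x ^ (n + 2) * v i x := by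
    simpa only [pow_succ, mul_comm, mul_left_comm, mul_assoc] using
      integrable_bddMul (hv i) (integrable_bddMul (memLp_top_pow hρ (n + 1)) hρ_int)
  have hg : Integrable fun x ↦ ρ x ^ (n + 2) * D x := by
    simpa only [pow_succ, mul_assoc] using integrable_bddMul (memLp_top_pow hρ (n + 1)) hρD
  have hdiv := sum_lineDerivOp_toDistribution_pow_mul hρ hv hD hgrad hvD hmass (n + 1)
  simp only [mul_assoc] at hdiv
  have hzero := integral_eq_zero_of_sum_lineDerivOp hw (hg.const_mul _) hdiv
  rw [integral_const_mul] at hzero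
  exact (mul_eq_zero.1 hzero).resolve_left (neg_ne_zero.2 (Nat.cast_ne_zero.2 n.succ_ne_zero))

lemma sum_inner_add_inner_eq_zero_of_div_of_curl [Nonempty ι] {A g : ι → 𝓛} {Q : 𝓛} {i : ι}
    (hdiv : ∑ j, ∂_{𝐞 j} (lpToDistribution (A j)) + ∂_{𝐞 i} (lpToDistribution Q) = 0)
    (hcurl : ∀ j k, ∂_{𝐞 j} (lpToDistribution (g k)) = ∂_{𝐞 k} (lpToDistribution (g j))) :
    ∑ j, ⟪A j, g j⟫_ℝ + ⟪Q, g i⟫_ℝ = 0 := by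
  classical
  have hinner : ∑ j, ⟪(Pi.single i Q : ι → 𝓛) j, g j⟫_ℝ = ⟪Q, g i⟫_ℝ := by
    rw [Fintype.sum_eq_single i fun j hj ↦ by rw [Pi.single_eq_of_ne hj, inner_zero_left],
      Pi.single_eq_same]
  have hderiv : ∑ j, ∂_{𝐞 j} (lpToDistribution ((Pi.single i Q : ι → 𝓛) j)) =
      ∂_{𝐞 i} (lpToDistribution Q) := by
    rw [Fintype.sum_eq_single i fun j hj ↦ by
      rw [Pi.single_eq_of_ne hj, map_zero, lineDerivOp_zero], Pi.single_eq_same]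
  rw [← hinner, ← Finset.sum_add_distrib]
  simp only [← inner_add_left]
  refine sum_inner_eq_zero_of_div_of_curl (A := fun j ↦ A j + (Pi.single i Q : ι → 𝓛) j) ?_ hcurl
  simpa only [map_add, lineDerivOp_add, Finset.sum_add_distrib, hderiv] using hdiv

lemma lineDerivOp_lpToDistribution_comm_of_lineDerivOp_eq {T : 𝒟} {g : ι → 𝓛}
    (h : ∀ j, ∂_{𝐞 j} T = lpToDistribution (g j)) (j k : ι) :
    ∂_{𝐞 j} (lpToDistribution (g k)) = ∂_{𝐞 k} (lpToDistribution (g j)) := by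
  rw [← h, ← h, lineDerivOp_distribution_comm]

lemma norm_sum_sq_le_sum_norm_sq_of_gradient [Nonempty ι] {U : ι → 𝒟} {G : ι → ι → 𝓛}
    (hG : ∀ i j, ∂_{𝐞 j} (U i) = lpToDistribution (G i j)) :
    ‖∑ i, G i i‖ ^ 2 ≤ ∑ i, ∑ j, ‖G i j‖ ^ 2 := by
  have hcurl (i : ι) := lineDerivOp_lpToDistribution_comm_of_lineDerivOp_eq (hG i)
  have hrow (i : ι) : ∑ j, ⟪G j i, G i j⟫_ℝ + ⟪-∑ j, G j j, G i i⟫_ℝ = 0 := by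
    refine sum_inner_add_inner_eq_zero_of_div_of_curl ?_ (hcurl i)
    simp only [map_neg, map_sum, lineDerivOp_neg, lineDerivOp_sum, hcurl _ _ i, add_neg_cancel]
  have htrace : ∑ i, ∑ j, ⟪G j i, G i j⟫_ℝ = ‖∑ i, G i i‖ ^ 2 := by
    have hsum := Finset.sum_eq_zero fun i (_ : i ∈ Finset.univ) ↦ hrow i
    simp only [Finset.sum_add_distrib, ← inner_sum, inner_neg_left, Finset.sum_neg_distrib,
      real_inner_self_eq_norm_sq] at hsum
    linarith
  have hyoung (i j : ι) : ⟪G j i, G i j⟫_ℝ ≤ (‖G j i‖ ^ 2 + ‖G i j‖ ^ 2) / 2 := by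
    nlinarith [real_inner_le_norm (G j i) (G i j), sq_nonneg (‖G j i‖ - ‖G i j‖)]
  calc ‖∑ i, G i i‖ ^ 2 = ∑ i, ∑ j, ⟪G j i, G i j⟫_ℝ := htrace.symm
    _ ≤ ∑ i, ∑ j, (‖G j i‖ ^ 2 + ‖G i j‖ ^ 2) / 2 := by gcongr; exact hyoung _ _
    _ = ∑ i, ∑ j, ‖G i j‖ ^ 2 := by
        simp only [← Finset.sum_div, Finset.sum_add_distrib]
        rw [Finset.sum_comm]
        ring

lemma LameSystem.energy_identity [Nonempty ι] {μ lam : ℝ} {U : ι → 𝒟} {R G : ι → ι → 𝓛} {Q : 𝓛}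
    (h : LameSystem μ lam U (fun i j ↦ lpToDistribution (R i j)) (lpToDistribution Q))
    (hG : ∀ i j, ∂_{𝐞 j} (U i) = lpToDistribution (G i j)) :
    μ * ∑ i, ∑ j, ‖G i j‖ ^ 2 + lam * ‖∑ i, G i i‖ ^ 2 =
      ∑ i, ∑ j, ⟪R i j, G i j⟫_ℝ + ⟪Q, ∑ i, G i i⟫_ℝ := by
  have hrow (i : ι) : ∑ j, ⟪R i j - μ • G i j, G i j⟫_ℝ + ⟪Q - lam • ∑ j, G j j, G i i⟫_ℝ = 0 := by
    refine sum_inner_add_inner_eq_zero_of_div_of_curl ?_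
      (lineDerivOp_lpToDistribution_comm_of_lineDerivOp_eq (hG i))
    have hi := h i
    simp only [laplacianCLM_eq_sum 𝐞, hG] at hi
    simp only [map_sub, map_smul, map_sum, lineDerivOp_distribution_sub, lineDerivOp_smul,
      Finset.sum_sub_distrib, ← Finset.smul_sum]
    rw [sub_add_sub_comm, hi, sub_self]
  have hsum := Finset.sum_eq_zero fun i (_ : i ∈ Finset.univ) ↦ hrow i
  simp only [Finset.sum_add_distrib, ← inner_sum, inner_sub_left, real_inner_smul_left,
    Finset.sum_sub_distrib, ← Finset.mul_sum, real_inner_self_eq_norm_sq] at hsum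
  linarith

lemma LameSystem.gradient_eq_zero [Nonempty ι] {μ lam : ℝ} {U : ι → 𝒟} {R G : ι → ι → 𝓛} {Q : 𝓛}
    (h : LameSystem μ lam U (fun i j ↦ lpToDistribution (R i j)) (lpToDistribution Q))
    (hμ : 0 < μ) (hμlam : 0 < μ + lam)
    (hG : ∀ i j, ∂_{𝐞 j} (U i) = lpToDistribution (G i j))
    (hR : ∑ i, ∑ j, ⟪R i j, G i j⟫_ℝ = 0) (hQ : ⟪Q, ∑ i, G i i⟫_ℝ = 0) (i j : ι) : G i j = 0 := by
  have henergy := h.energy_identity hG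
  have hdiv := norm_sum_sq_le_sum_norm_sq_of_gradient hG
  rw [hR, hQ, add_zero] at henergy
  have hsum : ∑ i, ∑ j, ‖G i j‖ ^ 2 ≤ 0 := by
    rcases le_total 0 lam with hlam | hlam
    · nlinarith [mul_nonneg hlam (sq_nonneg ‖∑ i, G i i‖)]
    · nlinarith [mul_le_mul_of_nonpos_left hdiv hlam]
  rw [← Finset.sum_product'] at hsum
  have hterm := Finset.single_le_sum (fun k _ ↦ sq_nonneg ‖G k.1 k.2‖)
    (Finset.mem_univ ((i, j) : ι × ι))
  exact norm_eq_zero.1 (pow_eq_zero_iff two_ne_zero |>.1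
    ((hterm.trans (by simpa using hsum)).antisymm (sq_nonneg _)))

/-! ### Steady flows -/

lemma lineDerivOp_smul_toDistribution_mul_self {f g : 𝔼 → ℝ} {v : 𝔼} (hf : MemLp f ⊤)
    (hg : MemLp g 2) (hfg : ∂_{v} (toDistribution f) = toDistribution g) :
    ∂_{v} ((2⁻¹ : ℝ) • toDistribution fun x ↦ f x * f x) = toDistribution fun x ↦ f x * g x := by
  have hg_loc := locallyL2_of_memLp_two hg
  have hfg_loc := (hg_loc.bddMul hf).locallyIntegrable
  have hsum : LocallyIntegrable fun x ↦ f x * g x + f x * g x := hfg_loc.add hfg_loc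
  rw [lineDerivOp_smul, lineDerivOp_toDistribution_mul hf hf hg_loc hg_loc hfg hfg,
    ← toDistribution_smul _ hsum]
  congr 1 with x
  simp only [Pi.smul_apply, smul_eq_mul]
  ring

/- The field `∑ i, u i * g i` is the gradient of `|u| ^ 2 / 2`. -/
lemma sum_integral_mul_mul_gradient_eq_zero [Nonempty ι] {κ : Type*} [Fintype κ] {m : ι → 𝔼 → ℝ}
    {u : κ → 𝔼 → ℝ} {g : κ → ι → 𝔼 → ℝ} (hm : ∀ j, MemLp (m j) 2) (hu : ∀ i, MemLp (u i) ⊤)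
    (hg : ∀ i j, MemLp (g i j) 2) (hdiv : ∑ j, ∂_{𝐞 j} (toDistribution (m j)) = 0)
    (hgrad : ∀ i j, ∂_{𝐞 j} (toDistribution (u i)) = toDistribution (g i j)) :
    ∑ i, ∑ j, ∫ x, m j x * (u i x * g i j x) = 0 := by
  have hug (i : κ) (j : ι) : MemLp (fun x ↦ u i x * g i j x) 2 := (hg i j).mul' (hu i)
  have hsum (j : ι) : MemLp (fun x ↦ ∑ i, u i x * g i j x) 2 :=
    memLp_finsetSum _ fun i _ ↦ hug i j
  have hkinetic (j : ι) : ∂_{𝐞 j} (∑ i, (2⁻¹ : ℝ) • toDistribution fun x ↦ u i x * u i x) =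
      lpToDistribution ((hsum j).toLp _) := by
    rw [lineDerivOp_sum, lpToDistribution_toLp,
      toDistribution_sum _ fun i ↦ (hug i j).locallyIntegrable one_le_two]
    exact Finset.sum_congr rfl fun i _ ↦
      lineDerivOp_smul_toDistribution_mul_self (hu i) (hg i j) (hgrad i j)
  have horth := sum_inner_eq_zero_of_div_of_curl (A := fun j ↦ (hm j).toLp _)
    (by simpa only [lpToDistribution_toLp] using hdiv)
    (lineDerivOp_lpToDistribution_comm_of_lineDerivOp_eq hkinetic)
  simp only [inner_toLp_toLp, Finset.mul_sum] at horth
  rw [Finset.sum_comm, ← horth]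
  exact Finset.sum_congr rfl fun j _ ↦
    (integral_finsetSum _ fun i _ ↦ (hm j).integrable_mul (hug i j)).symm

/-- A steady flow with integrable bounded density `ρ` and bounded velocity `u`: the equations
`div (ρ u) = 0` and `div (ρ u ⊗ u) + ∇q = μ Δu + λ ∇ div u` hold in the sense of distributions, with
a locally integrable pressure `q` not yet tied to `ρ`. -/
structure SteadyFlow (μ lam : ℝ) (ρ q : 𝔼 → ℝ) (u : ι → 𝔼 → ℝ) : Prop where
  integrable_density : Integrable ρ
  memLp_density : MemLp ρ ⊤
  memLp_velocity : ∀ i, MemLp (u i) ⊤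
  mass : ∑ i, ∂_{𝐞 i} (toDistribution fun x ↦ ρ x * u i x) = 0
  momentum : LameSystem μ lam (fun i ↦ toDistribution (u i))
    (fun i j ↦ toDistribution fun x ↦ ρ x * u j x * u i x) (toDistribution q)

namespace SteadyFlow

lemma memLp_momentum {μ lam : ℝ} {ρ q : 𝔼 → ℝ} {u : ι → 𝔼 → ℝ} (h : SteadyFlow μ lam ρ q u)
    (i : ι) : MemLp (fun x ↦ ρ x * u i x) 2 :=
  (h.memLp_velocity i).mul' (memLp_two_of_integrable_of_memLp_top h.integrable_density
    h.memLp_density)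

lemma memLp_convection {μ lam : ℝ} {ρ q : 𝔼 → ℝ} {u : ι → 𝔼 → ℝ} (h : SteadyFlow μ lam ρ q u)
    (i j : ι) : MemLp (fun x ↦ ρ x * u j x * u i x) 2 :=
  (h.memLp_velocity i).mul' (h.memLp_momentum j)

lemma curl_mem_l2Distributions [Nonempty ι] {μ lam : ℝ} {ρ q : 𝔼 → ℝ} {u : ι → 𝔼 → ℝ}
    (h : SteadyFlow μ lam ρ q u) (hμ : μ ≠ 0) (i j : ι) :
    ∂_{𝐞 i} (toDistribution (u j)) - ∂_{𝐞 j} (toDistribution (u i)) ∈ l2Distributions :=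
  h.momentum.curl_mem_l2Distributions hμ
    (fun i j ↦ lineDerivOp_toDistribution_mem_tameDistributions (h.memLp_velocity i) j)
    (fun i j ↦ toDistribution_mem_l2Distributions (h.memLp_convection i j)) i j

lemma exists_effectiveViscousFlux [Nonempty ι] {μ lam : ℝ} {ρ q : 𝔼 → ℝ} {u : ι → 𝔼 → ℝ}
    (h : SteadyFlow μ lam ρ q u) (hμlam : μ + lam ≠ 0) (hq : VanishesInMean q) :
    ∃ F : 𝔼 → ℝ, MemLp F 2 ∧ ∑ j, ∂_{𝐞 j} (toDistribution (u j)) =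
      toDistribution fun x ↦ (μ + lam)⁻¹ * (F x + q x) := by
  obtain ⟨F, hF, hflux⟩ := h.momentum.smul_div_sub_mem_l2Distributions
    (fun i j ↦ lineDerivOp_toDistribution_mem_tameDistributions (h.memLp_velocity i) j)
    (toDistribution_mem_tameDistributions hq)
    (fun i j ↦ toDistribution_mem_l2Distributions (h.memLp_convection i j))
  have hF_loc : LocallyIntegrable F := hF.locallyIntegrable one_le_two
  refine ⟨F, hF, ?_⟩
  calc ∑ j, ∂_{𝐞 j} (toDistribution (u j))
      = (μ + lam)⁻¹ • (toDistribution F + toDistribution q) := by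
        rw [← hflux, sub_add_cancel, inv_smul_smul₀ hμlam]
    _ = toDistribution ((μ + lam)⁻¹ • (F + q)) := by
        rw [← toDistribution_add hF_loc hq.1, toDistribution_smul _ (hF_loc.add hq.1)]

/- The powers of `ρ` satisfy `div (ρ ^ (n + 2) u) = -(n + 1) ρ ^ (n + 2) div u`. -/
lemma integral_pow_mul_flux_eq_zero [Nonempty ι] {μ lam : ℝ} {ρ q F : 𝔼 → ℝ} {u : ι → 𝔼 → ℝ}
    (h : SteadyFlow μ lam ρ q u) (hμ : μ ≠ 0) (hμlam : μ + lam ≠ 0) (hq : MemLp q ⊤)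
    (hF : MemLp F 2) (hdiv : ∑ j, ∂_{𝐞 j} (toDistribution (u j)) =
      toDistribution fun x ↦ (μ + lam)⁻¹ * (F x + q x)) (n : ℕ) :
    ∫ x, ρ x ^ (n + 2) * (F x + q x) = 0 := by
  have hρ := h.integrable_density
  have hD : LocallyL2 fun x ↦ (μ + lam)⁻¹ * (F x + q x) :=
    ((locallyL2_of_memLp_two hF).add (locallyL2_of_memLp_top hq)).bddMul (memLp_top_const _)
  have hρD : Integrable fun x ↦ ρ x * ((μ + lam)⁻¹ * (F x + q x)) := by
    have hρF : Integrable fun x ↦ ρ x * F x :=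
      (memLp_two_of_integrable_of_memLp_top hρ h.memLp_density).integrable_mul hF
    refine ((hρF.add (integrable_bddMul hq hρ)).const_mul (μ + lam)⁻¹).congr
      (.of_forall fun x ↦ ?_)
    simp only [Pi.add_apply]
    ring
  have hzero := integral_pow_mul_div_eq_zero hρ h.memLp_density h.memLp_velocity hD hρD
    (lineDerivOp_testFunction_mul_mem_l2Distributions_of_div_curl h.memLp_velocity hD hdiv
      (h.curl_mem_l2Distributions hμ)) hdiv h.mass n
  simp only [mul_left_comm _ (μ + lam)⁻¹, integral_const_mul] at hzero
  exact (mul_eq_zero.1 hzero).resolve_left (inv_ne_zero hμlam)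

lemma lineDerivOp_velocity_eq_zero [Nonempty ι] {μ lam : ℝ} {ρ q D : 𝔼 → ℝ} {u : ι → 𝔼 → ℝ}
    (h : SteadyFlow μ lam ρ q u) (hμ : 0 < μ) (hμlam : 0 < μ + lam) (hq : MemLp q 2)
    (hD : MemLp D 2) (hdiv : ∑ j, ∂_{𝐞 j} (toDistribution (u j)) = toDistribution D)
    (hqD : ∫ x, q x * D x = 0) (i j : ι) : ∂_{𝐞 j} (toDistribution (u i)) = 0 := by
  choose g hg hgrad using fun i j ↦ lineDerivOp_mem_l2Distributions_of_div_curl h.memLp_velocity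
    (hdiv ▸ toDistribution_mem_l2Distributions hD) (h.curl_mem_l2Distributions hμ.ne') j i
  have hG (i j : ι) : ∂_{𝐞 j} (toDistribution (u i)) = lpToDistribution ((hg i j).toLp _) := by
    rw [hgrad, lpToDistribution_toLp]
  have htrace : ∑ i, (hg i i).toLp _ = hD.toLp D := lpToDistribution_injective (by
    simp only [map_sum, ← hG, hdiv, lpToDistribution_toLp])
  have hmomentum : LameSystem μ lam (fun i ↦ toDistribution (u i))
      (fun i j ↦ lpToDistribution ((h.memLp_convection i j).toLp _))
      (lpToDistribution (hq.toLp q)) := by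
    simpa only [lpToDistribution_toLp] using h.momentum
  have hconvection : ∑ i, ∑ j, ⟪(h.memLp_convection i j).toLp _, (hg i j).toLp _⟫_ℝ = 0 := by
    simpa only [inner_toLp_toLp, mul_assoc] using
      sum_integral_mul_mul_gradient_eq_zero h.memLp_momentum h.memLp_velocity hg h.mass hgrad
  have hG_zero := hmomentum.gradient_eq_zero hμ hμlam hG hconvection
    (by rw [htrace, inner_toLp_toLp, hqD]) i j
  rw [hG, hG_zero, map_zero]

end SteadyFlow

lemma exists_abs_le_add_mul_of_continuousOn {P : ℝ → ℝ} {M ε : ℝ} (hP : ContinuousOn P (Icc 0 M))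
    (hP_zero : P 0 = 0) (hε : 0 < ε) : ∃ C, ∀ s ∈ Icc 0 M, |P s| ≤ ε + C * s := by
  rcases lt_or_ge M 0 with hM | hM
  · exact ⟨0, fun s hs ↦ absurd (hs.1.trans hs.2) hM.not_ge⟩
  obtain ⟨B, hB⟩ := isCompact_Icc.exists_bound_of_continuousOn hP
  obtain ⟨δ, hδ, hnear⟩ := Metric.continuousWithinAt_iff.1 (hP 0 ⟨le_rfl, hM⟩) ε hε
  have hB_nonneg : 0 ≤ B := (norm_nonneg _).trans (hB 0 ⟨le_rfl, hM⟩)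
  refine ⟨B / δ, fun s hs ↦ ?_⟩
  have hs_nonneg := hs.1
  rcases lt_or_ge s δ with hsδ | hsδ
  · have hPs : |P s| < ε := by
      simpa [hP_zero] using hnear hs (by rwa [Real.dist_0_eq_abs, abs_of_nonneg hs.1])
    have : 0 ≤ B / δ * s := by positivity
    linarith
  · have hBs : B ≤ B / δ * s := by
      rw [div_mul_eq_mul_div, le_div_iff₀ hδ]
      gcongr
    linarith [(Real.norm_eq_abs (P s)).symm.trans_le (hB s hs)]

lemma vanishesInMean_comp_of_continuousOn_Icc {P : ℝ → ℝ} {M : ℝ} {r : 𝔼 → ℝ} (hM : 0 ≤ M)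
    (hr_int : Integrable r) (hr : ∀ᵐ x, r x ∈ Icc 0 M) (hP : ContinuousOn P (Icc 0 M))
    (hP_zero : P 0 = 0) : VanishesInMean fun x ↦ P (r x) := by
  refine ⟨(memLp_top_comp_of_continuousOn_Icc hM hr_int.aestronglyMeasurable hr
    hP).locallyIntegrable le_top, fun ε hε ↦ ?_⟩
  obtain ⟨C, hC⟩ := exists_abs_le_add_mul_of_continuousOn hP hP_zero hε
  exact ⟨fun x ↦ C * r x, hr_int.const_mul C, hr.mono fun x hx ↦ hC (r x) hx⟩

namespace SteadyFlow

lemma density_mem_Icc {μ lam : ℝ} {ρ q : 𝔼 → ℝ} {u : ι → 𝔼 → ℝ} (h : SteadyFlow μ lam ρ q u)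
    (hρ : ∀ᵐ x, 0 ≤ ρ x) : ∀ᵐ x, ρ x ∈ Icc 0 (lpNorm ρ ⊤ volume) := by
  filter_upwards [hρ, ae_le_lpNorm_exponent_top h.memLp_density] with x hx hx_le
  exact ⟨hx, (le_abs_self _).trans hx_le⟩

lemma sub_const_pressure {μ lam : ℝ} {ρ q : 𝔼 → ℝ} {u : ι → 𝔼 → ℝ} (h : SteadyFlow μ lam ρ q u)
    (hq : LocallyIntegrable q) (c : ℝ) : SteadyFlow μ lam ρ (fun x ↦ q x - c) u where
  __ := h
  momentum i := by
    have hq_sub : toDistribution (fun x ↦ q x - c) =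
        toDistribution q - toDistribution fun _ : 𝔼 ↦ c :=
      toDistribution_sub hq (locallyIntegrable_const c)
    rw [hq_sub, lineDerivOp_distribution_sub, lineDerivOp_toDistribution_const, sub_zero]
    exact h.momentum i

lemma lineDerivOp_velocity_eq_zero_of_barotropic [Nonempty ι] {μ lam : ℝ} {P : ℝ → ℝ} {ρ : 𝔼 → ℝ}
    {u : ι → 𝔼 → ℝ} (hμ : 0 < μ) (hμlam : 0 < μ + lam) (hP : ContinuousOn P (Ici 0))
    (hP_zero : P 0 = 0) (hρ : ∀ᵐ x, 0 ≤ ρ x) (h : SteadyFlow μ lam ρ (fun x ↦ P (ρ x)) u)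
    (i j : ι) : ∂_{𝐞 j} (toDistribution (u i)) = 0 := by
  have hM : 0 ≤ lpNorm ρ ⊤ volume := lpNorm_nonneg
  have hρ_mem := h.density_mem_Icc hρ
  have hP_Icc : ContinuousOn P (Icc 0 (lpNorm ρ ⊤ volume)) := hP.mono Icc_subset_Ici_self
  obtain ⟨F, hF, hdiv⟩ := h.exists_effectiveViscousFlux hμlam.ne'
    (vanishesInMean_comp_of_continuousOn_Icc hM h.integrable_density hρ_mem hP_Icc hP_zero)
  have hflux := h.integral_pow_mul_flux_eq_zero hμ.ne' hμlam.ne' (memLp_top_comp_of_continuousOn_Icc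
    hM h.memLp_density.aestronglyMeasurable hρ_mem hP_Icc) hF hdiv
  obtain ⟨hq, hqF⟩ := memLp_two_comp_of_forall_integral_pow_mul_eq_zero hM h.integrable_density
    hρ_mem hP_Icc hP_zero hF hflux
  refine h.lineDerivOp_velocity_eq_zero hμ hμlam hq ((hF.add hq).const_mul _) hdiv ?_ i j
  simp only [Pi.add_apply, mul_left_comm _ (μ + lam)⁻¹, integral_const_mul, hqF, mul_zero]

lemma density_eq_zero_of_velocity_const {μ lam : ℝ} {ρ q : 𝔼 → ℝ} {u : ι → 𝔼 → ℝ} {c : ι → ℝ}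
    (h : SteadyFlow μ lam ρ q u) (hu : ∀ i, ∀ᵐ x, u i x = c i) (hc : c ≠ 0) : ρ =ᵐ[volume] 0 := by
  have hρ_loc := h.integrable_density.locallyIntegrable
  refine ae_eq_zero_of_lineDerivOp_eq_zero h.integrable_density
    (c := WithLp.toLp 2 c) (by simpa using hc) ?_
  rw [← sum_lineDerivOp_toDistribution_mul_const hρ_loc, ← h.mass]
  refine Finset.sum_congr rfl fun i _ ↦ ?_
  rw [toDistribution_congr ((h.memLp_momentum i).locallyIntegrable one_le_two)
    ((hu i).mono fun x hx ↦ congrArg (ρ x * ·) hx)]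

end SteadyFlow

theorem liouville_very_weak_no_force_general {μ lam : ℝ} (hμ : 0 < μ) (hμlam : 0 < μ + lam)
    {p : ℝ → ℝ} (hp : ContinuousOn p (Ici 0)) {ρ : 𝔼 → ℝ} {u : ι → 𝔼 → ℝ} (hρ : ∀ᵐ x, 0 ≤ ρ x)
    (h : SteadyFlow μ lam ρ (fun x ↦ p (ρ x)) u) :
    ∃ c : ι → ℝ, (∀ᵐ x, ∀ i, u i x = c i) ∧ (c = 0 ∨ ∀ᵐ x, ρ x = 0) := by
  rcases isEmpty_or_nonempty ι with hι | hι
  · exact ⟨0, .of_forall fun x i ↦ hι.elim i, .inl rfl⟩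
  have hpρ : LocallyIntegrable fun x ↦ p (ρ x) :=
    (memLp_top_comp_of_continuousOn_Icc lpNorm_nonneg h.memLp_density.aestronglyMeasurable
      (h.density_mem_Icc hρ) (hp.mono Icc_subset_Ici_self)).locallyIntegrable le_top
  have hgrad := SteadyFlow.lineDerivOp_velocity_eq_zero_of_barotropic hμ hμlam
    (P := fun s ↦ p s - p 0) (hp.sub continuousOn_const) (sub_self _) hρ
    (h.sub_const_pressure hpρ (p 0))
  choose c hc using fun i ↦ exists_ae_eq_const_of_lineDerivOp_eq_zero
    ((h.memLp_velocity i).locallyIntegrable le_top) (hgrad i)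
  refine ⟨c, ae_all_iff.2 hc, ?_⟩
  rw [or_iff_not_imp_left]
  exact h.density_eq_zero_of_velocity_const hc

end Distributions

/-! ### Very weak solutions in dimension three -/

section DimensionThree

local notation "𝐞" => EuclideanSpace.basisFun (Fin 3) ℝ
local notation "𝒯" => TestFunction (⊤ : Opens E3) ℝ ⊤

lemma locallyIntegrable_eval {α κ : Type*} [TopologicalSpace α] [MeasurableSpace α] {ν : Measure α}
    [Fintype κ] {f : α → κ → ℝ} (hf : LocallyIntegrable f ν) (k : κ) :
    LocallyIntegrable (fun x ↦ f x k) ν :=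
  fun x ↦ (hf x).imp fun _ hs ↦ ⟨hs.1, hs.2.eval k⟩

lemma pd_testFunction (χ : 𝒯) (i : Fin 3) : pd χ i = ∂_{𝐞 i} χ := by
  ext x
  rw [lineDerivOp_testFunction_apply, EuclideanSpace.basisFun_apply, pd]

lemma pd_single_testFunction (χ : 𝒯) (i a j : Fin 3) :
    pd (fun x ↦ (Pi.single i (χ x) : Fin 3 → ℝ) a) j =
      fun x ↦ (Pi.single i ((∂_{𝐞 j} χ) x) : Fin 3 → ℝ) a := by
  rcases eq_or_ne a i with rfl | hai
  · simpa only [Pi.single_eq_same] using pd_testFunction χ j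
  · ext x
    simp [pd, Pi.single_eq_of_ne hai]

lemma tgrad_single_testFunction (χ : 𝒯) (i a j : Fin 3) (x : E3) :
    tgrad (fun y ↦ Pi.single i (χ y)) x a j = if a = i then (∂_{𝐞 j} χ) x else 0 := by
  rw [tgrad, pd_single_testFunction]
  exact Pi.single_apply ..

lemma lap_single_testFunction (χ : 𝒯) (i a : Fin 3) (x : E3) :
    lap (fun y ↦ Pi.single i (χ y)) a x =
      if a = i then laplacianCLM ℝ E3 𝒯 χ x else 0 := by
  simp only [lap, pd_single_testFunction, laplacianCLM_eq_sum 𝐞]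
  rcases eq_or_ne a i with rfl | hai
  · simp
  · simp [hai]

lemma gradDivg_single_testFunction (χ : 𝒯) (i a : Fin 3) :
    gradDivg (fun y ↦ Pi.single i (χ y)) a = ∂_{𝐞 a} (∂_{𝐞 i} χ) := by
  have hdiv : (fun y ↦ ∑ j, pd (fun z ↦ (Pi.single i (χ z) : Fin 3 → ℝ) j) j y) = ∂_{𝐞 i} χ := by
    ext y
    simp only [pd_single_testFunction]
    simp [Pi.single_apply]
  rw [gradDivg, hdiv, pd_testFunction]

namespace VeryWeakSolution

variable {μ η : ℝ} {p : ℝ → ℝ} {G : E3 → ℝ} {dG : E3 → Fin 3 → ℝ} {ρ : E3 → ℝ}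
  {u : E3 → Fin 3 → ℝ}

lemma sum_lineDerivOp_momentum_eq_zero (h : VeryWeakSolution μ η p G dG ρ u) :
    ∑ i, ∂_{𝐞 i} (toDistribution fun x ↦ ρ x * u x i) = 0 := by
  have hρu (i : Fin 3) : LocallyIntegrable fun x ↦ ρ x * u x i :=
    locallyIntegrable_eval h.ρu_locInt i
  ext χ
  have hmass := h.mass χ χ.contDiff χ.hasCompactSupport
  simp only [pd_testFunction, Finset.mul_sum, ← mul_assoc] at hmass
  rw [integral_finsetSum _ fun i _ ↦ integrable_mul_testFunction (hρu i) _] at hmass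
  simp only [sum_apply, Distribution.lineDerivOp_apply_apply, map_neg, Finset.sum_neg_distrib,
    zero_apply, neg_eq_zero]
  simpa only [toDistribution_apply (hρu _)] using hmass

lemma integral_momentum_single (h : VeryWeakSolution μ η p G (fun _ _ ↦ 0) ρ u) (i : Fin 3)
    (χ : 𝒯) :
    ∫ x, (∑ j, ρ x * u x j * u x i * (∂_{𝐞 j} χ) x) + p (ρ x) * (∂_{𝐞 i} χ) x =
      -∫ x, μ * (u x i * laplacianCLM ℝ E3 𝒯 χ x) +
        (μ / 3 + η) * ∑ j, u x j * (∂_{𝐞 j} (∂_{𝐞 i} χ)) x := by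
  have hφ : ContDiff ℝ 2 fun x ↦ (Pi.single i (χ x) : Fin 3 → ℝ) :=
    (ContinuousLinearMap.single ℝ (fun _ ↦ ℝ) i).contDiff.comp (χ.contDiff.of_le (by norm_cast))
  have hφ_supp : HasCompactSupport fun x ↦ (Pi.single i (χ x) : Fin 3 → ℝ) :=
    χ.hasCompactSupport.comp_left (Pi.single_zero i)
  have hconvection (x : E3) :
      ∑ a, ∑ j, ρ x * u x a * u x j * tgrad (fun y ↦ Pi.single i (χ y)) x a j =
      ∑ j, ρ x * u x j * u x i * (∂_{𝐞 j} χ) x := by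
    simp only [tgrad_single_testFunction, mul_ite, mul_zero, Finset.sum_ite_irrel,
      Finset.sum_const_zero, Finset.sum_ite_eq', Finset.mem_univ, if_true, mul_right_comm (ρ x)]
  have hviscous (x : E3) : ∑ a, (μ * lap (fun y ↦ Pi.single i (χ y)) a x +
        (μ / 3 + η) * gradDivg (fun y ↦ Pi.single i (χ y)) a x) * u x a =
      μ * (u x i * laplacianCLM ℝ E3 𝒯 χ x) +
        (μ / 3 + η) * ∑ j, u x j * (∂_{𝐞 j} (∂_{𝐞 i} χ)) x := by
    simp only [lap_single_testFunction, gradDivg_single_testFunction, add_mul _ _ (u x _),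
      mul_comm _ (u x _), mul_left_comm (u x _) μ, mul_left_comm (u x _) (μ / 3 + η),
      Finset.sum_add_distrib, ← Finset.mul_sum, mul_ite, mul_zero, Finset.sum_ite_eq',
      Finset.mem_univ, if_true]
  have hdiv (x : E3) : ∑ a, tgrad (fun y ↦ Pi.single i (χ y)) x a a = (∂_{𝐞 i} χ) x := by
    simp only [tgrad_single_testFunction, Finset.sum_ite_eq', Finset.mem_univ, if_true]
  simpa only [hconvection, hviscous, hdiv, mul_zero, zero_mul, Finset.sum_const_zero, integral_zero,
    sub_zero] using h.momentum _ hφ hφ_supp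

lemma lameSystem (h : VeryWeakSolution μ η p G (fun _ _ ↦ 0) ρ u)
    (hρuu : ∀ i j, LocallyIntegrable fun x ↦ ρ x * u x j * u x i) :
    LameSystem μ (μ / 3 + η) (fun i ↦ toDistribution fun x ↦ u x i)
      (fun i j ↦ toDistribution fun x ↦ ρ x * u x j * u x i) (toDistribution fun x ↦ p (ρ x)) := by
  intro i
  ext χ
  have hu (i : Fin 3) : LocallyIntegrable fun x ↦ u x i := locallyIntegrable_eval h.u_locInt i
  have hdiv (j : Fin 3) := integrable_mul_testFunction (hu j) (∂_{𝐞 j} (∂_{𝐞 i} χ))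
  have hconvection (j : Fin 3) := integrable_mul_testFunction (hρuu i j) (∂_{𝐞 j} χ)
  have hmomentum := h.integral_momentum_single i χ
  rw [integral_add (integrable_finsetSum _ fun j _ ↦ hconvection j)
      (integrable_mul_testFunction h.pρ_locInt _),
    integral_add ((integrable_mul_testFunction (hu i) _).const_mul μ)
      ((integrable_finsetSum _ fun j _ ↦ hdiv j).const_mul _),
    integral_finsetSum _ fun j _ ↦ hconvection j, integral_const_mul, integral_const_mul,
    integral_finsetSum _ fun j _ ↦ hdiv j] at hmomentum
  simp only [sum_apply, add_apply, smul_apply, lineDerivOp_sum, laplacianCLM_distribution_apply,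
    Distribution.lineDerivOp_apply_apply, map_neg, neg_neg, Finset.sum_neg_distrib]
  simp only [toDistribution_apply (hu _), toDistribution_apply (hρuu i _),
    toDistribution_apply h.pρ_locInt, smul_eq_mul]
  linarith

lemma steadyFlow (h : VeryWeakSolution μ η p G (fun _ _ ↦ 0) ρ u) (hρ : Integrable ρ)
    (hρ_top : MemLp ρ ⊤) (hu : MemLp u ⊤) :
    SteadyFlow μ (μ / 3 + η) ρ (fun x ↦ p (ρ x)) fun i x ↦ u x i := by
  have hu_comp (i : Fin 3) : MemLp (fun x ↦ u x i) ⊤ := memLp_pi_iff.1 hu i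
  exact {
    integrable_density := hρ
    memLp_density := hρ_top
    memLp_velocity := hu_comp
    mass := h.sum_lineDerivOp_momentum_eq_zero
    momentum := h.lameSystem fun i j ↦
      ((hu_comp i).mul' (r := ⊤) ((hu_comp j).mul' (r := ⊤) hρ_top)).locallyIntegrable le_top }

end VeryWeakSolution

end DimensionThree

/-- **Theorem 3, part 1.** Let `(ρ, u)` be a very weak solution on `ℝ³` with potential `G = 0`,
where `p` is continuous with `p(0) = 0`, `p ≥ 0`, and `C¹` on `(0,∞)`. If
`ρ ∈ L¹ ∩ L^∞(ℝ³)` and `u ∈ L^∞(ℝ³)`, then `u` equals a constant vector `u_∞` a.e.;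
moreover, either `u_∞ = 0` or `ρ = 0` a.e. -/
theorem liouville_very_weak_no_force
    (μ η : ℝ) (hμ : 0 < μ) (hη : 0 ≤ η)
    (p p' : ℝ → ℝ)
    (hp_cont : ContinuousOn p (Ici 0)) (hp0 : p 0 = 0)
    (hp_nonneg : ∀ s, 0 ≤ s → 0 ≤ p s)
    (hp_deriv : ∀ s, 0 < s → HasDerivAt p (p' s) s)
    (hp'_cont : ContinuousOn p' (Ioi 0))
    (ρ : E3 → ℝ) (u : E3 → Fin 3 → ℝ)
    (hsol : VeryWeakSolution μ η p (fun _ => 0) (fun _ => fun _ => 0) ρ u)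
    (hρ1 : MemLp ρ 1 volume) (hρ_top : MemLp ρ ⊤ volume)
    (hu_top : MemLp u ⊤ volume) :
    ∃ c : Fin 3 → ℝ, (∀ᵐ x, u x = c) ∧ (c = 0 ∨ ∀ᵐ x, ρ x = 0) := by
  simpa only [funext_iff] using liouville_very_weak_no_force_general hμ
    (show 0 < μ + (μ / 3 + η) by positivity) hp_cont hsol.ρ_nonneg
    (hsol.steadyFlow (memLp_one_iff_integrable.1 hρ1) hρ_top hu_top)
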